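/- arXiv:math/0702036 — 2 statements merged into one kernel-verified Lean document; each statement's English description precedes it below -/
import Mathlib

section
/- There exists s > 0, independent of n, such that if S ≥ s then P(Eⁿ_slope) → 1 as n → ∞, where Eⁿ_slope is the event that for all n⃗_a, n⃗_b ∈ Iⁿ with n⃗_b − n⃗_a = k·e⃗ for some integer k ≥ n^{0.1}, one has L(n⃗_b) − L(n⃗_a) ≥ 0.01·|n⃗_b − n⃗_a|. -/
/-!
The words are encoded by their gap lists, the lengths of the (possibly empty) runs of zeros cut out
by the ones. One step of the chain replaces an entry `5` of the gap list of `x` by `4` and an entry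
`1` by `2`. An optimal alignment of `x` and `y` is encoded by a segmentation, which cuts both gap
lists into the same number of nonempty segments: consecutive segments are separated by aligned
ones, and a segment contributes the minimum of the numbers of zeros of its two sides
(`exists_optimal_seg`). Hence a step gains one if the increased entry `1` forms a one-element
segment facing at least two zeros, and it loses at most one, and only if the decreased entry `5`
faces at least five zeros or does not form a one-element segment.

If `S` is large and both words have about `n / 2` ones, an optimal alignment must align nearly all
ones, so nearly all segments consist of one gap of `x` and one gap of `y` (`segExc_le`). The gaps of
the random `y` are geometric, so for a fixed alignment a fraction about `1 / 4` of the entries `1`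
faces at least two zeros, and a fraction about `1 / 32` of the entries `5` faces at least five. To
have this for all alignments at once, a transfer weight `tw` sums over all matchings of gaps with a
small weight `δ` for each unmatched gap; its average over `y` is computed by recursion (`avg_tw`).
Markov's inequality then shows that, for fixed `x` and all but exponentially few balanced `y`, one
step satisfies `E[exp (-λ (L' - L))] ≤ 0.997`, where `L` and `L'` are the scores before and after
the step and `exp λ = 1.1` (`goodPair`, `card_not_goodPair`).

The states of the chain are uniform on strings with prescribed block counts rather than on all
strings. Bounding the number of strings with block counts within `O(√n)` of their means from below
by `2 ^ n * exp (-O(√n log n))` (`card_strSetV_lower`) transfers Hoeffding's bound for the number of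
ones to such strings, and `card_shift` carries it back along the chain to its starting point, which
need not be close to the mean (`Iset_facts`). As the number of ones is constant along the chain, and
`y` is independent of it, the pairs met by the chain are good up to an exponentially small
probability. The exponential moments multiply along the chain, so that the slope condition between
the times `j` and `k` fails with probability at most `0.999 ^ (k - j)` up to exponentially small
terms (`real_fail_le`). Since `k - j ≥ n ^ 0.1`, a union bound over the polynomially many triples
`(m, j, k)` finishes the proof.

No measurability is assumed of the random variables, so that events are only compared through
monotonicity and subadditivity of the measure (`real_le_sum`).
-/

open scoped Classical
open Finset

noncomputable section

/-- Score of aligning two letters (`true` = 1, `false` = 0):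
`s(1,1) = S`, `s(0,0) = 1`, `s(1,0) = s(0,1) = 0`. -/
def letterScore (S : ℝ) (a b : Bool) : ℝ :=
  if a = true ∧ b = true then S else if a = false ∧ b = false then 1 else 0

/-- Score of the alignment `(π, ν)` of the strings `x` and `y`. -/
def alignScore (S : ℝ) {n k : ℕ} (x y : Fin n → Bool) (π ν : Fin k → Fin n) : ℝ :=
  ∑ i : Fin k, letterScore S (x (π i)) (y (ν i))

/-- The optimal alignment score of two binary strings of length `n`. -/
def optScore (S : ℝ) (n : ℕ) (x y : Fin n → Bool) : ℝ :=
  sSup {r : ℝ | ∃ (k : ℕ) (π ν : Fin k → Fin n),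
    StrictMono π ∧ StrictMono ν ∧ r = alignScore S x y π ν}

/-- The string `x`, extended by the (neutral) letter `true` outside `[0, n)`. -/
def ext {n : ℕ} (x : Fin n → Bool) : ℕ → Bool :=
  fun j => if h : j < n then x ⟨j, h⟩ else true

/-- `blockStart x ℓ i` holds iff a block of zeros of length `ℓ` of `x` starts at position `i`:
positions `i, …, i+ℓ-1` carry zeros, and they are delimited by ones (or the ends of `x`). -/
def blockStart {n : ℕ} (x : Fin n → Bool) (ℓ i : ℕ) : Prop :=
  0 < ℓ ∧ i + ℓ ≤ n ∧ (∀ j ∈ Finset.Ico i (i + ℓ), ext x j = false) ∧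
    (i = 0 ∨ ext x (i - 1) = true) ∧ ext x (i + ℓ) = true

/-- The set of starting positions of blocks of zeros of length `ℓ` in `x`. -/
def starts {n : ℕ} (x : Fin n → Bool) (ℓ : ℕ) : Finset ℕ :=
  (Finset.range n).filter fun i => blockStart x ℓ i

/-- The number of blocks of zeros of length `ℓ` in `x`. -/
def numBlocks {n : ℕ} (x : Fin n → Bool) (ℓ : ℕ) : ℕ := (starts x ℓ).card

/-- Probability of an event under a uniform random binary string of length `n`. -/
def probX (n : ℕ) (E : (Fin n → Bool) → Prop) : ℝ :=
  ((Finset.univ.filter E).card : ℝ) / 2 ^ n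

/-- Probability of an event under two independent uniform random binary strings of length `n`. -/
def probXY (n : ℕ) (E : (Fin n → Bool) → (Fin n → Bool) → Prop) : ℝ :=
  ((Finset.univ.filter (fun p : (Fin n → Bool) × (Fin n → Bool) => E p.1 p.2)).card : ℝ) / 4 ^ n

/-- Expectation of a function of a uniform random binary string of length `n`. -/
def expX (n : ℕ) (f : (Fin n → Bool) → ℝ) : ℝ := (∑ x, f x) / 2 ^ n

/-- Expectation of a function of two independent uniform random binary strings of length `n`. -/
def expXY (n : ℕ) (f : (Fin n → Bool) → (Fin n → Bool) → ℝ) : ℝ := (∑ x, ∑ y, f x y) / 4 ^ n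

/-- The string obtained from `x` by removing one zero from the block of zeros starting at `p`
and inserting one extra zero into the block of zeros starting at `q`. -/
def modifyStr {n : ℕ} (x : Fin n → Bool) (p q : ℕ) : Fin n → Bool :=
  fun i => (((List.ofFn x).eraseIdx p).insertIdx (if p < q then q - 1 else q) false).getD i false

/-- The Euclidean norm on `ℝ⁴`. -/
def enorm4 (v : Fin 4 → ℝ) : ℝ := Real.sqrt (∑ i, v i ^ 2)

/-- A vector of `ℝ⁴` all of whose coordinates are natural numbers. -/
def isNatVec (v : Fin 4 → ℝ) : Prop := ∀ i, ∃ k : ℕ, v i = (k : ℝ)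

/-- `H_a = {(n₁, 0, n₄, n₅) | n₁, n₄, n₅ ∈ ℕ}`. -/
def Ha : Set (Fin 4 → ℝ) := {v | isNatVec v ∧ v 1 = 0}

/-- `H_b = {(n₁, n₂, 0, n₅) | n₁, n₂, n₅ ∈ ℕ}`. -/
def Hb : Set (Fin 4 → ℝ) := {v | isNatVec v ∧ v 2 = 0}

/-- The direction `e⃗ = (-1, 1, 1, -1)`. -/
def evec : Fin 4 → ℝ := ![-1, 1, 1, -1]

/-- The block lengths `1, 2, 4, 5` under consideration. -/
def blockLen : Fin 4 → ℕ := ![1, 2, 4, 5]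

/-- The vector `N⃗(x) = (N₁(x), N₂(x), N₄(x), N₅(x))` of numbers of blocks of zeros of
lengths `1, 2, 4, 5` of `x`, as a vector of `ℝ⁴`. -/
def NvecR {n : ℕ} (x : Fin n → Bool) : Fin 4 → ℝ := fun i => (numBlocks x (blockLen i) : ℝ)

/-- `μ⃗ = (E[N₁], E[N₂], E[N₄], E[N₅])` for a uniform random binary string of length `n`. -/
def muVec (n : ℕ) : Fin 4 → ℝ := fun i => expX n (fun x => (numBlocks x (blockLen i) : ℝ))

/-- The set `Iⁿ = C·((H_a ∪ H_b) ∩ B(0, √n)) + C·{k e⃗ | k ∈ [-√n, √n]} + μ⃗`. -/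
def Iset (n : ℕ) (C : ℝ) : Set (Fin 4 → ℝ) :=
  {w | ∃ v ∈ Ha ∪ Hb, enorm4 v ≤ Real.sqrt n ∧
    ∃ k : ℝ, |k| ≤ Real.sqrt n ∧ w = C • v + C • (k • evec) + muVec n}

open MeasureTheory ProbabilityTheory Filter

/-- The number of pairs `(p, q)`, with `p` the start of a block of zeros of length 5 of `x` and
`q` the start of a block of zeros of length 1 of `x`, whose associated modification of `x`
(removing a zero from the first block and adding it to the second) produces `z`. -/
def pairCount {n : ℕ} (x z : Fin n → Bool) : ℕ :=
  (((starts x 5) ×ˢ (starts x 1)).filter fun pq => modifyStr x pq.1 pq.2 = z).card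

/-- The one-step transition probability of the chain: from `x`, remove a zero from a uniformly
chosen block of zeros of length 5 and add it to a uniformly chosen block of zeros of length 1. -/
def transProb {n : ℕ} (x z : Fin n → Bool) : ℝ :=
  if (starts x 5).Nonempty ∧ (starts x 1).Nonempty then
    (pairCount x z : ℝ) / (((starts x 5).card : ℝ) * ((starts x 1).card : ℝ))
  else if z = x then 1 else 0

/-- The finset of binary strings of length `n` with block-count vector `m : Fin 4 → ℕ`
(blocks of zeros of lengths `1, 2, 4, 5`). -/
def strSetV (n : ℕ) (m : Fin 4 → ℕ) : Finset (Fin n → Bool) :=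
  Finset.univ.filter fun x => ∀ i, numBlocks x (blockLen i) = m i

/-- A vector of `ℕ⁴` viewed in `ℝ⁴`. -/
def natVec (m : Fin 4 → ℕ) : Fin 4 → ℝ := fun i => (m i : ℝ)

/-! ### Strings as gap lists -/

/-- The lengths (possibly `0`) of the maximal runs of zeros before the first one, between
consecutive ones and after the last one of a binary word. -/
def gaps : List Bool → List ℕ
  | [] => [0]
  | true :: l => 0 :: gaps l
  | false :: l => (gaps l).modifyHead (· + 1)

/-- The binary word with a prescribed (nonempty) gap list. -/
def ofGaps : List ℕ → List Bool
  | [] => []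
  | [a] => List.replicate a false
  | a :: b :: t => List.replicate a false ++ true :: ofGaps (b :: t)

/-- The position in the word at which the gap number `i` starts. -/
def pos (a : List ℕ) (i : ℕ) : ℕ := (a.take i).sum + i

/-- The indices of the gaps of length `ℓ`. -/
def idx (a : List ℕ) (ℓ : ℕ) : Finset ℕ := (Finset.range a.length).filter fun i => a[i]? = some ℓ

lemma mem_idx {a : List ℕ} {ℓ i : ℕ} : i ∈ idx a ℓ ↔ a[i]? = some ℓ := by
  rw [idx, Finset.mem_filter, Finset.mem_range]
  exact ⟨fun h => h.2, fun h => ⟨(List.getElem?_eq_some_iff.1 h).1, h⟩⟩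

lemma gaps_ne_nil (l : List Bool) : gaps l ≠ [] := by
  induction l with
  | nil => simp [gaps]
  | cons b l ih => cases b <;> simp [gaps, ih]

lemma exists_gaps_cons (l : List Bool) : ∃ h t, gaps l = h :: t :=
  List.exists_cons_of_ne_nil (gaps_ne_nil l)

lemma gaps_append_true (l l' : List Bool) : gaps (l ++ true :: l') = gaps l ++ gaps l' := by
  induction l with
  | nil => simp [gaps]
  | cons b l ih =>
    obtain ⟨h, t, e⟩ := exists_gaps_cons l
    cases b <;> simp [gaps, ih, e]

lemma gaps_replicate (a : ℕ) : gaps (List.replicate a false) = [a] := by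
  induction a with
  | zero => simp [gaps]
  | succ a ih => simp [List.replicate_succ, gaps, ih]

lemma gaps_ofGaps : ∀ A : List ℕ, A ≠ [] → gaps (ofGaps A) = A
  | [], h => absurd rfl h
  | [a], _ => gaps_replicate a
  | a :: b :: t, _ => by
    rw [ofGaps, gaps_append_true, gaps_replicate, gaps_ofGaps (b :: t) (by simp)]; simp

lemma ofGaps_append_cons (A : List ℕ) (hA : A ≠ []) (b : ℕ) (B : List ℕ) :
    ofGaps (A ++ b :: B) = ofGaps A ++ true :: ofGaps (b :: B) := by
  induction A with
  | nil => exact absurd rfl hA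
  | cons a A ih =>
    cases A with
    | nil => simp [ofGaps]
    | cons c A => simp only [List.cons_append, ofGaps, List.append_assoc] at ih ⊢; simp [ih]

lemma ofGaps_succ (h : ℕ) (t : List ℕ) : ofGaps ((h + 1) :: t) = false :: ofGaps (h :: t) := by
  cases t <;> simp [ofGaps, List.replicate_succ]

lemma ofGaps_gaps (l : List Bool) : ofGaps (gaps l) = l := by
  induction l with
  | nil => simp [gaps, ofGaps]
  | cons b l ih =>
    obtain ⟨h, t, e⟩ := exists_gaps_cons l
    cases b
    · simp only [gaps, e, List.modifyHead_cons, ofGaps_succ]; rw [← e, ih]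
    · simp only [gaps, e, ofGaps]; rw [← e, ih]; simp

lemma gaps_injective : Function.Injective gaps := fun l l' h => by
  rw [← ofGaps_gaps l, h, ofGaps_gaps]

lemma sum_gaps (l : List Bool) : (gaps l).sum = l.count false := by
  induction l with
  | nil => simp [gaps]
  | cons b l ih =>
    obtain ⟨h, t, e⟩ := exists_gaps_cons l
    cases b <;> simp [gaps, e] at ih ⊢ <;> omega

lemma length_gaps (l : List Bool) : (gaps l).length = l.count true + 1 := by
  induction l with
  | nil => simp [gaps]
  | cons b l ih => cases b <;> simp [gaps, ih]

lemma sum_add_length_gaps (l : List Bool) : (gaps l).sum + (gaps l).length = l.length + 1 := by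
  rw [sum_gaps, length_gaps, ← List.count_false_add_count_true l]; ring

lemma length_ofGaps (A : List ℕ) (hA : A ≠ []) : (ofGaps A).length + 1 = A.sum + A.length := by
  have := sum_add_length_gaps (ofGaps A)
  rw [gaps_ofGaps A hA] at this; omega

lemma count_true_ofGaps (A : List ℕ) (hA : A ≠ []) : (ofGaps A).count true + 1 = A.length := by
  rw [← length_gaps, gaps_ofGaps A hA]

lemma pos_zero (a : List ℕ) : pos a 0 = 0 := by simp [pos]

lemma pos_cons_succ (h : ℕ) (t : List ℕ) (i : ℕ) : pos (h :: t) (i + 1) = pos t i + (h + 1) := by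
  simp [pos]; ring

lemma pos_strictMono (a : List ℕ) : StrictMono (pos a) := by
  apply strictMono_nat_of_lt_succ
  intro i
  have : (a.take i).sum ≤ (a.take (i + 1)).sum := by
    rw [List.take_add_one, List.sum_append]; omega
  unfold pos; omega

lemma gaps_eraseIdx (l : List Bool) (i v : ℕ) (h : (gaps l)[i]? = some (v + 1)) :
    gaps (l.eraseIdx (pos (gaps l) i)) = (gaps l).set i v := by
  induction l generalizing i with
  | nil => cases i <;> simp [gaps] at h
  | cons b l ih =>
    obtain ⟨g, t, e⟩ := exists_gaps_cons l
    cases b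
    · cases i with
      | zero => simp [gaps, e, pos_zero] at h ⊢; exact h
      | succ i =>
        have h' : (gaps l)[i + 1]? = some (v + 1) := by simpa [gaps, e] using h
        have := ih _ h'
        simp only [gaps, e, List.modifyHead_cons, pos_cons_succ] at this ⊢
        rw [← add_assoc, List.eraseIdx_cons_succ, gaps, this]; simp
    · cases i with
      | zero => simp [gaps] at h
      | succ i =>
        have h' : (gaps l)[i]? = some (v + 1) := by simpa [gaps] using h
        simp only [gaps, pos_cons_succ, List.eraseIdx_cons_succ, ih _ h', zero_add,
          List.set_cons_succ]

lemma gaps_insertIdx (l : List Bool) (i v : ℕ) (h : (gaps l)[i]? = some v) :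
    gaps (l.insertIdx (pos (gaps l) i) false) = (gaps l).set i (v + 1) := by
  induction l generalizing i with
  | nil => cases i <;> simp [gaps, pos] at h ⊢; exact h.symm
  | cons b l ih =>
    obtain ⟨g, t, e⟩ := exists_gaps_cons l
    cases b
    · cases i with
      | zero => simp [gaps, e, pos_zero] at h ⊢; exact h
      | succ i =>
        have h' : (gaps l)[i + 1]? = some v := by simpa [gaps, e] using h
        have := ih _ h'
        simp only [gaps, e, List.modifyHead_cons, pos_cons_succ] at this ⊢
        rw [← add_assoc, List.insertIdx_succ_cons, gaps, this]; simp
    · cases i with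
      | zero => simp [gaps, pos_zero] at h ⊢; exact h.symm
      | succ i =>
        have h' : (gaps l)[i]? = some v := by simpa [gaps] using h
        simp only [gaps, pos_cons_succ, List.insertIdx_succ_cons, ih _ h', zero_add,
          List.set_cons_succ]

lemma gaps_head_iff (l : List Bool) (ℓ : ℕ) : (gaps l)[0]? = some ℓ ↔
    ℓ ≤ l.length ∧ (∀ j, j < ℓ → l.getD j true = false) ∧ l.getD ℓ true = true := by
  induction l generalizing ℓ with
  | nil =>
    simp only [gaps, List.getElem?_cons_zero, Option.some.injEq, List.length_nil, Nat.le_zero_eq]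
    refine ⟨fun h => ?_, fun h => h.1.symm⟩
    subst h; simp
  | cons b l ih =>
    obtain ⟨g, t, e⟩ := exists_gaps_cons l
    cases b
    · cases ℓ with
      | zero => simp [gaps, e]
      | succ ℓ =>
        have := ih ℓ
        simp only [e, gaps, List.modifyHead_cons, List.getElem?_cons_zero, Option.some.injEq,
          add_left_inj, List.length_cons, add_le_add_iff_right, List.getD_cons_succ] at this ⊢
        rw [this]
        refine and_congr_right fun _ => and_congr_left fun _ => ⟨fun h j hj => ?_, fun h j hj => ?_⟩
        · cases j with
          | zero => simp
          | succ j => simpa using h j (by omega)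
        · simpa using h (j + 1) (by omega)
    · cases ℓ with
      | zero => simp [gaps]
      | succ ℓ =>
        simp only [gaps, List.getElem?_cons_zero, Option.some.injEq]
        refine ⟨fun h => by omega, fun h => ?_⟩
        have := h.2.1 0 (by omega)
        simp at this

/-- The condition `blockStart` for words given as lists. -/
def blockStartL (l : List Bool) (ℓ p : ℕ) : Prop :=
  p + ℓ ≤ l.length ∧ (∀ j, p ≤ j → j < p + ℓ → l.getD j true = false) ∧
    (p = 0 ∨ l.getD (p - 1) true = true) ∧ l.getD (p + ℓ) true = true

lemma blockStartL_cons (b : Bool) (l : List Bool) (ℓ p : ℕ) :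
    blockStartL (b :: l) ℓ (p + 1) ↔ blockStartL l ℓ p ∧ (p = 0 → b = true) := by
  have h1 : (∀ j, p + 1 ≤ j → j < p + 1 + ℓ → (b :: l).getD j true = false) ↔
      (∀ j, p ≤ j → j < p + ℓ → l.getD j true = false) := by
    constructor
    · intro h j h1 h2; simpa using h (j + 1) (by omega) (by omega)
    · intro h j h1 h2
      cases j with
      | zero => omega
      | succ j => simpa using h j (by omega) (by omega)
  have h2 : p + 1 + ℓ = p + ℓ + 1 := by ring
  unfold blockStartL
  rw [h1]
  cases p with
  | zero => simp only [h2, List.getD_cons_succ, List.length_cons]; simp; tauto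
  | succ p =>
    simp only [h2, List.getD_cons_succ, List.length_cons]; simp

lemma blockStartL_iff (l : List Bool) (ℓ p : ℕ) (hℓ : 0 < ℓ) : blockStartL l ℓ p ↔
    ∃ i, (gaps l)[i]? = some ℓ ∧ pos (gaps l) i = p := by
  have key0 : ∀ l : List Bool, blockStartL l ℓ 0 ↔ ∃ i, (gaps l)[i]? = some ℓ ∧ pos (gaps l) i = 0 := by
    intro l
    have : blockStartL l ℓ 0 ↔ (gaps l)[0]? = some ℓ := by
      rw [gaps_head_iff]; simp [blockStartL]
    rw [this]
    constructor
    · intro h; exact ⟨0, h, pos_zero _⟩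
    · rintro ⟨i, h, hi⟩
      have : i = 0 := by unfold pos at hi; omega
      rwa [this] at h
  induction l generalizing p with
  | nil =>
    cases p with
    | zero => exact key0 _
    | succ p =>
      constructor
      · intro h; have := h.1; simp at this
      · rintro ⟨i, h, hi⟩
        cases i <;> simp [gaps, pos] at h hi
  | cons b l ih =>
    cases p with
    | zero => exact key0 _
    | succ p =>
      have ih' : blockStartL l ℓ p ↔ ∃ i, (gaps l)[i]? = some ℓ ∧ pos (gaps l) i = p := ih p
      rw [blockStartL_cons, ih']
      obtain ⟨g, t, e⟩ := exists_gaps_cons l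
      cases b
      · simp only [e, gaps, List.modifyHead_cons]
        constructor
        · rintro ⟨⟨i, h, hi⟩, hp⟩
          cases i with
          | zero => simp [pos_zero] at hi; exact absurd (hp hi.symm) (by simp)
          | succ i =>
            refine ⟨i + 1, by simpa using h, ?_⟩
            rw [pos_cons_succ] at hi ⊢; omega
        · rintro ⟨i, h, hi⟩
          cases i with
          | zero => simp [pos_zero] at hi
          | succ i =>
            rw [pos_cons_succ] at hi
            refine ⟨⟨i + 1, by simpa using h, ?_⟩, ?_⟩
            · rw [pos_cons_succ]; omega
            · intro; omega
      · simp only [gaps]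
        constructor
        · rintro ⟨⟨i, h, hi⟩, hp⟩
          exact ⟨i + 1, by simpa using h, by rw [pos_cons_succ]; omega⟩
        · rintro ⟨i, h, hi⟩
          cases i with
          | zero => simp [pos_zero] at hi
          | succ i =>
            rw [pos_cons_succ] at hi
            exact ⟨⟨i, by simpa using h, by omega⟩, fun _ => by simp⟩

/-- The gap list of a string indexed by `Fin n`. -/
def gapsOf {n : ℕ} (x : Fin n → Bool) : List ℕ := gaps (List.ofFn x)

lemma ext_eq_getD {n : ℕ} (x : Fin n → Bool) (j : ℕ) : _root_.ext x j = (List.ofFn x).getD j true := by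
  unfold _root_.ext
  split_ifs with h
  · rw [List.getD_eq_getElem _ _ (by simpa using h)]; simp
  · rw [List.getD_eq_default _ _ (by simpa using h)]

lemma starts_eq {n : ℕ} (x : Fin n → Bool) (ℓ : ℕ) (hℓ : 0 < ℓ) :
    starts x ℓ = (idx (gapsOf x) ℓ).image (pos (gapsOf x)) := by
  ext1 p
  have h1 : p ∈ starts x ℓ ↔ blockStartL (List.ofFn x) ℓ p := by
    simp only [starts, blockStart, blockStartL, ext_eq_getD, Finset.mem_filter, Finset.mem_range,
      Finset.mem_Ico, List.length_ofFn]
    constructor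
    · rintro ⟨-, -, h2, h3, h4⟩; exact ⟨h2, fun j hj hj' => h3 j ⟨hj, hj'⟩, h4⟩
    · rintro ⟨h2, h3, h4⟩; exact ⟨by omega, hℓ, h2, fun j hj => h3 j hj.1 hj.2, h4⟩
  rw [h1, blockStartL_iff _ _ _ hℓ]
  simp only [Finset.mem_image, mem_idx, gapsOf]

lemma sum_starts {n : ℕ} (x : Fin n → Bool) (ℓ : ℕ) (hℓ : 0 < ℓ) (f : ℕ → ℝ) :
    ∑ p ∈ starts x ℓ, f p = ∑ i ∈ idx (gapsOf x) ℓ, f (pos (gapsOf x) i) := by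
  rw [starts_eq x ℓ hℓ, Finset.sum_image]
  exact fun i _ j _ h => (pos_strictMono _).injective h

lemma card_idx (a : List ℕ) (ℓ : ℕ) : (idx a ℓ).card = a.count ℓ := by
  induction a with
  | nil => simp [idx]
  | cons b a ih =>
    have : ∀ a : List ℕ, (idx a ℓ).card = ∑ i ∈ Finset.range a.length, if a[i]? = some ℓ then 1 else 0 := by
      intro a; rw [idx, Finset.card_filter]
    rw [this] at ih ⊢
    rw [List.length_cons, Finset.sum_range_succ', List.count_cons]
    simp only [List.getElem?_cons_succ, List.getElem?_cons_zero, ih]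
    simp

lemma numBlocks_eq {n : ℕ} (x : Fin n → Bool) (ℓ : ℕ) (hℓ : 0 < ℓ) :
    numBlocks x ℓ = (gapsOf x).count ℓ := by
  rw [numBlocks, starts_eq x ℓ hℓ, Finset.card_image_of_injective _ (pos_strictMono _).injective,
    card_idx]

lemma pos_le_length (l : List Bool) (i : ℕ) (hi : i < (gaps l).length) :
    pos (gaps l) i ≤ l.length := by
  have h := sum_add_length_gaps l
  have := List.sum_take_add_sum_drop (gaps l) i
  unfold pos; omega

lemma ofFn_modifyStr {n : ℕ} (x : Fin n → Bool) (p q : ℕ) (hp : p < n) (hq : q ≤ n) :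
    List.ofFn (modifyStr x p q) =
      ((List.ofFn x).eraseIdx p).insertIdx (if p < q then q - 1 else q) false := by
  have hl : (((List.ofFn x).eraseIdx p).insertIdx (if p < q then q - 1 else q) false).length = n := by
    rw [List.length_insertIdx, List.length_eraseIdx]
    simp only [List.length_ofFn, hp, if_true]
    split_ifs <;> omega
  apply List.ext_getElem
  · rw [hl]; simp
  · intro i h1 h2
    simp only [List.getElem_ofFn, modifyStr]
    rw [List.getD_eq_getElem _ _ h2]

lemma sum_take_set (a : List ℕ) (i k v w : ℕ) (h : a[i]? = some v) :
    ((a.set i w).take k).sum + (if i < k then v else 0) = (a.take k).sum + (if i < k then w else 0) := by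
  induction a generalizing i k with
  | nil => simp at h
  | cons b a ih =>
    cases k with
    | zero => simp
    | succ k =>
      cases i with
      | zero => simp at h; simp [h]; ring
      | succ i =>
        have := ih i k (by simpa using h)
        simp only [List.set_cons_succ, List.take_succ_cons, List.sum_cons, add_lt_add_iff_right]
        omega

/-- Moving a zero from a block of length 5 to a block of length 1 changes two gaps. -/
lemma gapsOf_modifyStr {n : ℕ} (x : Fin n → Bool) (i k : ℕ) (hi : i ∈ idx (gapsOf x) 5)
    (hk : k ∈ idx (gapsOf x) 1) :
    gapsOf (modifyStr x (pos (gapsOf x) i) (pos (gapsOf x) k)) =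
      ((gapsOf x).set i 4).set k 2 := by
  rw [mem_idx] at hi hk
  set l := List.ofFn x with hl
  have ha : gapsOf x = gaps l := rfl
  rw [ha] at hi hk ⊢
  have hll : l.length = n := by simp [hl]
  have hne : i ≠ k := by
    rintro rfl
    rw [hi] at hk; simp at hk
  have bs : ∀ j v, 0 < v → (gaps l)[j]? = some v → pos (gaps l) j + v ≤ n := by
    intro j v hv h
    rw [← hll]
    exact ((blockStartL_iff l v _ hv).2 ⟨j, h, rfl⟩).1
  have hp := bs i 5 (by norm_num) hi
  have hq := bs k 1 (by norm_num) hk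
  have hmono := (pos_strictMono (gaps l))
  unfold gapsOf
  rw [ofFn_modifyStr x _ _ (by omega) (by omega)]
  rw [← hl]
  have e1 := gaps_eraseIdx l i 4 hi
  have hk2 : (gaps (l.eraseIdx (pos (gaps l) i)))[k]? = some 1 := by
    rw [e1, List.getElem?_set_ne hne]; exact hk
  have e2 := gaps_insertIdx _ k 1 hk2
  rw [← e1, ← e2]
  congr 2
  rw [e1]
  have e3 := sum_take_set (gaps l) i k 5 4 hi
  have e4 : pos (gaps l) i < pos (gaps l) k ↔ i < k := hmono.lt_iff_lt
  simp only [e4]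
  unfold pos at e4 ⊢
  split_ifs at e3 ⊢ with h <;> omega

/-! ### Optimal alignments and segmentations of gap lists -/

/-- `r` is the score of some alignment of the words `x` and `y`, an alignment being a pair of
subwords of equal length. -/
def Ach (S : ℝ) (x y : List Bool) (r : ℝ) : Prop :=
  ∃ u v : List Bool, u.Sublist x ∧ v.Sublist y ∧ u.length = v.length ∧
    r = (List.zipWith (letterScore S) u v).sum

lemma ofFn_comp_sublist {n k : ℕ} (x : Fin n → Bool) (π : Fin k → Fin n) (h : StrictMono π) :
    (List.ofFn (x ∘ π)).Sublist (List.ofFn x) := by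
  rw [List.sublist_iff_exists_fin_orderEmbedding_get_eq]
  refine ⟨OrderEmbedding.ofStrictMono
    (fun i => Fin.cast (List.length_ofFn).symm (π (Fin.cast List.length_ofFn i))) ?_, ?_⟩
  · intro i j hij
    have : Fin.cast (List.length_ofFn) i < Fin.cast (List.length_ofFn (f := x ∘ π)) j := hij
    exact h this
  · intro i
    rw [List.get_ofFn, List.get_ofFn]
    rfl

lemma ach_iff {n : ℕ} (S : ℝ) (x y : Fin n → Bool) (r : ℝ) :
    (∃ (k : ℕ) (π ν : Fin k → Fin n), StrictMono π ∧ StrictMono ν ∧ r = alignScore S x y π ν) ↔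
      Ach S (List.ofFn x) (List.ofFn y) r := by
  have key : ∀ {k : ℕ} (π ν : Fin k → Fin n), alignScore S x y π ν =
      (List.zipWith (letterScore S) (List.ofFn (x ∘ π)) (List.ofFn (y ∘ ν))).sum := by
    intro k π ν
    have : List.zipWith (letterScore S) (List.ofFn (x ∘ π)) (List.ofFn (y ∘ ν)) =
        List.ofFn (fun i => letterScore S (x (π i)) (y (ν i))) := by
      apply List.ext_getElem <;> simp
    rw [this, List.sum_ofFn, alignScore]
  constructor
  · rintro ⟨k, π, ν, h1, h2, rfl⟩
    exact ⟨_, _, ofFn_comp_sublist x π h1, ofFn_comp_sublist y ν h2, by simp, key π ν⟩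
  · rintro ⟨u, v, hu, hv, hl, rfl⟩
    have aux : ∀ (x : Fin n → Bool) (k : ℕ) (u : List Bool), u.Sublist (List.ofFn x) → u.length = k →
        ∃ π : Fin k → Fin n, StrictMono π ∧ u = List.ofFn (x ∘ π) := by
      rintro x k u hu rfl
      obtain ⟨f, hf⟩ := List.sublist_iff_exists_fin_orderEmbedding_get_eq.1 hu
      refine ⟨fun i => Fin.cast List.length_ofFn (f i), fun i j hij => ?_, ?_⟩
      · have := f.strictMono hij
        exact this
      · apply List.ext_getElem
        · simp
        · intro i h1 h2
          have := hf ⟨i, h1⟩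
          rw [List.get_ofFn] at this
          rw [List.getElem_ofFn]
          exact this
    obtain ⟨π, hπ, e⟩ := aux x _ u hu rfl
    obtain ⟨ν, hν, e'⟩ := aux y _ v hv hl.symm
    exact ⟨_, π, ν, hπ, hν, by rw [key π ν, ← e, ← e']⟩

lemma finite_scores {n : ℕ} (S : ℝ) (x y : Fin n → Bool) :
    {r : ℝ | ∃ (k : ℕ) (π ν : Fin k → Fin n),
      StrictMono π ∧ StrictMono ν ∧ r = alignScore S x y π ν}.Finite := by
  have : (⋃ k ∈ Set.Iic n, Set.range
      (fun q : (Fin k → Fin n) × (Fin k → Fin n) => alignScore S x y q.1 q.2)).Finite :=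
    (Set.finite_Iic n).biUnion fun k _ => Set.finite_range _
  refine this.subset ?_
  rintro r ⟨k, π, ν, h1, h2, rfl⟩
  simp only [Set.mem_iUnion, Set.mem_range]
  refine ⟨k, ?_, (π, ν), rfl⟩
  simpa using Fintype.card_le_of_injective π h1.injective

lemma le_optScore {n : ℕ} {S : ℝ} {x y : Fin n → Bool} {r : ℝ}
    (h : Ach S (List.ofFn x) (List.ofFn y) r) : r ≤ optScore S n x y :=
  le_csSup (finite_scores S x y).bddAbove ((ach_iff S x y r).2 h)

lemma ach_optScore {n : ℕ} (S : ℝ) (x y : Fin n → Bool) :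
    Ach S (List.ofFn x) (List.ofFn y) (optScore S n x y) := by
  rw [← ach_iff]
  refine Set.Nonempty.csSup_mem ?_ (finite_scores S x y)
  exact ⟨_, 0, Fin.elim0, Fin.elim0, fun i => i.elim0, fun i => i.elim0, rfl⟩

lemma Ach.append {S : ℝ} {x y x' y' : List Bool} {r r' : ℝ} (h : Ach S x y r) (h' : Ach S x' y' r') :
    Ach S (x ++ x') (y ++ y') (r + r') := by
  obtain ⟨u, v, h1, h2, h3, rfl⟩ := h
  obtain ⟨u', v', h1', h2', h3', rfl⟩ := h'
  refine ⟨u ++ u', v ++ v', h1.append h1', h2.append h2', by simp [h3, h3'], ?_⟩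
  rw [List.zipWith_append h3, List.sum_append]

lemma ach_replicate (S : ℝ) (b : Bool) (k : ℕ) (x y : List Bool) (hx : k ≤ x.count b)
    (hy : k ≤ y.count b) : Ach S x y (k * letterScore S b b) := by
  refine ⟨List.replicate k b, List.replicate k b, List.replicate_sublist_iff.2 hx,
    List.replicate_sublist_iff.2 hy, rfl, ?_⟩
  rw [List.zipWith_replicate]; simp

/-- The first components of a segmentation, concatenated. -/
def segA (sg : List (List ℕ × List ℕ)) : List ℕ := (sg.map Prod.fst).flatten

/-- The second components of a segmentation, concatenated. -/
def segB (sg : List (List ℕ × List ℕ)) : List ℕ := (sg.map Prod.snd).flatten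

/-- The number of zeros that can be aligned inside the segments. -/
def segVal (sg : List (List ℕ × List ℕ)) : ℕ := (sg.map fun s => min s.1.sum s.2.sum).sum

/-- `sg` cuts the gap lists `a` and `g` into equally many nonempty consecutive segments.  It
encodes an alignment of the two words: the cuts are the matched pairs of ones, and inside a
segment only zeros are aligned. -/
def IsSeg (sg : List (List ℕ × List ℕ)) (a g : List ℕ) : Prop :=
  sg ≠ [] ∧ (∀ s ∈ sg, s.1 ≠ [] ∧ s.2 ≠ []) ∧ segA sg = a ∧ segB sg = g

lemma segA_cons (s : List ℕ × List ℕ) (t : List (List ℕ × List ℕ)) :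
    segA (s :: t) = s.1 ++ segA t := by simp [segA]

lemma segB_cons (s : List ℕ × List ℕ) (t : List (List ℕ × List ℕ)) :
    segB (s :: t) = s.2 ++ segB t := by simp [segB]

lemma segVal_cons (s : List ℕ × List ℕ) (t : List (List ℕ × List ℕ)) :
    segVal (s :: t) = min s.1.sum s.2.sum + segVal t := by simp [segVal]

lemma gaps_append_aux (r l : List Bool) (A A' : List ℕ) (hA : A ≠ []) (h : gaps l = A ++ A') :
    ∃ A₂ : List ℕ, A₂ ≠ [] ∧ A₂.sum = A.sum + r.count false ∧ gaps (r ++ l) = A₂ ++ A' := by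
  induction r with
  | nil => exact ⟨A, hA, by simp, by simpa using h⟩
  | cons b r ih =>
    obtain ⟨B, hB, hs, hg⟩ := ih
    cases b
    · cases B with
      | nil => exact absurd rfl hB
      | cons c B =>
        refine ⟨(c + 1) :: B, by simp, ?_, ?_⟩
        · simp at hs ⊢; omega
        · simp [gaps, hg]
    · exact ⟨0 :: B, by simp, by simp [hs], by simp [gaps, hg]⟩

lemma letterScore_le {S : ℝ} {b c : Bool} (h : ¬ (b = true ∧ c = true)) :
    letterScore S b c ≤ if b = false ∧ c = false then 1 else 0 := by
  unfold letterScore; rw [if_neg h]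

/-- Every alignment is dominated by the one encoded by some segmentation. -/
lemma exists_seg (S : ℝ) (u : List Bool) : ∀ (v x y : List Bool), u.Sublist x → v.Sublist y →
    u.length = v.length → ∃ sg, IsSeg sg (gaps x) (gaps y) ∧
      (List.zipWith (letterScore S) u v).sum ≤ segVal sg + S * ((sg.length : ℝ) - 1) := by
  induction u with
  | nil =>
    intro v x y _ _ _
    refine ⟨[(gaps x, gaps y)], ⟨by simp, by simp [gaps_ne_nil], by simp [segA], by simp [segB]⟩, ?_⟩
    simp
  | cons b u ih =>
    intro v x y hx hy hl
    cases v with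
    | nil => simp at hl
    | cons c v =>
      obtain ⟨r, x', rfl, hr, hx'⟩ := List.cons_sublist_iff.1 hx
      obtain ⟨q, y', rfl, hq, hy'⟩ := List.cons_sublist_iff.1 hy
      obtain ⟨sg, ⟨hne, hall, hA, hB⟩, hs⟩ := ih v x' y' hx' hy' (by simpa using hl)
      obtain ⟨⟨A, G⟩, t, rfl⟩ := List.exists_cons_of_ne_nil hne
      rw [segA_cons] at hA
      rw [segB_cons] at hB
      have hAG := hall (A, G) (by simp)
      have hall' : ∀ s ∈ t, s.1 ≠ [] ∧ s.2 ≠ [] := fun s hs => hall s (by simp [hs])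
      rw [List.zipWith_cons_cons, List.sum_cons]
      rw [segVal_cons] at hs
      by_cases hbc : b = true ∧ c = true
      · obtain ⟨rfl, rfl⟩ := hbc
        obtain ⟨r1, r2, rfl⟩ := List.append_of_mem hr
        obtain ⟨q1, q2, rfl⟩ := List.append_of_mem hq
        obtain ⟨A2, hA2, hAs, hAg⟩ := gaps_append_aux r2 x' A _ hAG.1 hA.symm
        obtain ⟨G2, hG2, hGs, hGg⟩ := gaps_append_aux q2 y' G _ hAG.2 hB.symm
        refine ⟨(gaps r1, gaps q1) :: (A2, G2) :: t, ⟨by simp, ?_, ?_, ?_⟩, ?_⟩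
        · intro s hs
          simp only [List.mem_cons] at hs
          rcases hs with rfl | rfl | hs
          · exact ⟨gaps_ne_nil _, gaps_ne_nil _⟩
          · exact ⟨hA2, hG2⟩
          · exact hall' s hs
        · rw [segA_cons, segA_cons, List.append_assoc, List.cons_append, gaps_append_true, hAg]
        · rw [segB_cons, segB_cons, List.append_assoc, List.cons_append, gaps_append_true, hGg]
        · have h1 : (min A.sum G.sum + segVal t : ℕ) ≤
              (segVal ((gaps r1, gaps q1) :: (A2, G2) :: t)) := by
            rw [segVal_cons, segVal_cons]
            have : min A.sum G.sum ≤ min A2.sum G2.sum := by omega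
            simp only; omega
          have h1' : ((min A.sum G.sum + segVal t : ℕ) : ℝ) ≤
              (segVal ((gaps r1, gaps q1) :: (A2, G2) :: t) : ℕ) := by exact_mod_cast h1
          have h2 : letterScore S true true = S := by simp [letterScore]
          rw [h2]
          simp only [List.length_cons] at hs ⊢
          push_cast at hs ⊢ h1'
          linarith
      · obtain ⟨A2, hA2, hAs, hAg⟩ := gaps_append_aux r x' A _ hAG.1 hA.symm
        obtain ⟨G2, hG2, hGs, hGg⟩ := gaps_append_aux q y' G _ hAG.2 hB.symm
        refine ⟨(A2, G2) :: t, ⟨by simp, ?_, ?_, ?_⟩, ?_⟩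
        · intro s hs
          simp only [List.mem_cons] at hs
          rcases hs with rfl | hs
          · exact ⟨hA2, hG2⟩
          · exact hall' s hs
        · rw [segA_cons, hAg]
        · rw [segB_cons, hGg]
        · have h1 : min A.sum G.sum + segVal t + (if b = false ∧ c = false then 1 else 0) ≤
              segVal ((A2, G2) :: t) := by
            rw [segVal_cons]
            simp only
            split_ifs with h
            · obtain ⟨rfl, rfl⟩ := h
              have e1 := List.count_pos_iff.2 hr
              have e2 := List.count_pos_iff.2 hq
              omega
            · omega
          have h1' : ((min A.sum G.sum + segVal t : ℕ) : ℝ) + (if b = false ∧ c = false then 1 else 0)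
              ≤ (segVal ((A2, G2) :: t) : ℕ) := by exact_mod_cast h1
          have h2 := letterScore_le (S := S) hbc
          simp only [List.length_cons] at hs ⊢
          push_cast at hs ⊢ h1'
          linarith

lemma segA_ne_nil {sg : List (List ℕ × List ℕ)} (h : sg ≠ []) (h' : ∀ s ∈ sg, s.1 ≠ [] ∧ s.2 ≠ []) :
    segA sg ≠ [] ∧ segB sg ≠ [] := by
  obtain ⟨s, t, rfl⟩ := List.exists_cons_of_ne_nil h
  have := h' s (by simp)
  rw [segA_cons, segB_cons]
  simp [this.1, this.2]

lemma count_false_ofGaps (A : List ℕ) (hA : A ≠ []) : (ofGaps A).count false = A.sum := by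
  rw [← sum_gaps, gaps_ofGaps A hA]

/-- A segmentation encodes an alignment: the ones separating consecutive segments are matched, and
inside each segment as many zeros as possible. -/
lemma ach_seg (S : ℝ) (sg : List (List ℕ × List ℕ)) (hne : sg ≠ [])
    (hall : ∀ s ∈ sg, s.1 ≠ [] ∧ s.2 ≠ []) :
    Ach S (ofGaps (segA sg)) (ofGaps (segB sg)) (segVal sg + S * ((sg.length : ℝ) - 1)) := by
  induction sg with
  | nil => exact absurd rfl hne
  | cons s t ih =>
    obtain ⟨h1, h2⟩ := hall s (by simp)
    have base : Ach S (ofGaps s.1) (ofGaps s.2) ((min s.1.sum s.2.sum : ℕ) : ℝ) := by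
      have := ach_replicate S false (min s.1.sum s.2.sum) (ofGaps s.1) (ofGaps s.2)
        (by rw [count_false_ofGaps _ h1]; exact min_le_left _ _)
        (by rw [count_false_ofGaps _ h2]; exact min_le_right _ _)
      have e : letterScore S false false = 1 := by simp [letterScore]
      rwa [e, mul_one] at this
    by_cases ht : t = []
    · subst ht
      simpa [segA, segB, segVal] using base
    · have hall' : ∀ s ∈ t, s.1 ≠ [] ∧ s.2 ≠ [] := fun s hs => hall s (by simp [hs])
      have h3 := ih ht hall'
      obtain ⟨h4, h5⟩ := segA_ne_nil ht hall'
      rw [segA_cons, segB_cons]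
      obtain ⟨b, B, e1⟩ := List.exists_cons_of_ne_nil h4
      obtain ⟨c, G, e2⟩ := List.exists_cons_of_ne_nil h5
      rw [e1, e2] at h3 ⊢
      rw [ofGaps_append_cons _ h1, ofGaps_append_cons _ h2]
      have h6 : Ach S [true] [true] S := by
        have := ach_replicate S true 1 [true] [true] (by simp) (by simp)
        simpa [letterScore] using this
      have h7 := base.append (h6.append h3)
      simp only [List.singleton_append] at h7
      convert h7 using 1
      rw [segVal_cons, List.length_cons]
      push_cast
      ring

/-- Replace the entry number `i` of the concatenated first components by `v`. -/
def setSegs : List (List ℕ × List ℕ) → ℕ → ℕ → List (List ℕ × List ℕ)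
  | [], _, _ => []
  | (A, G) :: t, i, v =>
    if i < A.length then (A.set i v, G) :: t else (A, G) :: setSegs t (i - A.length) v

/-- For the segment `(A, G)` which contains the entry number `i` of the concatenated first
components: the length of `A` and the sum of `G`. -/
def cls : List (List ℕ × List ℕ) → ℕ → ℕ × ℕ
  | [], _ => (0, 0)
  | (A, G) :: t, i => if i < A.length then (A.length, G.sum) else cls t (i - A.length)

/-- The entry `i` is alone in its segment, and this segment offers at least two zeros: if
the entry is `1`, increasing it increases the score. -/
def goodAt (sg : List (List ℕ × List ℕ)) (i : ℕ) : Prop := (cls sg i).1 = 1 ∧ 2 ≤ (cls sg i).2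

/-- Unless this holds, decreasing the entry `i` from `5` to `4` leaves the score unchanged. -/
def badAt (sg : List (List ℕ × List ℕ)) (i : ℕ) : Prop := (cls sg i).1 = 1 → 5 ≤ (cls sg i).2

lemma cls_setSegs (sg : List (List ℕ × List ℕ)) (i v k : ℕ) :
    cls (setSegs sg i v) k = cls sg k := by
  induction sg generalizing i k with
  | nil => rfl
  | cons s t ih =>
    obtain ⟨A, G⟩ := s
    rw [setSegs]
    split_ifs with h
    · simp [cls]
    · simp only [cls, ih]

lemma segA_setSegs (sg : List (List ℕ × List ℕ)) (i v : ℕ) :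
    segA (setSegs sg i v) = (segA sg).set i v := by
  induction sg generalizing i with
  | nil => simp [segA, setSegs]
  | cons s t ih =>
    obtain ⟨A, G⟩ := s
    rw [setSegs, segA_cons]
    split_ifs with h
    · rw [segA_cons, List.set_append_left _ _ h]
    · rw [segA_cons, List.set_append_right _ _ (by simpa using h), ih]

lemma segB_setSegs (sg : List (List ℕ × List ℕ)) (i v : ℕ) : segB (setSegs sg i v) = segB sg := by
  induction sg generalizing i with
  | nil => simp [segB, setSegs]
  | cons s t ih =>
    obtain ⟨A, G⟩ := s
    rw [setSegs]
    split_ifs with h <;> simp [segB_cons, ih]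

lemma length_setSegs (sg : List (List ℕ × List ℕ)) (i v : ℕ) :
    (setSegs sg i v).length = sg.length := by
  induction sg generalizing i with
  | nil => simp [setSegs]
  | cons s t ih =>
    obtain ⟨A, G⟩ := s
    rw [setSegs]
    split_ifs with h <;> simp [ih]

lemma ne_nil_setSegs (sg : List (List ℕ × List ℕ)) (i v : ℕ)
    (hall : ∀ s ∈ sg, s.1 ≠ [] ∧ s.2 ≠ []) :
    ∀ s ∈ setSegs sg i v, s.1 ≠ [] ∧ s.2 ≠ [] := by
  induction sg generalizing i with
  | nil => simp [setSegs]
  | cons s t ih =>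
    obtain ⟨A, G⟩ := s
    have h1 := hall (A, G) (by simp)
    have h2 : ∀ s ∈ t, s.1 ≠ [] ∧ s.2 ≠ [] := fun s hs => hall s (by simp [hs])
    rw [setSegs]
    split_ifs with h
    · intro s hs
      rcases List.mem_cons.1 hs with rfl | hs
      · simpa using h1
      · exact h2 s hs
    · intro s hs
      rcases List.mem_cons.1 hs with rfl | hs
      · exact h1
      · exact ih _ h2 s hs

lemma sum_set_nat (a : List ℕ) (i v w : ℕ) (h : a[i]? = some v) :
    (a.set i w).sum + v = a.sum + w := by
  have := sum_take_set a i a.length v w h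
  have hi := (List.getElem?_eq_some_iff.1 h).1
  rw [if_pos hi, if_pos hi, List.take_of_length_le (by simp), List.take_of_length_le le_rfl] at this
  exact this

lemma segVal_inc (sg : List (List ℕ × List ℕ)) (i : ℕ) (h : (segA sg)[i]? = some 1) :
    segVal sg + (if goodAt sg i then 1 else 0) ≤ segVal (setSegs sg i 2) := by
  induction sg generalizing i with
  | nil => simp [segA] at h
  | cons s t ih =>
    obtain ⟨A, G⟩ := s
    rw [segA_cons] at h
    simp only [setSegs, goodAt, cls]
    split_ifs with h1 h2 h2
    · rw [List.getElem?_append_left h1] at h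
      have := sum_set_nat A i 1 2 h
      obtain ⟨b, rfl⟩ := List.length_eq_one_iff.1 h2.1
      have hi : i = 0 := by simpa using h1
      subst hi
      have hb : b = 1 := by simpa using h
      subst hb
      simp only [segVal_cons]
      simp at this h2 ⊢
      omega
    · rw [List.getElem?_append_left h1] at h
      have := sum_set_nat A i 1 2 h
      simp only [segVal_cons]; omega
    all_goals
      rw [List.getElem?_append_right (by simpa using h1)] at h
      have := ih _ h
      simp only [segVal_cons]
      first
        | rw [if_pos (show goodAt t (i - A.length) from h2)] at this
        | rw [if_neg (show ¬ goodAt t (i - A.length) from h2)] at this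
      simp only at this ⊢
      omega

lemma segVal_dec (sg : List (List ℕ × List ℕ)) (i : ℕ) (h : (segA sg)[i]? = some 5) :
    segVal sg ≤ segVal (setSegs sg i 4) + (if badAt sg i then 1 else 0) := by
  induction sg generalizing i with
  | nil => simp [segA] at h
  | cons s t ih =>
    obtain ⟨A, G⟩ := s
    rw [segA_cons] at h
    simp only [setSegs, badAt, cls]
    split_ifs with h1 h2 h2
    · rw [List.getElem?_append_left h1] at h
      have := sum_set_nat A i 5 4 h
      simp only [segVal_cons]; omega
    · rw [List.getElem?_append_left h1] at h
      have := sum_set_nat A i 5 4 h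
      push Not at h2
      obtain ⟨b, rfl⟩ := List.length_eq_one_iff.1 h2.1
      have hi : i = 0 := by simpa using h1
      subst hi
      have hb : b = 5 := by simpa using h
      subst hb
      simp only [segVal_cons]
      simp at this h2 ⊢
      omega
    all_goals
      rw [List.getElem?_append_right (by simpa using h1)] at h
      have := ih _ h
      simp only [segVal_cons]
      first
        | rw [if_pos (show badAt t (i - A.length) from h2)] at this
        | rw [if_neg (show ¬ badAt t (i - A.length) from h2)] at this
      simp only at this ⊢
      omega

/-- The number of ones of a string. -/
def onesOf {n : ℕ} (x : Fin n → Bool) : ℕ := (List.ofFn x).count true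

lemma length_gapsOf {n : ℕ} (x : Fin n → Bool) : (gapsOf x).length = onesOf x + 1 := length_gaps _

lemma sum_gapsOf {n : ℕ} (x : Fin n → Bool) : (gapsOf x).sum + (gapsOf x).length = n + 1 := by
  rw [gapsOf, sum_add_length_gaps]; simp

lemma segVal_le (sg : List (List ℕ × List ℕ)) : segVal sg ≤ (segA sg).sum := by
  induction sg with
  | nil => simp [segVal]
  | cons s t ih => rw [segVal_cons, segA_cons, List.sum_append]; omega

lemma ofGaps_gapsOf {n : ℕ} (x : Fin n → Bool) : ofGaps (gapsOf x) = List.ofFn x := ofGaps_gaps _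

/-- The effect of one step of the chain on the optimal score, read off from a segmentation
which encodes an optimal alignment. -/
theorem exists_optimal_seg {n : ℕ} (S : ℝ) (x y : Fin n → Bool) :
    ∃ sg, IsSeg sg (gapsOf x) (gapsOf y) ∧
      S * (min (onesOf x) (onesOf y) : ℕ) ≤ n + S * ((sg.length : ℝ) - 1) ∧
      ∀ i ∈ idx (gapsOf x) 5, ∀ k ∈ idx (gapsOf x) 1,
        optScore S n x y + (if goodAt sg k then 1 else 0) - (if badAt sg i then 1 else 0) ≤
          optScore S n (modifyStr x (pos (gapsOf x) i) (pos (gapsOf x) k)) y := by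
  obtain ⟨u, v, hu, hv, hl, e⟩ := ach_optScore S x y
  obtain ⟨sg, hsg, hs⟩ := exists_seg S u v _ _ hu hv hl
  rw [← e] at hs
  refine ⟨sg, hsg, ?_, ?_⟩
  · have h1 : (min (onesOf x) (onesOf y) : ℕ) * letterScore S true true ≤ optScore S n x y :=
      le_optScore (ach_replicate S true _ _ _ (min_le_left _ _) (min_le_right _ _))
    have h2 : letterScore S true true = S := by simp [letterScore]
    have h3 : segVal sg ≤ n := by
      have h4 := segVal_le sg
      rw [hsg.2.2.1] at h4
      have h5 := sum_gapsOf x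
      have h6 := length_gapsOf x
      rw [gapsOf] at h5 h6
      omega
    have h3' : (segVal sg : ℝ) ≤ n := by exact_mod_cast h3
    rw [h2] at h1
    linarith
  · intro i hi k hk
    have hne : i ≠ k := by
      rintro rfl
      rw [mem_idx] at hi hk
      rw [hi] at hk; simp at hk
    obtain ⟨h1, h2, h3, h4⟩ := hsg
    set sg1 := setSegs sg i 4 with hsg1
    set sg2 := setSegs sg1 k 2 with hsg2
    have hA1 : segA sg1 = (gapsOf x).set i 4 := by rw [hsg1, segA_setSegs, h3]; rfl
    have hA2 : segA sg2 = ((gapsOf x).set i 4).set k 2 := by rw [hsg2, segA_setSegs, hA1]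
    have hB2 : segB sg2 = gapsOf y := by rw [hsg2, segB_setSegs, hsg1, segB_setSegs, h4]; rfl
    have hl2 : sg2.length = sg.length := by rw [hsg2, length_setSegs, hsg1, length_setSegs]
    have hall2 : ∀ s ∈ sg2, s.1 ≠ [] ∧ s.2 ≠ [] := ne_nil_setSegs _ _ _ (ne_nil_setSegs _ _ _ h2)
    have hn2 : sg2 ≠ [] := by
      rw [← List.length_pos_iff, hl2, List.length_pos_iff]; exact h1
    have hach := ach_seg S sg2 hn2 hall2
    rw [hA2, hB2, ← gapsOf_modifyStr x i k hi hk, ofGaps_gapsOf, ofGaps_gapsOf] at hach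
    have h5 := le_optScore hach
    have h6 : segVal sg ≤ segVal sg1 + (if badAt sg i then 1 else 0) := by
      apply segVal_dec
      rw [h3]; exact mem_idx.1 hi
    have h7 : segVal sg1 + (if goodAt sg k then 1 else 0) ≤ segVal sg2 := by
      have := segVal_inc sg1 k (by rw [hA1, List.getElem?_set_ne hne]; exact mem_idx.1 hk)
      have e : goodAt sg1 k = goodAt sg k := by simp only [goodAt, hsg1, cls_setSegs]
      rwa [if_congr (iff_of_eq e) rfl rfl] at this
    have h8 : (segVal sg : ℝ) ≤ segVal sg1 + (if badAt sg i then 1 else 0) := by exact_mod_cast h6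
    have h9 : (segVal sg1 : ℝ) + (if goodAt sg k then 1 else 0) ≤ segVal sg2 := by exact_mod_cast h7
    rw [hl2] at h5
    linarith

/-! ### A transfer weight for segmentations -/

/-- The total weight of all ways to match some entries of `a` with some entries of `g` in
increasing order, where a matched pair `(p, q)` has weight `w p q` and an unmatched entry has
weight `δ`. -/
def tw (w : ℕ → ℕ → ℝ) (δ : ℝ) : List ℕ → List ℕ → ℝ
  | [], gs => δ ^ gs.length
  | _ :: as, [] => δ ^ (as.length + 1)
  | a :: as, g :: gs => w a g * tw w δ as gs + δ * tw w δ (a :: as) gs + δ * tw w δ as (g :: gs)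
termination_by a g => a.length + g.length

section
variable {w : ℕ → ℕ → ℝ} {δ : ℝ}

lemma tw_nil (g : List ℕ) : tw w δ [] g = δ ^ g.length := by rw [tw]

lemma tw_cons_nil (a : ℕ) (as : List ℕ) : tw w δ (a :: as) [] = δ ^ (as.length + 1) := by rw [tw]

lemma tw_cons (a : ℕ) (as : List ℕ) (g : ℕ) (gs : List ℕ) : tw w δ (a :: as) (g :: gs) =
    w a g * tw w δ as gs + δ * tw w δ (a :: as) gs + δ * tw w δ as (g :: gs) := by rw [tw]

lemma tw_nonneg (hw : ∀ p q, 0 ≤ w p q) (hδ : 0 ≤ δ) : ∀ a g : List ℕ, 0 ≤ tw w δ a g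
  | [], g => by rw [tw_nil]; positivity
  | a :: as, [] => by rw [tw_cons_nil]; positivity
  | a :: as, g :: gs => by
    rw [tw_cons]
    have h1 := tw_nonneg hw hδ as gs
    have h2 := tw_nonneg hw hδ (a :: as) gs
    have h3 := tw_nonneg hw hδ as (g :: gs)
    have := hw a g
    positivity
termination_by a g => a.length + g.length

lemma tw_skip_left (hw : ∀ p q, 0 ≤ w p q) (hδ : 0 ≤ δ) (a : ℕ) (as g : List ℕ) :
    δ * tw w δ as g ≤ tw w δ (a :: as) g := by
  cases g with
  | nil =>
    rw [tw_cons_nil]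
    cases as with
    | nil => simp [tw_nil]
    | cons b bs => rw [tw_cons_nil, List.length_cons]; apply le_of_eq; ring
  | cons g gs =>
    rw [tw_cons]
    have h1 := mul_nonneg (hw a g) (tw_nonneg hw hδ as gs)
    have h2 := mul_nonneg hδ (tw_nonneg hw hδ (a :: as) gs)
    linarith

lemma tw_skip_right (hw : ∀ p q, 0 ≤ w p q) (hδ : 0 ≤ δ) (a : List ℕ) (g : ℕ) (gs : List ℕ) :
    δ * tw w δ a gs ≤ tw w δ a (g :: gs) := by
  cases a with
  | nil => rw [tw_nil, tw_nil, List.length_cons]; apply le_of_eq; ring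
  | cons a as =>
    rw [tw_cons]
    have h1 := mul_nonneg (hw a g) (tw_nonneg hw hδ as gs)
    have h2 := mul_nonneg hδ (tw_nonneg hw hδ as (g :: gs))
    linarith

lemma tw_skip (hw : ∀ p q, 0 ≤ w p q) (hδ : 0 ≤ δ) (A G a g : List ℕ) :
    δ ^ (A.length + G.length) * tw w δ a g ≤ tw w δ (A ++ a) (G ++ g) := by
  induction A with
  | nil =>
    induction G with
    | nil => simp
    | cons q G ih =>
      refine le_trans ?_ (tw_skip_right hw hδ _ q _)
      refine le_trans (le_of_eq ?_) (mul_le_mul_of_nonneg_left ih hδ)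
      simp only [List.length_cons]; ring
  | cons p A ih =>
    refine le_trans ?_ (tw_skip_left hw hδ p _ _)
    refine le_trans (le_of_eq ?_) (mul_le_mul_of_nonneg_left ih hδ)
    simp only [List.length_cons]; ring

lemma tw_segment (hw : ∀ p q, 0 ≤ w p q) (hδ : 0 ≤ δ) (A G a g : List ℕ) (p q : ℕ) :
    δ ^ (A.length + G.length) * (w p q * tw w δ a g) ≤
      tw w δ ((A ++ [p]) ++ a) ((G ++ [q]) ++ g) := by
  rw [List.append_assoc, List.append_assoc]
  refine le_trans ?_ (tw_skip hw hδ A G _ _)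
  apply mul_le_mul_of_nonneg_left _ (by positivity)
  simp only [List.singleton_append]
  rw [tw_cons]
  have h1 := mul_nonneg hδ (tw_nonneg hw hδ (p :: a) g)
  have h2 := mul_nonneg hδ (tw_nonneg hw hδ a (q :: g))
  linarith

end

/-- The number of entries of `a` and `g` beyond one entry of each per segment. -/
def segExc (sg : List (List ℕ × List ℕ)) : ℕ := (sg.map fun s => s.1.length + s.2.length - 2).sum

lemma segExc_eq (sg : List (List ℕ × List ℕ)) (hall : ∀ s ∈ sg, s.1 ≠ [] ∧ s.2 ≠ []) :
    segExc sg + 2 * sg.length = (segA sg).length + (segB sg).length := by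
  induction sg with
  | nil => simp [segExc, segA, segB]
  | cons s t ih =>
    have h1 := hall s (by simp)
    have h2 := ih fun s hs => hall s (by simp [hs])
    have h3 := List.length_pos_iff.2 h1.1
    have h4 := List.length_pos_iff.2 h1.2
    rw [segA_cons, segB_cons, segExc, List.map_cons, List.sum_cons, ← segExc]
    simp only [List.length_append, List.length_cons]
    omega

/-- The number of entries `v` whose segment satisfies `Q`, a condition on the number of entries
of the first component and the sum of the second. -/
def cnt (sg : List (List ℕ × List ℕ)) (v : ℕ) (Q : ℕ × ℕ → Prop) : ℕ :=
  ((idx (segA sg) v).filter fun i => Q (cls sg i)).card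

lemma cnt_nil (v : ℕ) (Q : ℕ × ℕ → Prop) : cnt [] v Q = 0 := by simp [cnt, segA, idx]

lemma cnt_cons (A G : List ℕ) (t : List (List ℕ × List ℕ)) (v : ℕ) (Q : ℕ × ℕ → Prop) :
    cnt ((A, G) :: t) v Q = (if Q (A.length, G.sum) then A.count v else 0) + cnt t v Q := by
  have h : ∀ sg, cnt sg v Q = ∑ i ∈ Finset.range (segA sg).length,
      if (segA sg)[i]? = some v ∧ Q (cls sg i) then 1 else 0 := by
    intro sg
    rw [cnt, idx, Finset.filter_filter, Finset.card_filter]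
  rw [h, h, segA_cons, List.length_append, Finset.sum_range_add]
  congr 1
  · have : ∀ i ∈ Finset.range A.length,
        (if (A ++ segA t)[i]? = some v ∧ Q (cls ((A, G) :: t) i) then 1 else 0) =
        if Q (A.length, G.sum) then (if A[i]? = some v then 1 else 0) else 0 := by
      intro i hi
      rw [Finset.mem_range] at hi
      rw [List.getElem?_append_left hi, cls, if_pos hi]
      by_cases h1 : A[i]? = some v <;> by_cases h2 : Q (A.length, G.sum) <;> simp [h1, h2]
    rw [Finset.sum_congr rfl this]
    split_ifs with hQ
    · rw [← card_idx, idx, Finset.card_filter]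
    · simp
  · apply Finset.sum_congr rfl
    intro i _
    have e : cls ((A, G) :: t) (A.length + i) = cls t i := by
      rw [cls, if_neg (by omega), Nat.add_sub_cancel_left]
    simp only [e, List.getElem?_append_right (Nat.le_add_right _ _), Nat.add_sub_cancel_left]

/-- The weight which penalizes matching a `1` with an entry at least `2`. -/
def w1 (p q : ℕ) : ℝ := if p = 1 ∧ 2 ≤ q then 1 / 2 else 1

/-- The weight which rewards matching a `5` with an entry at least `5`. -/
def w5 (p q : ℕ) : ℝ := if p = 5 ∧ 5 ≤ q then 2 else 1

lemma w1_nonneg (p q : ℕ) : 0 ≤ w1 p q := by unfold w1; split_ifs <;> norm_num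

lemma w5_nonneg (p q : ℕ) : 0 ≤ w5 p q := by unfold w5; split_ifs <;> norm_num

/-- The condition on a segment in `goodAt`. -/
def Qgood (c : ℕ × ℕ) : Prop := c.1 = 1 ∧ 2 ≤ c.2

/-- The condition on a segment in `badAt`. -/
def Qbad (c : ℕ × ℕ) : Prop := c.1 = 1 → 5 ≤ c.2

lemma w1_lower (A G : List ℕ) (p q : ℕ) :
    (1 / 2 : ℝ) ^ ((if Qgood ((A ++ [p]).length, (G ++ [q]).sum) then (A ++ [p]).count 1 else 0)
      + (A.length + G.length)) ≤ w1 p q := by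
  unfold w1
  split_ifs with h1 h2 h2
  · calc _ ≤ (1 / 2 : ℝ) ^ 1 := by
          apply pow_le_pow_of_le_one (by norm_num) (by norm_num)
          have : 0 < (A ++ [p]).count 1 := List.count_pos_iff.2 (by simp [h2.1])
          omega
      _ = 1 / 2 := by norm_num
  · exact pow_le_one₀ (by norm_num) (by norm_num)
  · calc _ ≤ (1 / 2 : ℝ) ^ 1 := by
          apply pow_le_pow_of_le_one (by norm_num) (by norm_num)
          rcases Nat.eq_zero_or_pos A.length with h | h
          · exfalso
            apply h1
            refine ⟨by simp [h], ?_⟩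
            simp; omega
          · omega
      _ = 1 / 2 := by norm_num
  · exact pow_le_one₀ (by norm_num) (by norm_num)

lemma w5_lower (A G : List ℕ) (p q : ℕ) :
    (2 : ℝ) ^ (if Qbad ((A ++ [p]).length, (G ++ [q]).sum) then (A ++ [p]).count 5 else 0) ≤
      w5 p q * 4 ^ (A.length + G.length) := by
  have h1 : (1 : ℝ) ≤ w5 p q := by unfold w5; split_ifs <;> norm_num
  have h4 : (1 : ℝ) ≤ 4 ^ (A.length + G.length) := one_le_pow₀ (by norm_num)
  have key : ∀ k, k ≤ 2 * (A.length + G.length) →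
      (2 : ℝ) ^ k ≤ w5 p q * 4 ^ (A.length + G.length) := by
    intro k hk
    calc (2 : ℝ) ^ k ≤ 2 ^ (2 * (A.length + G.length)) := pow_le_pow_right₀ (by norm_num) hk
      _ = 4 ^ (A.length + G.length) := by rw [pow_mul]; norm_num
      _ ≤ _ := le_mul_of_one_le_left (by positivity) h1
  split_ifs with h
  · have hc : (A ++ [p]).count 5 ≤ A.length + 1 := by
      simpa using List.count_le_length (a := 5) (l := A ++ [p])
    by_cases hA : A.length = 0
    · have hA' : A = [] := List.length_eq_zero_iff.1 hA
      subst hA'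
      by_cases hp : p = 5
      · subst hp
        by_cases hG : G.length = 0
        · have hG' : G = [] := List.length_eq_zero_iff.1 hG
          subst hG'
          have : 5 ≤ q := by simpa [Qbad] using h
          simp [w5, this]
        · apply key
          simp at hc ⊢
          omega
      · apply key
        simp [hp]
    · apply key; omega
  · simpa using one_le_mul_of_one_le_of_one_le h1 h4

lemma exists_last {A : List ℕ} (h : A ≠ []) : ∃ A' p, A = A' ++ [p] :=
  ⟨A.dropLast, A.getLast h, (List.dropLast_append_getLast h).symm⟩

/-- A segmentation contributes to the transfer weight the matching which pairs the last entries
of the two components of each segment and leaves `segExc sg` entries unmatched. -/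
lemma tw1_lower {δ : ℝ} (hδ : 0 ≤ δ) (sg : List (List ℕ × List ℕ))
    (hall : ∀ s ∈ sg, s.1 ≠ [] ∧ s.2 ≠ []) :
    δ ^ segExc sg * (1 / 2) ^ (cnt sg 1 Qgood + segExc sg) ≤ tw w1 δ (segA sg) (segB sg) := by
  induction sg with
  | nil => simp [segExc, segA, segB, tw_nil, cnt_nil]
  | cons s t ih =>
    obtain ⟨A, G⟩ := s
    obtain ⟨h1, h2⟩ := hall (A, G) (by simp)
    have ih := ih fun s hs => hall s (by simp [hs])
    obtain ⟨A, p, rfl⟩ := exists_last h1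
    obtain ⟨G, q, rfl⟩ := exists_last h2
    rw [segA_cons, segB_cons, cnt_cons]
    have e : segExc ((A ++ [p], G ++ [q]) :: t) = A.length + G.length + segExc t := by
      simp only [segExc, List.map_cons, List.sum_cons, List.length_append, List.length_singleton]
      omega
    refine le_trans ?_ (tw_segment w1_nonneg hδ A G _ _ p q)
    have h3 := w1_lower A G p q
    have h4 := mul_le_mul h3 ih (by positivity) (w1_nonneg p q)
    refine le_trans (le_of_eq ?_) (mul_le_mul_of_nonneg_left h4 (by positivity))
    rw [e]
    ring

/-- The analogue of `tw1_lower` for `w5`; the factor `4 ^ segExc sg` accounts for the segments with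
more than one entry in a component, in which the matched last entries carry no information. -/
lemma tw5_lower {δ : ℝ} (hδ : 0 ≤ δ) (sg : List (List ℕ × List ℕ))
    (hall : ∀ s ∈ sg, s.1 ≠ [] ∧ s.2 ≠ []) :
    δ ^ segExc sg * 2 ^ (cnt sg 5 Qbad) ≤
      tw w5 δ (segA sg) (segB sg) * 4 ^ segExc sg := by
  induction sg with
  | nil => simp [segExc, segA, segB, tw_nil, cnt_nil]
  | cons s t ih =>
    obtain ⟨A, G⟩ := s
    obtain ⟨h1, h2⟩ := hall (A, G) (by simp)
    have ih := ih fun s hs => hall s (by simp [hs])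
    obtain ⟨A, p, rfl⟩ := exists_last h1
    obtain ⟨G, q, rfl⟩ := exists_last h2
    rw [segA_cons, segB_cons, cnt_cons]
    have e : segExc ((A ++ [p], G ++ [q]) :: t) = A.length + G.length + segExc t := by
      simp only [segExc, List.map_cons, List.sum_cons, List.length_append, List.length_singleton]
      omega
    refine le_trans ?_ (mul_le_mul_of_nonneg_right (tw_segment w5_nonneg hδ A G _ _ p q)
      (by positivity))
    have h3 := w5_lower A G p q
    have h4 := mul_le_mul h3 ih (by positivity)
      (mul_nonneg (w5_nonneg p q) (by positivity))
    have h5 : (0 : ℝ) ≤ δ ^ (A.length + G.length) := by positivity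
    have h6 := mul_le_mul_of_nonneg_left h4 h5
    rw [e]
    refine le_trans (le_of_eq ?_) (h6.trans (le_of_eq ?_))
    · ring
    · ring

/-! ### The average transfer weight -/

/-- The average of `f` over `K` independent gaps with law `g ↦ 2⁻⁽ᵍ⁺¹⁾`, truncated to `g < B`. -/
def avg (B : ℕ) : ℕ → (List ℕ → ℝ) → ℝ
  | 0, f => f []
  | K + 1, f => ∑ g ∈ Finset.range B, (1 / 2 : ℝ) ^ (g + 1) * avg B K fun l => f (g :: l)

lemma avg_mono (B K : ℕ) {f f' : List ℕ → ℝ} (h : ∀ l, f l ≤ f' l) : avg B K f ≤ avg B K f' := by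
  induction K generalizing f f' with
  | zero => exact h _
  | succ K ih =>
    simp only [avg]
    exact Finset.sum_le_sum fun g _ => mul_le_mul_of_nonneg_left (ih fun l => h _) (by positivity)

lemma avg_add (B K : ℕ) (f f' : List ℕ → ℝ) :
    avg B K (fun l => f l + f' l) = avg B K f + avg B K f' := by
  induction K generalizing f f' with
  | zero => rfl
  | succ K ih => simp only [avg, ih, mul_add, Finset.sum_add_distrib]

lemma avg_mul (B K : ℕ) (c : ℝ) (f : List ℕ → ℝ) :
    avg B K (fun l => c * f l) = c * avg B K f := by
  induction K generalizing f with
  | zero => rfl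
  | succ K ih =>
    simp only [avg, ih, Finset.mul_sum]
    exact Finset.sum_congr rfl fun g _ => by ring

lemma avg_nonneg (B K : ℕ) {f : List ℕ → ℝ} (h : ∀ l, 0 ≤ f l) : 0 ≤ avg B K f := by
  induction K generalizing f with
  | zero => exact h _
  | succ K ih =>
    simp only [avg]
    exact Finset.sum_nonneg fun g _ => mul_nonneg (by positivity) (ih fun l => h _)

lemma sum_half_le_one (B : ℕ) : ∑ g ∈ Finset.range B, (1 / 2 : ℝ) ^ (g + 1) ≤ 1 := by
  have : ∑ g ∈ Finset.range B, (1 / 2 : ℝ) ^ (g + 1) = 1 - (1 / 2) ^ B := by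
    induction B with
    | zero => simp
    | succ B ih => rw [Finset.sum_range_succ, ih]; ring
  rw [this]
  have : (0 : ℝ) ≤ (1 / 2) ^ B := by positivity
  linarith

lemma avg_pow_length (B K : ℕ) {δ : ℝ} (h0 : 0 ≤ δ) (h1 : δ ≤ 1) (c : ℝ) (hc : 0 ≤ c) :
    avg B K (fun l => c * δ ^ l.length) ≤ c := by
  induction K generalizing c with
  | zero => simp [avg]
  | succ K ih =>
    simp only [avg, List.length_cons]
    calc _ ≤ ∑ g ∈ Finset.range B, (1 / 2 : ℝ) ^ (g + 1) * c := by
          apply Finset.sum_le_sum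
          intro g _
          apply mul_le_mul_of_nonneg_left _ (by positivity)
          have := ih (c * δ) (by positivity)
          simp only [pow_succ']
          simp only [← mul_assoc]
          exact this.trans (mul_le_of_le_one_right hc h1)
      _ ≤ c := by
          rw [← Finset.sum_mul]
          exact mul_le_of_le_one_left hc (sum_half_le_one B)

/-- The recursion of `tw` is averaged over `g`; the growth rate `1 + 2δ` absorbs the unmatched
entries. -/
lemma avg_tw {w : ℕ → ℕ → ℝ} {δ : ℝ} (hw : ∀ p q, 0 ≤ w p q) (h0 : 0 ≤ δ) (h1 : δ ≤ 1 / 2)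
    (ρ : ℕ → ℝ) (hρ : ∀ a, 1 / 2 ≤ ρ a) (B : ℕ)
    (hB : ∀ a, ∑ g ∈ Finset.range B, (1 / 2 : ℝ) ^ (g + 1) * w a g ≤ ρ a) :
    ∀ (a : List ℕ) (K : ℕ), avg B K (tw w δ a) ≤ (1 + 2 * δ) ^ (a.length + K) * (a.map ρ).prod
  | [], K => by
    have h := avg_pow_length B K h0 (by linarith) 1 zero_le_one
    simp only [one_mul] at h
    have e : tw w δ [] = fun l => δ ^ l.length := funext fun l => tw_nil l
    rw [e]
    refine h.trans ?_
    simpa using one_le_pow₀ (by linarith : 1 ≤ 1 + 2 * δ)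
  | a :: as, 0 => by
    simp only [avg, tw_cons_nil]
    rw [List.map_cons, List.prod_cons, List.length_cons, add_zero]
    have e1 : δ ^ (as.length + 1) ≤ ρ a * (as.map ρ).prod := by
      rw [pow_succ']
      have h2 : δ ≤ ρ a := h1.trans (hρ a)
      refine mul_le_mul h2 ?_ (by positivity) (by linarith)
      induction as with
      | nil => simp
      | cons b bs ih =>
        rw [List.length_cons, pow_succ', List.map_cons, List.prod_cons]
        exact mul_le_mul (h1.trans (hρ b)) ih (by positivity) (by linarith [hρ b])
    refine e1.trans (le_mul_of_one_le_left ?_ (one_le_pow₀ (by linarith)))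
    exact le_trans (by positivity) e1
  | a :: as, K + 1 => by
    have i1 := avg_tw hw h0 h1 ρ hρ B hB as K
    have i2 := avg_tw hw h0 h1 ρ hρ B hB (a :: as) K
    have i3 := avg_tw hw h0 h1 ρ hρ B hB as (K + 1)
    have e : avg B (K + 1) (tw w δ (a :: as)) =
        (∑ g ∈ Finset.range B, (1 / 2 : ℝ) ^ (g + 1) * w a g) * avg B K (tw w δ as) +
        (∑ g ∈ Finset.range B, (1 / 2 : ℝ) ^ (g + 1)) * (δ * avg B K (tw w δ (a :: as))) +
        δ * avg B (K + 1) (tw w δ as) := by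
      simp only [avg, tw_cons, avg_add, avg_mul, Finset.sum_mul, Finset.mul_sum,
        ← Finset.sum_add_distrib]
      exact Finset.sum_congr rfl fun g _ => by ring
    rw [e]
    set P := (as.map ρ).prod with hP
    have hP0 : 0 ≤ P := List.prod_nonneg (by simpa using fun b _ => by linarith [hρ b])
    have n1 : 0 ≤ avg B K (tw w δ as) := avg_nonneg _ _ (tw_nonneg hw h0 _)
    have n2 : 0 ≤ avg B K (tw w δ (a :: as)) := avg_nonneg _ _ (tw_nonneg hw h0 _)
    rw [List.map_cons, List.prod_cons, List.length_cons, ← hP] at i2 ⊢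
    set Q := (1 + 2 * δ) ^ (as.length + K) with hQ
    have hQ0 : 0 ≤ Q := by positivity
    have e2 : (1 + 2 * δ) ^ (as.length + 1 + K) = Q * (1 + 2 * δ) := by rw [hQ]; ring
    have e3 : (1 + 2 * δ) ^ (as.length + (K + 1)) = Q * (1 + 2 * δ) := by rw [hQ]; ring
    have e4 : (1 + 2 * δ) ^ (as.length + 1 + (K + 1)) = Q * (1 + 2 * δ) ^ 2 := by rw [hQ]; ring
    rw [e2] at i2
    rw [e3] at i3
    rw [e4]
    have hr := hρ a
    have j1 := mul_le_mul (hB a) i1 n1 (by linarith)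
    have j2 := mul_le_mul (sum_half_le_one B) (mul_le_mul_of_nonneg_left i2 h0)
      (mul_nonneg h0 n2) zero_le_one
    have j3 := mul_le_mul_of_nonneg_left i3 h0
    have hQP : 0 ≤ Q * P := mul_nonneg hQ0 hP0
    have final : ρ a * (Q * P) + 1 * (δ * (Q * (1 + 2 * δ) * (ρ a * P))) +
        δ * (Q * (1 + 2 * δ) * P) ≤ Q * (1 + 2 * δ) ^ 2 * (ρ a * P) := by
      have f1 : δ * (1 + 2 * δ) * 1 ≤ δ * (1 + 2 * δ) * (2 * ρ a) :=
        mul_le_mul_of_nonneg_left (by linarith) (by positivity)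
      have f2 : ρ a + δ * (1 + 2 * δ) * ρ a + δ * (1 + 2 * δ) ≤ (1 + 2 * δ) ^ 2 * ρ a := by
        nlinarith [mul_nonneg (mul_nonneg h0 (by linarith : 0 ≤ 1 - 2 * δ)) (by linarith : 0 ≤ ρ a)]
      nlinarith [mul_le_mul_of_nonneg_right f2 hQP]
    linarith
termination_by a K => a.length + K

lemma avg_succ_range (B K : ℕ) {f : List ℕ → ℝ} (h : ∀ l, 0 ≤ f l) : avg B K f ≤ avg (B + 1) K f := by
  induction K generalizing f with
  | zero => exact le_rfl
  | succ K ih =>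
    simp only [avg]
    rw [Finset.sum_range_succ]
    refine le_add_of_le_of_nonneg (Finset.sum_le_sum fun g _ => ?_) ?_
    · exact mul_le_mul_of_nonneg_left (ih fun l => h _) (by positivity)
    · exact mul_nonneg (by positivity) (avg_nonneg _ _ fun l => h _)

lemma sum_strings_cons {n : ℕ} (F : (Fin (n + 1) → Bool) → ℝ) :
    ∑ x, F x = ∑ x : Fin n → Bool, F (Fin.cons false x) + ∑ x : Fin n → Bool, F (Fin.cons true x) := by
  rw [← (Fin.consEquiv (fun _ : Fin (n + 1) => Bool)).sum_comp, Fintype.sum_prod_type]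
  simp only [Fintype.sum_bool]
  rw [add_comm]
  rfl

/-- A uniform string is dominated by independent geometric gaps. -/
lemma sum_gapsOf_le (n : ℕ) : ∀ (B : ℕ), n + 1 ≤ B → ∀ (f : List ℕ → ℝ), (∀ l, 0 ≤ f l) →
    ∑ y : Fin n → Bool, f (gapsOf y) ≤ 2 ^ (n + 1) * ∑ K ∈ Finset.range (n + 1), avg B (K + 1) f := by
  induction n with
  | zero =>
    intro B hB f hf
    simp only [avg, Finset.range_one, Finset.sum_singleton, zero_add, Fintype.sum_unique]
    have e : ∀ y : Fin 0 → Bool, gapsOf y = [0] := by simp [gapsOf, gaps]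
    rw [e]
    have := Finset.single_le_sum (f := fun g => (1 / 2 : ℝ) ^ (g + 1) * f [g]) (s := Finset.range B)
      (fun g _ => mul_nonneg (by positivity) (hf _)) (Finset.mem_range.2 hB)
    simp only [zero_add, pow_one] at this ⊢
    linarith
  | succ n ih =>
    intro B hB f hf
    obtain ⟨B, rfl⟩ := Nat.exists_eq_add_of_le' (show 1 ≤ B by omega)
    have hB' : n + 1 ≤ B := by omega
    rw [sum_strings_cons]
    let inc : List ℕ → List ℕ := fun l => (l.headD 0 + 1) :: l.tail
    have e1 : ∀ y : Fin n → Bool, gapsOf (Fin.cons false y : Fin (n + 1) → Bool) = inc (gapsOf y) := by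
      intro y
      obtain ⟨h, t, e⟩ := exists_gaps_cons (List.ofFn y)
      simp [gapsOf, gaps, inc, e]
    have e2 : ∀ y : Fin n → Bool, gapsOf (Fin.cons true y : Fin (n + 1) → Bool) = 0 :: gapsOf y := by
      intro y; simp [gapsOf, gaps]
    simp only [e1, e2]
    have i1 := ih B hB' (fun l => f (inc l)) fun l => hf _
    have i2 := ih (B + 1) (by omega) (fun l => f (0 :: l)) fun l => hf _
    have k1 : ∀ K, avg B (K + 1) (fun l => f (inc l)) ≤
        2 * ∑ g ∈ Finset.range B, (1 / 2 : ℝ) ^ (g + 1 + 1) * avg (B + 1) K fun l => f ((g + 1) :: l) := by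
      intro K
      simp only [avg, inc, List.headD_cons, List.tail_cons, Finset.mul_sum]
      apply Finset.sum_le_sum
      intro g _
      have := avg_succ_range B K (f := fun l => f ((g + 1) :: l)) fun l => hf _
      have := mul_le_mul_of_nonneg_left this (by positivity : (0 : ℝ) ≤ (1 / 2) ^ (g + 1))
      refine this.trans (le_of_eq ?_)
      ring
    have k2 : ∀ K, avg (B + 1) (K + 1) f =
        (∑ g ∈ Finset.range B, (1 / 2 : ℝ) ^ (g + 1 + 1) * avg (B + 1) K fun l => f ((g + 1) :: l)) +
        1 / 2 * avg (B + 1) K (fun l => f (0 :: l)) := by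
      intro K
      rw [avg, Finset.sum_range_succ']
      simp
    have e3 : ∑ K ∈ Finset.range (n + 1 + 1), avg (B + 1) (K + 1) f =
        ∑ K ∈ Finset.range (n + 1 + 1), (∑ g ∈ Finset.range B, (1 / 2 : ℝ) ^ (g + 1 + 1) *
          avg (B + 1) K fun l => f ((g + 1) :: l)) +
        1 / 2 * ∑ K ∈ Finset.range (n + 1 + 1), avg (B + 1) K (fun l => f (0 :: l)) := by
      rw [Finset.sum_congr rfl fun K _ => k2 K, Finset.sum_add_distrib, Finset.mul_sum]
    have l1 : ∑ K ∈ Finset.range (n + 1), avg B (K + 1) (fun l => f (inc l)) ≤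
        2 * ∑ K ∈ Finset.range (n + 1 + 1), (∑ g ∈ Finset.range B, (1 / 2 : ℝ) ^ (g + 1 + 1) *
          avg (B + 1) K fun l => f ((g + 1) :: l)) := by
      refine (Finset.sum_le_sum fun K _ => k1 K).trans ?_
      rw [← Finset.mul_sum, Finset.sum_range_succ _ (n + 1), mul_add]
      refine le_add_of_nonneg_right (mul_nonneg zero_le_two ?_)
      exact Finset.sum_nonneg fun g _ => mul_nonneg (by positivity) (avg_nonneg _ _ fun l => hf _)
    have l2 : ∑ K ∈ Finset.range (n + 1), avg (B + 1) (K + 1) (fun l => f (0 :: l)) ≤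
        ∑ K ∈ Finset.range (n + 1 + 1), avg (B + 1) K (fun l => f (0 :: l)) := by
      rw [Finset.sum_range_succ' _ (n + 1)]
      exact le_add_of_nonneg_right (avg_nonneg _ _ fun l => hf _)
    have hp : (0 : ℝ) ≤ 2 ^ (n + 1) := by positivity
    have m1 := mul_le_mul_of_nonneg_left l1 hp
    have m2 := mul_le_mul_of_nonneg_left l2 hp
    rw [e3]
    have e4 : (2 : ℝ) ^ (n + 1 + 1) = 2 * 2 ^ (n + 1) := by ring
    rw [e4]
    linarith

/-- Summing the transfer weight over all strings. -/
lemma sum_tw_le {w : ℕ → ℕ → ℝ} {δ : ℝ} (hw : ∀ p q, 0 ≤ w p q) (h0 : 0 ≤ δ) (h1 : δ ≤ 1 / 2)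
    (ρ : ℕ → ℝ) (hρ : ∀ a, 1 / 2 ≤ ρ a)
    (hB : ∀ B a, ∑ g ∈ Finset.range (B + 5), (1 / 2 : ℝ) ^ (g + 1) * w a g ≤ ρ a)
    {n : ℕ} (x : Fin n → Bool) :
    ∑ y : Fin n → Bool, tw w δ (gapsOf x) (gapsOf y) ≤
      2 ^ (n + 1) * ((n + 1) * ((1 + 2 * δ) ^ (2 * n + 2) * ((gapsOf x).map ρ).prod)) := by
  refine (sum_gapsOf_le n (n + 1 + 5) (by omega) _ (tw_nonneg hw h0 _)).trans ?_
  apply mul_le_mul_of_nonneg_left _ (by positivity)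
  have hP0 : 0 ≤ ((gapsOf x).map ρ).prod :=
    List.prod_nonneg (by simpa using fun b _ => by linarith [hρ b])
  have : ∀ K ∈ Finset.range (n + 1), avg (n + 1 + 5) (K + 1) (tw w δ (gapsOf x)) ≤
      (1 + 2 * δ) ^ (2 * n + 2) * ((gapsOf x).map ρ).prod := by
    intro K hK
    rw [Finset.mem_range] at hK
    refine (avg_tw hw h0 h1 ρ hρ _ (hB (n + 1)) _ _).trans ?_
    apply mul_le_mul_of_nonneg_right _ hP0
    apply pow_le_pow_right₀ (by linarith)
    have := sum_gapsOf x
    omega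
  refine (Finset.sum_le_sum this).trans ?_
  simp

lemma prod_map_ite (l : List ℕ) (v : ℕ) (r : ℝ) :
    (l.map fun a => if a = v then r else 1).prod = r ^ l.count v := by
  induction l with
  | nil => simp
  | cons b l ih =>
    rw [List.map_cons, List.prod_cons, ih, List.count_cons]
    by_cases h : b = v <;> simp [h, pow_succ, mul_comm]

lemma w1_avg (B a : ℕ) : ∑ g ∈ Finset.range (B + 5), (1 / 2 : ℝ) ^ (g + 1) * w1 a g ≤
    if a = 1 then 7 / 8 else 1 := by
  split_ifs with h
  · have : ∑ g ∈ Finset.range (B + 5), (1 / 2 : ℝ) ^ (g + 1) * w1 a g = 7 / 8 - (1 / 2) ^ (B + 6) := by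
      induction B with
      | zero => norm_num [Finset.sum_range_succ, w1, h]
      | succ B ih =>
        rw [show B + 1 + 5 = B + 5 + 1 by omega, Finset.sum_range_succ, ih, w1,
          if_pos ⟨h, by omega⟩]
        ring
    rw [this]
    have : (0 : ℝ) ≤ (1 / 2) ^ (B + 6) := by positivity
    linarith
  · simp only [w1, h, false_and, if_false, mul_one]
    exact sum_half_le_one _

lemma w5_avg (B a : ℕ) : ∑ g ∈ Finset.range (B + 5), (1 / 2 : ℝ) ^ (g + 1) * w5 a g ≤
    if a = 5 then 33 / 32 else 1 := by
  split_ifs with h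
  · have : ∑ g ∈ Finset.range (B + 5), (1 / 2 : ℝ) ^ (g + 1) * w5 a g = 33 / 32 - (1 / 2) ^ (B + 4) := by
      induction B with
      | zero => norm_num [Finset.sum_range_succ, w5, h]
      | succ B ih =>
        rw [show B + 1 + 5 = B + 5 + 1 by omega, Finset.sum_range_succ, ih, w5,
          if_pos ⟨h, by omega⟩]
        ring
    rw [this]
    have : (0 : ℝ) ≤ (1 / 2) ^ (B + 4) := by positivity
    linarith
  · simp only [w5, h, false_and, if_false, mul_one]
    exact sum_half_le_one _

lemma card_mul_le_sum {α : Type*} [Fintype α] (P : α → Prop) (f : α → ℝ) (t : ℝ)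
    (h0 : ∀ y, 0 ≤ f y) (h : ∀ y, P y → t ≤ f y) :
    ((Finset.univ.filter P).card : ℝ) * t ≤ ∑ y, f y := by
  rw [← nsmul_eq_mul]
  exact (Finset.card_nsmul_le_sum _ _ _ fun y hy => h y (Finset.mem_filter.1 hy).2).trans
    (Finset.sum_le_sum_of_subset_of_nonneg (Finset.subset_univ _) fun y _ _ => h0 y)

/-- There are few strings `y` for which some segmentation with small excess has few entries `1`
in position to gain. -/
lemma card_few_good {n : ℕ} (x : Fin n → Bool) {δ : ℝ} (h0 : 0 < δ) (h1 : δ ≤ 1 / 2) (d c : ℕ) :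
    ((Finset.univ.filter fun y : Fin n → Bool => ∃ sg, IsSeg sg (gapsOf x) (gapsOf y) ∧
      segExc sg ≤ d ∧ cnt sg 1 Qgood ≤ c).card : ℝ) * (δ ^ d * (1 / 2) ^ (c + d)) ≤
      2 ^ (n + 1) * ((n + 1) * ((1 + 2 * δ) ^ (2 * n + 2) * (7 / 8) ^ (numBlocks x 1))) := by
  have h := sum_tw_le w1_nonneg h0.le h1 (fun a => if a = 1 then 7 / 8 else 1)
    (fun a => by split_ifs <;> norm_num) w1_avg x
  rw [prod_map_ite, ← numBlocks_eq x 1 one_pos] at h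
  refine le_trans ?_ h
  refine card_mul_le_sum _ _ _ (fun y => tw_nonneg w1_nonneg h0.le _ _) ?_
  rintro y ⟨sg, ⟨_, hall, hA, hB⟩, hd, hc⟩
  have := tw1_lower h0.le sg hall
  rw [hA, hB] at this
  refine le_trans (mul_le_mul ?_ ?_ (by positivity) (by positivity)) this
  · exact pow_le_pow_of_le_one h0.le (by linarith) hd
  · exact pow_le_pow_of_le_one (by norm_num) (by norm_num) (by omega)

/-- There are few strings `y` for which some segmentation with small excess has many entries `5`
in position to lose. -/
lemma card_many_bad {n : ℕ} (x : Fin n → Bool) {δ : ℝ} (h0 : 0 < δ) (h1 : δ ≤ 1 / 2) (d c : ℕ) :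
    ((Finset.univ.filter fun y : Fin n → Bool => ∃ sg, IsSeg sg (gapsOf x) (gapsOf y) ∧
      segExc sg ≤ d ∧ c ≤ cnt sg 5 Qbad).card : ℝ) * ((δ / 4) ^ d * 2 ^ c) ≤
      2 ^ (n + 1) * ((n + 1) * ((1 + 2 * δ) ^ (2 * n + 2) * (33 / 32) ^ (numBlocks x 5))) := by
  have h := sum_tw_le w5_nonneg h0.le h1 (fun a => if a = 5 then 33 / 32 else 1)
    (fun a => by split_ifs <;> norm_num) w5_avg x
  rw [prod_map_ite, ← numBlocks_eq x 5 (by norm_num)] at h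
  refine le_trans ?_ h
  refine card_mul_le_sum _ _ _ (fun y => tw_nonneg w5_nonneg h0.le _ _) ?_
  rintro y ⟨sg, ⟨_, hall, hA, hB⟩, hd, hc⟩
  have := tw5_lower h0.le sg hall
  rw [hA, hB] at this
  have h4 : (0 : ℝ) < 4 ^ segExc sg := by positivity
  have h5 : (δ / 4) ^ segExc sg * 2 ^ (cnt sg 5 Qbad) ≤ tw w5 δ (gapsOf x) (gapsOf y) := by
    rw [div_pow, div_mul_eq_mul_div, div_le_iff₀ h4]
    exact this
  refine le_trans (mul_le_mul ?_ ?_ (by positivity) (by positivity)) h5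
  · exact pow_le_pow_of_le_one (by positivity) (by linarith) hd
  · exact pow_le_pow_right₀ (by norm_num) hc

/-! ### The drift of the chain -/

lemma sum_transProb {n : ℕ} (x : Fin n → Bool) (h5 : 0 < numBlocks x 5) (h1 : 0 < numBlocks x 1)
    (F : (Fin n → Bool) → ℝ) :
    ∑ z, transProb x z * F z = (∑ i ∈ idx (gapsOf x) 5, ∑ k ∈ idx (gapsOf x) 1,
      F (modifyStr x (pos (gapsOf x) i) (pos (gapsOf x) k))) / (numBlocks x 5 * numBlocks x 1) := by
  have hc : (starts x 5).Nonempty ∧ (starts x 1).Nonempty :=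
    ⟨Finset.card_pos.1 h5, Finset.card_pos.1 h1⟩
  have e : ∀ z, transProb x z * F z =
      (∑ pq ∈ (starts x 5) ×ˢ (starts x 1), if modifyStr x pq.1 pq.2 = z then F z else 0) /
        (numBlocks x 5 * numBlocks x 1) := by
    intro z
    rw [transProb, if_pos hc, pairCount, ← Finset.sum_filter, Finset.sum_const, nsmul_eq_mul]
    rw [div_mul_eq_mul_div]
    rfl
  rw [Finset.sum_congr rfl fun z _ => e z, ← Finset.sum_div, Finset.sum_comm]
  congr 1
  simp only [Finset.sum_ite_eq, Finset.mem_univ, if_true]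
  rw [Finset.sum_product, sum_starts x 5 (by norm_num)
    (fun p => ∑ q ∈ starts x 1, F (modifyStr x p q))]
  exact Finset.sum_congr rfl fun i _ => sum_starts x 1 one_pos _

/-- The exponential moment parameter, with `exp lam = 1.1`. -/
def lam : ℝ := Real.log 1.1

lemma exp_lam : Real.exp lam = 1.1 := Real.exp_log (by norm_num)

lemma exp_neg_lam : Real.exp (-lam) = 10 / 11 := by rw [Real.exp_neg, exp_lam]; norm_num

lemma lam_pos : 0 < lam := Real.log_pos (by norm_num)

/-- From the state `x`, one step of the chain increases the score against `y` on (exponential)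
average. -/
def goodPair (S : ℝ) {n : ℕ} (x y : Fin n → Bool) : Prop :=
  ∑ z, transProb x z * Real.exp (-lam * (optScore S n z y - optScore S n x y)) ≤ 0.997

lemma sum_exp_ite (s : Finset ℕ) (P : ℕ → Prop) (c : ℝ) :
    ∑ i ∈ s, Real.exp (if P i then c else 0) =
      s.card + (s.filter P).card * (Real.exp c - 1) := by
  have : ∀ i ∈ s, Real.exp (if P i then c else 0) = 1 + if P i then Real.exp c - 1 else 0 := by
    intro i _; split_ifs <;> simp
  rw [Finset.sum_congr rfl this, Finset.sum_add_distrib, ← Finset.sum_filter]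
  simp only [Finset.sum_const, nsmul_eq_mul, mul_one]

/-- If at least 11% of the blocks of length `1` are in position to gain and at most 7% of the
blocks of length `5` in position to lose, the score has an upward drift. -/
lemma goodPair_of_cnt {n : ℕ} (S : ℝ) (x y : Fin n → Bool) (h5 : 0 < numBlocks x 5)
    (h1 : 0 < numBlocks x 1) (sg : List (List ℕ × List ℕ)) (hA : segA sg = gapsOf x)
    (hsg : ∀ i ∈ idx (gapsOf x) 5, ∀ k ∈ idx (gapsOf x) 1,
        optScore S n x y + (if goodAt sg k then 1 else 0) - (if badAt sg i then 1 else 0) ≤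
          optScore S n (modifyStr x (pos (gapsOf x) i) (pos (gapsOf x) k)) y)
    (hg : 0.11 * (numBlocks x 1 : ℝ) ≤ cnt sg 1 Qgood)
    (hb : (cnt sg 5 Qbad : ℝ) ≤ 0.07 * (numBlocks x 5 : ℝ)) : goodPair S x y := by
  rw [goodPair, sum_transProb x h5 h1]
  have hp5 : (0 : ℝ) < numBlocks x 5 := by exact_mod_cast h5
  have hp1 : (0 : ℝ) < numBlocks x 1 := by exact_mod_cast h1
  rw [div_le_iff₀ (by positivity)]
  calc _ ≤ ∑ i ∈ idx (gapsOf x) 5, ∑ k ∈ idx (gapsOf x) 1,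
        Real.exp (if badAt sg i then lam else 0) * Real.exp (if goodAt sg k then -lam else 0) := by
        apply Finset.sum_le_sum; intro i hi
        apply Finset.sum_le_sum; intro k hk
        rw [← Real.exp_add, Real.exp_le_exp]
        have h := hsg i hi k hk
        have hl := lam_pos
        split_ifs at h ⊢ <;> nlinarith
    _ = (∑ i ∈ idx (gapsOf x) 5, Real.exp (if badAt sg i then lam else 0)) *
        ∑ k ∈ idx (gapsOf x) 1, Real.exp (if goodAt sg k then -lam else 0) := by
        rw [Finset.sum_mul_sum]
    _ = (numBlocks x 5 + cnt sg 5 Qbad * 0.1) * (numBlocks x 1 - cnt sg 1 Qgood * (1 / 11)) := by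
        rw [sum_exp_ite, sum_exp_ite, exp_lam, exp_neg_lam, card_idx, card_idx,
          ← numBlocks_eq x 5 (by norm_num), ← numBlocks_eq x 1 one_pos]
        have e5 : ((idx (gapsOf x) 5).filter fun i => badAt sg i).card = cnt sg 5 Qbad := by
          rw [cnt, hA]; rfl
        have e1 : ((idx (gapsOf x) 1).filter fun i => goodAt sg i).card = cnt sg 1 Qgood := by
          rw [cnt, hA]; rfl
        rw [e5, e1]
        norm_num
        left; ring
    _ ≤ (numBlocks x 5 * 1.007) * (numBlocks x 1 * 0.99) := by
        apply mul_le_mul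
        · linarith
        · linarith
        · have : cnt sg 1 Qgood ≤ numBlocks x 1 := by
            rw [cnt, hA, numBlocks_eq x 1 one_pos, ← card_idx]
            exact Finset.card_filter_le _ _
          have : (cnt sg 1 Qgood : ℝ) ≤ numBlocks x 1 := by exact_mod_cast this
          linarith
        · positivity
    _ ≤ _ := by nlinarith [mul_pos hp5 hp1]

/-- The number of ones of `x` differs from `n / 2` by at most `ε n`. -/
def balanced (ε : ℝ) {n : ℕ} (x : Fin n → Bool) : Prop := |(onesOf x : ℝ) - n / 2| ≤ ε * n

/-- For large `S` an optimal alignment matches almost all ones, so that almost all segments consist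
of one gap of each string. -/
lemma segExc_le {n : ℕ} {S ε : ℝ} (hε : 0 < ε) (hS : 1 / ε ≤ S) {x y : Fin n → Bool}
    (hx : balanced ε x) (hy : balanced ε y) {sg : List (List ℕ × List ℕ)}
    (hsg : IsSeg sg (gapsOf x) (gapsOf y))
    (h : S * (min (onesOf x) (onesOf y) : ℕ) ≤ n + S * ((sg.length : ℝ) - 1)) :
    (segExc sg : ℝ) ≤ 4 * ε * n := by
  have hS0 : 0 < S := lt_of_lt_of_le (by positivity) hS
  have h1 := segExc_eq sg hsg.2.1
  rw [hsg.2.2.1, hsg.2.2.2, length_gapsOf, length_gapsOf] at h1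
  have h1' : (segExc sg : ℝ) + 2 * sg.length = (onesOf x + 1) + (onesOf y + 1) := by exact_mod_cast h1
  have h2 : ((min (onesOf x) (onesOf y) : ℕ) : ℝ) ≤ ε * n + (sg.length - 1) := by
    have hn : (0 : ℝ) ≤ n := Nat.cast_nonneg n
    have : 1 ≤ S * ε := by rwa [div_le_iff₀ hε] at hS
    have h3 : S * (min (onesOf x) (onesOf y) : ℕ) ≤ S * (ε * n + (sg.length - 1)) := by nlinarith
    exact le_of_mul_le_mul_left h3 hS0
  rw [balanced, abs_le] at hx hy
  rcases le_total (onesOf x) (onesOf y) with h3 | h3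
  · rw [min_eq_left h3] at h2
    linarith [hx.1, hx.2, hy.1, hy.2]
  · rw [min_eq_right h3] at h2
    linarith [hx.1, hx.2, hy.1, hy.2]

lemma half_pow_ge (c : ℕ) (N : ℝ) (h : (c : ℝ) ≤ 0.11 * N) (_ : 0 ≤ N) :
    Real.exp (-(0.08 * N)) ≤ (1 / 2 : ℝ) ^ c := by
  have e : (1 / 2 : ℝ) = Real.exp (-Real.log 2) := by
    rw [Real.exp_neg, Real.exp_log (by norm_num)]; norm_num
  rw [e, ← Real.exp_nat_mul, Real.exp_le_exp]
  have := Real.log_two_lt_d9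
  have := Real.log_two_gt_d9
  nlinarith

lemma two_pow_ge (c : ℕ) (N : ℝ) (h : 0.07 * N ≤ (c : ℝ)) (_ : 0 ≤ N) :
    Real.exp (0.045 * N) ≤ (2 : ℝ) ^ c := by
  have e : (2 : ℝ) = Real.exp (Real.log 2) := by rw [Real.exp_log (by norm_num)]
  rw [e, ← Real.exp_nat_mul, Real.exp_le_exp]
  have := Real.log_two_gt_d9
  nlinarith

lemma pow_le_exp_mul (t : ℝ) (N : ℕ) (h : 0 ≤ 1 + t) : (1 + t) ^ N ≤ Real.exp (t * N) := by
  rw [mul_comm, Real.exp_nat_mul]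
  exact pow_le_pow_left₀ h (by linarith [Real.add_one_le_exp t]) N

/-- The common arithmetic of the two counting estimates. -/
lemma count_arith {n : ℕ} {κ q u v a : ℝ} (hκ : 0 < κ) (hκ1 : κ ≤ 1) (hq : 0 ≤ q)
    (h : q * u ≤ 2 ^ (n + 1) * ((n + 1) * ((1 + 2 * (κ / 2000)) ^ (2 * n + 2) * v)))
    (hv0 : 0 ≤ v) (hu : Real.exp (a - 0.002 * κ * n) ≤ u) (hv : v ≤ Real.exp (a - 0.01 * κ * n)) :
    q ≤ 2 ^ n * (4 * (n + 1) * Real.exp (-(0.006 * κ * n))) := by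
  have h1 : (1 + 2 * (κ / 2000)) ^ (2 * n + 2) ≤ Real.exp (0.002 * κ * n) * 2 := by
    refine (pow_le_exp_mul _ _ (by positivity)).trans ?_
    have e : 2 * (κ / 2000) * ((2 * n + 2 : ℕ) : ℝ) = 0.002 * κ * n + 0.002 * κ := by
      push_cast; ring
    rw [e, Real.exp_add]
    apply mul_le_mul_of_nonneg_left _ (Real.exp_pos _).le
    have h2 : (2 : ℝ) = Real.exp (Real.log 2) := by rw [Real.exp_log (by norm_num)]
    rw [h2, Real.exp_le_exp]
    have := Real.log_two_gt_d9
    linarith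
  have hu0 : 0 < Real.exp (a - 0.002 * κ * n) := Real.exp_pos _
  have h3 : q * Real.exp (a - 0.002 * κ * n) ≤ 2 ^ n * (4 * (n + 1) * Real.exp (-(0.006 * κ * n))) *
      Real.exp (a - 0.002 * κ * n) := by
    calc q * Real.exp (a - 0.002 * κ * n) ≤ q * u := mul_le_mul_of_nonneg_left hu hq
      _ ≤ _ := h
      _ ≤ 2 ^ (n + 1) * ((n + 1) * ((Real.exp (0.002 * κ * n) * 2) * Real.exp (a - 0.01 * κ * n))) := by
        apply mul_le_mul_of_nonneg_left _ (by positivity)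
        apply mul_le_mul_of_nonneg_left _ (by positivity)
        exact mul_le_mul h1 hv hv0 (by positivity)
      _ = 2 ^ n * (4 * (n + 1)) * (Real.exp (0.002 * κ * n) * Real.exp (a - 0.01 * κ * n)) := by
        ring
      _ = 2 ^ n * (4 * (n + 1)) * (Real.exp (-(0.006 * κ * n)) * Real.exp (a - 0.002 * κ * n)) := by
        rw [← Real.exp_add, ← Real.exp_add]; ring_nf
      _ = _ := by ring
  exact le_of_mul_le_mul_right h3 hu0

/-- For a string with linearly many blocks of lengths `1` and `5`, all but exponentially few
balanced strings `y` form a good pair with it. -/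
theorem card_not_goodPair (κ : ℝ) (hκ : 0 < κ) (hκ1 : κ ≤ 1) :
    ∃ ε > (0 : ℝ), ∀ S : ℝ, 1 / ε ≤ S → ∀ (n : ℕ) (x : Fin n → Bool), 0 < n → balanced ε x →
      κ * n ≤ numBlocks x 1 → κ * n ≤ numBlocks x 5 →
      ((Finset.univ.filter fun y : Fin n → Bool => balanced ε y ∧ ¬ goodPair S x y).card : ℝ) ≤
        2 ^ n * (8 * (n + 1) * Real.exp (-(0.006 * κ * n))) := by
  set δ : ℝ := κ / 2000 with hδ
  have hδ0 : 0 < δ := by positivity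
  have hδ1 : δ ≤ 1 / 2 := by rw [hδ]; linarith
  set Λ : ℝ := Real.log (4 / δ) with hΛ
  have hΛ0 : 0 < Λ := Real.log_pos (by rw [lt_div_iff₀ hδ0]; linarith)
  have hexp : δ / 4 = Real.exp (-Λ) := by
    rw [Real.exp_neg, hΛ, Real.exp_log (by positivity), inv_div]
  -- with this `ε`, the cost `(δ / 4) ^ (4 * ε * n)` of the unmatched gaps is `exp (-0.002 * κ * n)`
  refine ⟨0.0005 * κ / Λ, by positivity, ?_⟩
  set ε : ℝ := 0.0005 * κ / Λ with hε
  have hε0 : 0 < ε := by positivity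
  intro S hS n x hn hx h1 h5
  have hn' : (0 : ℝ) < n := by exact_mod_cast hn
  set N1 := numBlocks x 1 with hN1
  set N5 := numBlocks x 5 with hN5
  have hN1p : 0 < N1 := by
    have : (0 : ℝ) < N1 := lt_of_lt_of_le (by positivity) h1
    exact_mod_cast this
  have hN5p : 0 < N5 := by
    have : (0 : ℝ) < N5 := lt_of_lt_of_le (by positivity) h5
    exact_mod_cast this
  set d : ℕ := ⌊4 * ε * n⌋₊ with hd
  have hdle : (d : ℝ) ≤ 4 * ε * n := Nat.floor_le (by positivity)
  have hΛd : Λ * d ≤ 0.002 * κ * n := by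
    have e : Λ * (4 * ε * n) = 0.002 * κ * n := by rw [hε]; field_simp; ring
    rw [← e]; exact mul_le_mul_of_nonneg_left hdle hΛ0.le
  have hδd : Real.exp (-(0.002 * κ * n)) ≤ (δ / 4) ^ d := by
    rw [hexp, ← Real.exp_nat_mul, Real.exp_le_exp]; linarith
  set c1 : ℕ := ⌊0.11 * (N1 : ℝ)⌋₊ with hc1
  set c5 : ℕ := ⌈0.07 * (N5 : ℝ)⌉₊ with hc5
  have A := card_few_good x hδ0 hδ1 d c1
  have B := card_many_bad x hδ0 hδ1 d c5
  have A' := count_arith (a := -(0.08 * N1)) hκ hκ1 (Nat.cast_nonneg _) A (by positivity) (by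
      have := half_pow_ge c1 N1 (Nat.floor_le (by positivity)) (by positivity)
      rw [pow_add]
      calc Real.exp (-(0.08 * N1) - 0.002 * κ * n) =
          Real.exp (-(0.002 * κ * n)) * Real.exp (-(0.08 * N1)) := by
            rw [← Real.exp_add]; ring_nf
        _ ≤ (δ / 4) ^ d * (1 / 2) ^ c1 := mul_le_mul hδd this (Real.exp_pos _).le (by positivity)
        _ ≤ (δ / 2) ^ d * (1 / 2) ^ c1 := by
            apply mul_le_mul_of_nonneg_right _ (by positivity)
            exact pow_le_pow_left₀ (by positivity) (by linarith) d
        _ = δ ^ d * ((1 / 2) ^ c1 * (1 / 2) ^ d) := by rw [div_eq_mul_one_div δ 2, mul_pow]; ring)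
    (by
      have := pow_le_exp_mul (-1 / 8) N1 (by norm_num)
      rw [show (1 + -1 / 8 : ℝ) = 7 / 8 by norm_num] at this
      refine this.trans ?_
      rw [Real.exp_le_exp]
      linarith)
  have B' := count_arith (a := 0.045 * N5) hκ hκ1 (Nat.cast_nonneg _) B (by positivity) (by
      have := two_pow_ge c5 N5 (Nat.le_ceil _) (by positivity)
      calc Real.exp (0.045 * N5 - 0.002 * κ * n) =
          Real.exp (-(0.002 * κ * n)) * Real.exp (0.045 * N5) := by
            rw [← Real.exp_add]; ring_nf
        _ ≤ _ := mul_le_mul hδd this (Real.exp_pos _).le (by positivity))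
    (by
      have := pow_le_exp_mul (1 / 32) N5 (by norm_num)
      rw [show (1 + 1 / 32 : ℝ) = 33 / 32 by norm_num] at this
      refine this.trans ?_
      rw [Real.exp_le_exp]
      linarith)
  have hsub : (Finset.univ.filter fun y : Fin n → Bool => balanced ε y ∧ ¬ goodPair S x y) ⊆
      (Finset.univ.filter fun y : Fin n → Bool => ∃ sg, IsSeg sg (gapsOf x) (gapsOf y) ∧
        segExc sg ≤ d ∧ cnt sg 1 Qgood ≤ c1) ∪
      (Finset.univ.filter fun y : Fin n → Bool => ∃ sg, IsSeg sg (gapsOf x) (gapsOf y) ∧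
        segExc sg ≤ d ∧ c5 ≤ cnt sg 5 Qbad) := by
    intro y hy
    obtain ⟨hyb, hng⟩ := (Finset.mem_filter.1 hy).2
    obtain ⟨sg, hsg, hlen, hstep⟩ := exists_optimal_seg S x y
    have hexc : segExc sg ≤ d := Nat.le_floor (segExc_le hε0 hS hx hyb hsg hlen)
    rw [Finset.mem_union, Finset.mem_filter, Finset.mem_filter]
    by_cases hg : cnt sg 1 Qgood ≤ c1
    · exact Or.inl ⟨Finset.mem_univ _, sg, hsg, hexc, hg⟩
    by_cases hb : c5 ≤ cnt sg 5 Qbad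
    · exact Or.inr ⟨Finset.mem_univ _, sg, hsg, hexc, hb⟩
    exfalso
    apply hng
    refine goodPair_of_cnt S x y hN5p hN1p sg hsg.2.2.1 hstep ?_ ?_
    · exact ((Nat.floor_lt (by positivity)).1 (not_le.1 hg)).le
    · exact (Nat.lt_ceil.1 (not_le.1 hb)).le
  have hcard := (Finset.card_le_card hsub).trans (Finset.card_union_le _ _)
  refine (Nat.cast_le.2 hcard).trans ?_
  rw [Nat.cast_add]
  refine ((add_le_add A' B').trans (le_of_eq ?_))
  ring

/-! ### Counting strings with prescribed block counts -/

/-- The string of length `n` with gap list `a`. -/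
def toStr (n : ℕ) (a : List ℕ) : Fin n → Bool := fun i => (ofGaps a).getD i false

lemma gapsOf_toStr {n : ℕ} {a : List ℕ} (ha : a ≠ []) (h : a.sum + a.length = n + 1) :
    gapsOf (toStr n a) = a := by
  have hl := length_ofGaps a ha
  have e : List.ofFn (toStr n a) = ofGaps a := by
    apply List.ext_getElem
    · simp; omega
    · intro i h1 h2
      simp [toStr, List.getElem?_eq_getElem h2]
  rw [gapsOf, e, gaps_ofGaps a ha]

lemma gapsOf_inj {n : ℕ} {x y : Fin n → Bool} (h : gapsOf x = gapsOf y) : x = y :=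
  List.ofFn_injective (gaps_injective h)

lemma gapsOf_ne_nil {n : ℕ} (x : Fin n → Bool) : gapsOf x ≠ [] := gaps_ne_nil _

lemma count_set {a : List ℕ} {i v : ℕ} (h : a[i]? = some v) (w c : ℕ) :
    (a.set i w).count c + (if v = c then 1 else 0) = a.count c + (if w = c then 1 else 0) := by
  induction a generalizing i with
  | nil => simp at h
  | cons b a ih =>
    cases i with
    | zero =>
      have : b = v := by simpa using h
      subst this
      simp [List.count_cons]; omega
    | succ i =>
      have := ih (i := i) (by simpa using h)
      simp only [List.set_cons_succ, List.count_cons]; omega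

/-- The block-count vector `m + j e`. -/
def shiftV (m : Fin 4 → ℕ) (j : ℕ) : Fin 4 → ℕ := ![m 0 - j, m 1 + j, m 2 + j, m 3 - j]

lemma mem_strSetV {n : ℕ} {m : Fin 4 → ℕ} {x : Fin n → Bool} : x ∈ strSetV n m ↔
    (gapsOf x).count 1 = m 0 ∧ (gapsOf x).count 2 = m 1 ∧ (gapsOf x).count 4 = m 2 ∧
      (gapsOf x).count 5 = m 3 := by
  simp [strSetV, Fin.forall_fin_succ, blockLen, numBlocks_eq]

/-- For `t = ⟨x, i, k⟩`, the string whose gap list is that of `x` with the gaps `i` and `k` replaced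
by `p` and `q`, together with `(i, k)`. -/
def mv (n : ℕ) (p q : ℕ) (t : (_ : Fin n → Bool) × ℕ × ℕ) : (_ : Fin n → Bool) × ℕ × ℕ :=
  ⟨toStr n (((gapsOf t.1).set t.2.1 p).set t.2.2 q), t.2⟩

/-- One step of the chain sets up a bijection between triples, which compares the number of
strings with block counts `m` and `m + e`, also when the number of ones is restricted. -/
lemma card_step (n : ℕ) (m : Fin 4 → ℕ) (h0 : 0 < m 0) (h3 : 0 < m 3) (P : ℕ → Prop) :
    ((strSetV n m).filter fun x => P (onesOf x)).card * (m 3 * m 0) =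
      ((strSetV n (shiftV m 1)).filter fun x => P (onesOf x)).card * ((m 2 + 1) * (m 1 + 1)) := by
  have e1 : ((strSetV n m).filter fun x => P (onesOf x)).card * (m 3 * m 0) =
      (((strSetV n m).filter fun x => P (onesOf x)).sigma
        fun x => idx (gapsOf x) 5 ×ˢ idx (gapsOf x) 1).card := by
    rw [Finset.card_sigma, ← smul_eq_mul, ← Finset.sum_const]
    refine Finset.sum_congr rfl fun x hx => ?_
    have := mem_strSetV.1 (Finset.mem_filter.1 hx).1
    rw [Finset.card_product, card_idx, card_idx, this.1, this.2.2.2]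
  have e2 : ((strSetV n (shiftV m 1)).filter fun x => P (onesOf x)).card *
      ((m 2 + 1) * (m 1 + 1)) =
      (((strSetV n (shiftV m 1)).filter fun x => P (onesOf x)).sigma
        fun x => idx (gapsOf x) 4 ×ˢ idx (gapsOf x) 2).card := by
    rw [Finset.card_sigma, ← smul_eq_mul, ← Finset.sum_const]
    refine Finset.sum_congr rfl fun x hx => ?_
    have := mem_strSetV.1 (Finset.mem_filter.1 hx).1
    rw [Finset.card_product, card_idx, card_idx, this.2.1, this.2.2.1]
    simp [shiftV]
  rw [e1, e2]
  -- the gap list after a move is again realized by a string of length `n`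
  have key : ∀ (x : Fin n → Bool) (i k p q p' q' : ℕ), (gapsOf x)[i]? = some p →
      (gapsOf x)[k]? = some q → i ≠ k → p' + q' = p + q →
      gapsOf (toStr n (((gapsOf x).set i p').set k q')) = ((gapsOf x).set i p').set k q' := by
    intro x i k p q p' q' hi hk hne hs
    apply gapsOf_toStr
    · rw [← List.length_pos_iff]; simp only [List.length_set]
      exact List.length_pos_iff.2 (gapsOf_ne_nil x)
    · have h1 := sum_set_nat (gapsOf x) i p p' hi
      have h2 := sum_set_nat ((gapsOf x).set i p') k q q' (by rw [List.getElem?_set_ne hne]; exact hk)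
      have h3 := sum_gapsOf x
      simp only [List.length_set]
      omega
  have back : ∀ (x : Fin n → Bool) (i k p q p' q' : ℕ), (gapsOf x)[i]? = some p →
      (gapsOf x)[k]? = some q → i ≠ k → p' + q' = p + q →
      mv n p q (mv n p' q' ⟨x, i, k⟩) = ⟨x, i, k⟩ := by
    intro x i k p q p' q' hi hk hne hs
    simp only [mv]
    rw [key x i k p q p' q' hi hk hne hs]
    have : ((((gapsOf x).set i p').set k q').set i p).set k q = gapsOf x := by
      rw [List.set_comm _ _ hne.symm, List.set_set, List.set_set]
      apply List.ext_getElem?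
      intro j
      by_cases hj : j = k
      · subst hj
        rw [hk, List.getElem?_set_self]
        simpa using (List.getElem?_eq_some_iff.1 hk).1
      · rw [List.getElem?_set_ne (Ne.symm hj)]
        by_cases hj' : j = i
        · subst hj'
          rw [hi, List.getElem?_set_self]
          exact (List.getElem?_eq_some_iff.1 hi).1
        · rw [List.getElem?_set_ne (Ne.symm hj')]
    rw [this]
    congr 1
    apply gapsOf_inj
    exact gapsOf_toStr (gapsOf_ne_nil x) (sum_gapsOf x)
  have ones : ∀ x y : Fin n → Bool, (gapsOf x).length = (gapsOf y).length → onesOf x = onesOf y := by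
    intro x y h
    rw [length_gapsOf, length_gapsOf] at h; omega
  refine Finset.card_nbij' (mv n 4 2) (mv n 5 1) ?_ ?_ ?_ ?_
  · rintro ⟨x, i, k⟩ hx
    simp only [Finset.coe_sigma, Set.mem_sigma_iff, Finset.mem_coe, mem_idx, mem_strSetV, Finset.coe_filter, Set.mem_ofPred_eq,
      Finset.coe_product, Set.mem_prod] at hx ⊢
    obtain ⟨⟨⟨c1, c2, c4, c5⟩, hP⟩, hi, hk⟩ := hx
    have hne : i ≠ k := by rintro rfl; rw [hi] at hk; simp at hk
    have hg := key x i k 5 1 4 2 hi hk hne rfl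
    have hk' : ((gapsOf x).set i 4)[k]? = some 1 := by rw [List.getElem?_set_ne hne]; exact hk
    simp only [mv, hg]
    refine ⟨⟨⟨?_, ?_, ?_, ?_⟩, ?_⟩, ?_, ?_⟩
    · have a1 := count_set hi 4 1; have a2 := count_set hk' 2 1
      simp [shiftV] at a1 a2 ⊢; omega
    · have a1 := count_set hi 4 2; have a2 := count_set hk' 2 2
      simp [shiftV] at a1 a2 ⊢; omega
    · have a1 := count_set hi 4 4; have a2 := count_set hk' 2 4
      simp [shiftV] at a1 a2 ⊢; omega
    · have a1 := count_set hi 4 5; have a2 := count_set hk' 2 5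
      simp [shiftV] at a1 a2 ⊢; omega
    · rwa [ones _ x (by rw [hg]; simp)]
    · rw [List.getElem?_set_ne hne.symm, List.getElem?_set_self]
      exact (List.getElem?_eq_some_iff.1 hi).1
    · rw [List.getElem?_set_self]
      simpa using (List.getElem?_eq_some_iff.1 hk).1
  · rintro ⟨x, i, k⟩ hx
    simp only [Finset.coe_sigma, Set.mem_sigma_iff, Finset.mem_coe, mem_idx, mem_strSetV, Finset.coe_filter, Set.mem_ofPred_eq,
      Finset.coe_product, Set.mem_prod] at hx ⊢
    obtain ⟨⟨⟨c1, c2, c4, c5⟩, hP⟩, hi, hk⟩ := hx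
    have hne : i ≠ k := by rintro rfl; rw [hi] at hk; simp at hk
    have hg := key x i k 4 2 5 1 hi hk hne rfl
    have hk' : ((gapsOf x).set i 5)[k]? = some 2 := by rw [List.getElem?_set_ne hne]; exact hk
    simp only [mv, hg]
    simp [shiftV] at c1 c2 c4 c5
    refine ⟨⟨⟨?_, ?_, ?_, ?_⟩, ?_⟩, ?_, ?_⟩
    · have a1 := count_set hi 5 1; have a2 := count_set hk' 1 1
      simp at a1 a2 ⊢; omega
    · have a1 := count_set hi 5 2; have a2 := count_set hk' 1 2
      simp at a1 a2 ⊢; omega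
    · have a1 := count_set hi 5 4; have a2 := count_set hk' 1 4
      simp at a1 a2 ⊢; omega
    · have a1 := count_set hi 5 5; have a2 := count_set hk' 1 5
      simp at a1 a2 ⊢; omega
    · rwa [ones _ x (by rw [hg]; simp)]
    · rw [List.getElem?_set_ne hne.symm, List.getElem?_set_self]
      exact (List.getElem?_eq_some_iff.1 hi).1
    · rw [List.getElem?_set_self]
      simpa using (List.getElem?_eq_some_iff.1 hk).1
  · rintro ⟨x, i, k⟩ hx
    simp only [Finset.coe_sigma, Set.mem_sigma_iff, Finset.mem_coe, Finset.mem_product, mem_idx] at hx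
    obtain ⟨-, hi, hk⟩ := hx
    exact back x i k 5 1 4 2 hi hk (by rintro rfl; rw [hi] at hk; simp at hk) rfl
  · rintro ⟨x, i, k⟩ hx
    simp only [Finset.coe_sigma, Set.mem_sigma_iff, Finset.mem_coe, Finset.mem_product, mem_idx] at hx
    obtain ⟨-, hi, hk⟩ := hx
    exact back x i k 4 2 5 1 hi hk (by rintro rfl; rw [hi] at hk; simp at hk) rfl

lemma shiftV_succ (m : Fin 4 → ℕ) (j : ℕ) : shiftV (shiftV m j) 1 = shiftV m (j + 1) := by
  funext i; fin_cases i <;> simp [shiftV] <;> omega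

/-- The conditional law of the number of ones given the block counts does not change
along the chain. -/
lemma card_shift (n : ℕ) (m : Fin 4 → ℕ) (hne : (strSetV n m).Nonempty) (P : ℕ → Prop) (j : ℕ)
    (h0 : j ≤ m 0) (h3 : j ≤ m 3) : (strSetV n (shiftV m j)).Nonempty ∧
    ((strSetV n m).filter fun x => P (onesOf x)).card * (strSetV n (shiftV m j)).card =
      ((strSetV n (shiftV m j)).filter fun x => P (onesOf x)).card * (strSetV n m).card := by
  induction j with
  | zero =>
    have e : shiftV m 0 = m := by funext i; fin_cases i <;> simp [shiftV]
    rw [e]; exact ⟨hne, rfl⟩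
  | succ j ih =>
    obtain ⟨ih1, ih2⟩ := ih (by omega) (by omega)
    have s0 : 0 < shiftV m j 0 := by simp [shiftV]; omega
    have s3 : 0 < shiftV m j 3 := by simp [shiftV]; omega
    have a := card_step n (shiftV m j) s0 s3 P
    have b := card_step n (shiftV m j) s0 s3 fun _ => True
    simp only [Finset.filter_true] at b
    rw [shiftV_succ] at a b
    set u := shiftV m j 3 * shiftV m j 0 with hu
    set v := (shiftV m j 2 + 1) * (shiftV m j 1 + 1) with hv
    have hu0 : 0 < u := Nat.mul_pos s3 s0
    have hv0 : 0 < v := by positivity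
    have hc : 0 < (strSetV n (shiftV m j)).card := Finset.card_pos.2 ih1
    set A := (strSetV n (shiftV m j)).card
    set A' := (strSetV n (shiftV m (j + 1))).card with hA'
    set B := ((strSetV n (shiftV m j)).filter fun x => P (onesOf x)).card
    set B' := ((strSetV n (shiftV m (j + 1))).filter fun x => P (onesOf x)).card
    set M := (strSetV n m).card
    set Q := ((strSetV n m).filter fun x => P (onesOf x)).card
    refine ⟨?_, ?_⟩
    · rw [← Finset.card_pos, ← hA']
      by_contra h
      have : A' = 0 := by omega
      rw [this, zero_mul] at b
      exact (Nat.mul_pos hc hu0).ne' b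
    · apply Nat.eq_of_mul_eq_mul_right (Nat.mul_pos hv0 hc)
      calc Q * A' * (v * A) = (Q * A) * (A' * v) := by ring
        _ = (B * M) * (A * u) := by rw [ih2, b]
        _ = (B * u) * (M * A) := by ring
        _ = (B' * v) * (M * A) := by rw [a]
        _ = B' * M * (v * A) := by ring

/-! ### Concentration of block counts and of the number of ones -/

/-- The mean of a function of a uniform random string of length `n`, seen as a list. -/
def meanL (n : ℕ) (f : List Bool → ℝ) : ℝ := (∑ x : Fin n → Bool, f (List.ofFn x)) / 2 ^ n

lemma sum_one_strings (n : ℕ) : ∑ _x : Fin n → Bool, (1 : ℝ) = 2 ^ n := by simp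

lemma meanL_succ (n : ℕ) (f : List Bool → ℝ) : meanL (n + 1) f =
    (meanL n (fun l => f (false :: l)) + meanL n (fun l => f (true :: l))) / 2 := by
  simp only [meanL]
  rw [sum_strings_cons]
  simp only [List.ofFn_cons]
  rw [pow_succ]
  field_simp

lemma sum_sq_sub (n : ℕ) (f : List Bool → ℝ) (c : ℝ) :
    ∑ x : Fin n → Bool, (f (List.ofFn x) - c) ^ 2 =
      ∑ x : Fin n → Bool, (f (List.ofFn x) - meanL n f) ^ 2 + 2 ^ n * (meanL n f - c) ^ 2 := by
  have h : ∑ x : Fin n → Bool, f (List.ofFn x) = 2 ^ n * meanL n f := by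
    rw [meanL]; field_simp
  have e : ∀ d : ℝ, ∑ x : Fin n → Bool, (f (List.ofFn x) - d) ^ 2 =
      ∑ x : Fin n → Bool, f (List.ofFn x) ^ 2 - 2 * d * (2 ^ n * meanL n f) + 2 ^ n * d ^ 2 := by
    intro d
    rw [← h, ← sum_one_strings n, Finset.mul_sum, Finset.sum_mul, ← Finset.sum_sub_distrib,
      ← Finset.sum_add_distrib]
    exact Finset.sum_congr rfl fun x _ => by ring
  rw [e, e]; ring

/-- Efron–Stein type variance bound for functions of i.i.d. bits with bounded differences. -/
lemma variance_le (n : ℕ) : ∀ (f : List Bool → ℝ) (c : ℝ),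
    (∀ l₁ l₂, |f (l₁ ++ true :: l₂) - f (l₁ ++ false :: l₂)| ≤ c) →
    ∑ x : Fin n → Bool, (f (List.ofFn x) - meanL n f) ^ 2 ≤ 2 ^ n * (n * c ^ 2) := by
  induction n with
  | zero => intro f c _; simp [meanL]
  | succ n ih =>
    intro f c h
    have hF := ih (fun l => f (false :: l)) c (fun l₁ l₂ => h (false :: l₁) l₂)
    have hT := ih (fun l => f (true :: l)) c (fun l₁ l₂ => h (true :: l₁) l₂)
    rw [sum_strings_cons]
    simp only [List.ofFn_cons]
    rw [sum_sq_sub n (fun l => f (false :: l)), sum_sq_sub n (fun l => f (true :: l)), meanL_succ]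
    set a := meanL n (fun l => f (false :: l)) with ha
    set b := meanL n (fun l => f (true :: l)) with hb
    have hd : |b - a| ≤ c := by
      rw [ha, hb, meanL, meanL, ← sub_div, ← Finset.sum_sub_distrib, abs_div,
        abs_of_pos (by positivity : (0 : ℝ) < 2 ^ n), div_le_iff₀ (by positivity)]
      refine (Finset.abs_sum_le_sum_abs _ _).trans ?_
      rw [mul_comm, ← sum_one_strings n, Finset.sum_mul]
      exact Finset.sum_le_sum fun x _ => by simpa using h [] (List.ofFn x)
    have h2 : (b - a) ^ 2 ≤ c ^ 2 := sq_le_sq' (by linarith [neg_abs_le (b - a)])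
      ((le_abs_self _).trans hd)
    have h3 : (2 : ℝ) ^ n * (b - a) ^ 2 ≤ 2 ^ n * c ^ 2 := by gcongr
    have h4 : (0 : ℝ) ≤ 2 ^ n * c ^ 2 := by positivity
    rw [pow_succ (2 : ℝ) n]; push_cast
    linarith

lemma gaps_append_false (l₁ l₂ : List Bool) : ∃ A a b B, gaps l₁ = A ++ [a] ∧ gaps l₂ = b :: B ∧
    gaps (l₁ ++ false :: l₂) = A ++ (a + 1 + b) :: B := by
  obtain ⟨b, B, hb⟩ := exists_gaps_cons l₂
  induction l₁ with
  | nil => exact ⟨[], 0, b, B, by simp [gaps], hb, by simp [gaps, hb]; omega⟩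
  | cons c l₁ ih =>
    obtain ⟨A, a, b', B', h1, h2, h3⟩ := ih
    cases c with
    | true => exact ⟨0 :: A, a, b', B', by simp [gaps, h1], h2, by simp [gaps, h3]⟩
    | false =>
      cases A with
      | nil => exact ⟨[], a + 1, b', B', by simp [gaps, h1], h2, by simp [gaps, h3]; omega⟩
      | cons d A => exact ⟨(d + 1) :: A, a, b', B', by simp [gaps, h1], h2, by simp [gaps, h3]⟩

/-- Flipping one letter changes the number of gaps of a given length by at most two. -/
lemma count_gaps_diff (ℓ : ℕ) (l₁ l₂ : List Bool) :
    |((gaps (l₁ ++ true :: l₂)).count ℓ : ℝ) - ((gaps (l₁ ++ false :: l₂)).count ℓ : ℝ)| ≤ 2 := by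
  obtain ⟨A, a, b, B, h1, h2, h3⟩ := gaps_append_false l₁ l₂
  rw [gaps_append_true, h1, h2, h3]
  simp only [List.count_append, List.count_cons, List.count_nil]
  push_cast
  rw [abs_le]
  constructor <;> (split_ifs <;> linarith)

/-- The mean number of gaps of length `ℓ`. -/
def muL (n ℓ : ℕ) : ℝ := (∑ x : Fin n → Bool, ((gapsOf x).count ℓ : ℝ)) / 2 ^ n

lemma card_atypical (n ℓ : ℕ) (hn : 0 < n) :
    ((univ.filter fun x : Fin n → Bool => 7 * √n < |((gapsOf x).count ℓ : ℝ) - muL n ℓ|).card : ℝ)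
      ≤ 2 ^ n * (4 / 49) := by
  have h := variance_le n (fun l => ((gaps l).count ℓ : ℝ)) 2 (count_gaps_diff ℓ)
  have h2 := card_mul_le_sum (fun x : Fin n → Bool => 7 * √n < |((gapsOf x).count ℓ : ℝ) - muL n ℓ|)
    (fun x => (((gapsOf x).count ℓ : ℝ) - muL n ℓ) ^ 2) (49 * n) (fun _ => sq_nonneg _) (by
      intro x hx
      rw [← sq_abs]
      have := pow_le_pow_left₀ (by positivity) hx.le 2
      rw [mul_pow, Real.sq_sqrt (by positivity)] at this
      linarith)
  have h3 := h2.trans h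
  have hn' : (0 : ℝ) < n := by exact_mod_cast hn
  have : (2 : ℝ) ^ n * (n * 2 ^ 2) = (2 ^ n * (4 / 49)) * (49 * n) := by ring
  rw [this] at h3
  exact le_of_mul_le_mul_right h3 (by positivity)

lemma gapsOf_cons_true {n : ℕ} (x : Fin n → Bool) :
    gapsOf (Fin.cons true x : Fin (n + 1) → Bool) = 0 :: gapsOf x := by simp [gapsOf, gaps]

lemma gapsOf_cons_false {n : ℕ} (x : Fin n → Bool) :
    gapsOf (Fin.cons false x : Fin (n + 1) → Bool) = ((gapsOf x).headD 0 + 1) :: (gapsOf x).tail := by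
  obtain ⟨h, t, e⟩ := exists_gaps_cons (List.ofFn x)
  simp [gapsOf, gaps, e]

lemma sum_head (n h : ℕ) :
    ∑ x : Fin (n + h + 1) → Bool, (if (gapsOf x).headD 0 = h then (1 : ℝ) else 0) = 2 ^ n := by
  induction h with
  | zero =>
    rw [sum_strings_cons]
    simp [gapsOf_cons_true, gapsOf_cons_false]
  | succ h ih =>
    rw [show n + (h + 1) + 1 = (n + h + 1) + 1 by ring, sum_strings_cons]
    simp only [gapsOf_cons_true, gapsOf_cons_false, List.headD_cons]
    simp [← ih]

lemma sum_tail_count (n ℓ : ℕ) :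
    (n : ℝ) * 2 ^ n ≤ 2 * ∑ x : Fin (n + ℓ + 1) → Bool, ((gapsOf x).tail.count ℓ : ℝ) := by
  induction n with
  | zero => simp; positivity
  | succ n ih =>
    rw [show n + 1 + ℓ + 1 = (n + ℓ + 1) + 1 by ring, sum_strings_cons]
    simp only [gapsOf_cons_true, gapsOf_cons_false, List.tail_cons]
    have e : ∀ x : Fin (n + ℓ + 1) → Bool, ((gapsOf x).count ℓ : ℝ) =
        (gapsOf x).tail.count ℓ + (if (gapsOf x).headD 0 = ℓ then (1 : ℝ) else 0) := by
      intro x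
      obtain ⟨h, t, e⟩ := List.exists_cons_of_ne_nil (gapsOf_ne_nil x)
      rw [e]
      simp [List.count_cons]
    rw [Finset.sum_congr rfl fun x _ => e x, Finset.sum_add_distrib, sum_head]
    push_cast
    rw [pow_succ]
    linarith

lemma muL_lower {n ℓ : ℕ} (hℓ : ℓ ≤ 6) (hn : 100 ≤ n) : (n : ℝ) / 300 ≤ muL n ℓ := by
  obtain ⟨k, rfl⟩ : ∃ k, n = k + ℓ + 1 := ⟨n - ℓ - 1, by omega⟩
  have h := sum_tail_count k ℓ
  have h2 : ∑ x : Fin (k + ℓ + 1) → Bool, ((gapsOf x).tail.count ℓ : ℝ) ≤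
      ∑ x : Fin (k + ℓ + 1) → Bool, ((gapsOf x).count ℓ : ℝ) :=
    Finset.sum_le_sum fun x _ => by exact_mod_cast (List.tail_sublist _).count_le _
  rw [muL, le_div_iff₀ (by positivity)]
  have h3 : (2 : ℝ) ^ (k + ℓ + 1) ≤ 2 ^ k * 128 := by
    rw [add_assoc, pow_add]
    gcongr
    calc (2 : ℝ) ^ (ℓ + 1) ≤ 2 ^ 7 := by gcongr <;> [norm_num; omega]
      _ = 128 := by norm_num
  have hk : (93 : ℝ) ≤ k := by
    have : 93 ≤ k := by omega
    exact_mod_cast this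
  have hl : (ℓ : ℝ) ≤ 6 := by exact_mod_cast hℓ
  have h4 : ((k + ℓ + 1 : ℕ) : ℝ) / 300 * 2 ^ (k + ℓ + 1) ≤ ((k : ℝ) + 7) / 300 * (2 ^ k * 128) := by
    push_cast
    gcongr ?_ / 300 * ?_
    linarith
  refine h4.trans (le_trans ?_ h2)
  have : ((k : ℝ) + 7) / 300 * (2 ^ k * 128) ≤ k * 2 ^ k / 2 := by
    have : (0 : ℝ) < 2 ^ k := by positivity
    nlinarith
  linarith

lemma onesOf_cons {n : ℕ} (b : Bool) (x : Fin n → Bool) :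
    onesOf (Fin.cons b x : Fin (n + 1) → Bool) = onesOf x + (if b then 1 else 0) := by
  cases b <;> simp [onesOf]

lemma sum_exp_ones (n : ℕ) (t : ℝ) : ∑ x : Fin n → Bool, Real.exp (t * (2 * onesOf x - n)) =
    (2 * Real.cosh t) ^ n := by
  induction n with
  | zero => simp [onesOf]
  | succ n ih =>
    rw [sum_strings_cons, pow_succ, ← ih, Finset.sum_mul, ← Finset.sum_add_distrib]
    refine Finset.sum_congr rfl fun x _ => ?_
    simp only [onesOf_cons]
    rw [Real.cosh_eq]
    simp only [if_true, if_false, Bool.false_eq_true]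
    push_cast
    rw [show 2 * ((Real.exp t + Real.exp (-t)) / 2) = Real.exp t + Real.exp (-t) by ring, mul_add (Real.exp _),
      ← Real.exp_add, ← Real.exp_add, add_comm]
    congr 2 <;> ring

/-- Hoeffding's bound for the number of ones. -/
lemma card_not_balanced (n : ℕ) {ε : ℝ} (hε : 0 < ε) :
    ((univ.filter fun x : Fin n → Bool => ¬ balanced ε x).card : ℝ) ≤
      2 ^ n * (2 * Real.exp (-(2 * ε ^ 2 * n))) := by
  have side : ∀ t : ℝ, t ^ 2 = 4 * ε ^ 2 → ∑ x : Fin n → Bool, Real.exp (t * (2 * onesOf x - n)) ≤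
      2 ^ n * Real.exp (2 * ε ^ 2 * n) := by
    intro t ht
    rw [sum_exp_ones, mul_pow]
    gcongr
    calc Real.cosh t ^ n ≤ (Real.exp (t ^ 2 / 2)) ^ n :=
          pow_le_pow_left₀ (Real.cosh_pos t).le (Real.cosh_le_exp_half_sq t) n
      _ = Real.exp (2 * ε ^ 2 * n) := by rw [← Real.exp_nat_mul, ht]; ring_nf
  have h := card_mul_le_sum (fun x : Fin n → Bool => ¬ balanced ε x)
    (fun x => Real.exp (2 * ε * (2 * onesOf x - n)) + Real.exp (-(2 * ε) * (2 * onesOf x - n)))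
    (Real.exp (4 * ε ^ 2 * n)) (fun _ => by positivity) (by
      intro x hx
      rw [balanced, not_le, lt_abs] at hx
      rcases hx with hx | hx
      · refine le_trans ?_ (le_add_of_nonneg_right (Real.exp_pos _).le)
        apply Real.exp_le_exp.2; nlinarith
      · refine le_trans ?_ (le_add_of_nonneg_left (Real.exp_pos _).le)
        apply Real.exp_le_exp.2; nlinarith)
  rw [Finset.sum_add_distrib] at h
  have h1 := side (2 * ε) (by ring)
  have h2 := side (-(2 * ε)) (by ring)
  have e : (2 : ℝ) ^ n * (2 * Real.exp (-(2 * ε ^ 2 * n))) * Real.exp (4 * ε ^ 2 * n) =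
      2 * (2 ^ n * Real.exp (2 * ε ^ 2 * n)) := by
    rw [show 4 * ε ^ 2 * n = 2 * ε ^ 2 * n + 2 * ε ^ 2 * n by ring, Real.exp_add, Real.exp_neg]
    field_simp
  refine le_of_mul_le_mul_right ?_ (Real.exp_pos (4 * ε ^ 2 * n))
  rw [e]
  refine le_trans (le_of_eq ?_) (h.trans (by linarith))
  congr!

/-! ### A lower bound for the number of strings with nearly typical block counts -/

/-- Replacing one gap of length `p` by the list of gaps `Bl` of the same total extent is
injective up to the choice of a position. -/
lemma card_le_move {n : ℕ} (𝒮 𝒯 : Finset (Fin n → Bool)) (p : ℕ) (Bl : List ℕ)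
    (hBl : Bl.sum + Bl.length = p + 1) (hS : ∀ x ∈ 𝒮, p ∈ gapsOf x)
    (hT : ∀ x ∈ 𝒮, ∀ x' : Fin n → Bool, (∀ c, (gapsOf x').count c + (if p = c then 1 else 0) =
      (gapsOf x).count c + Bl.count c) → x' ∈ 𝒯) : 𝒮.card ≤ (n + 1) * 𝒯.card := by
  let i : (Fin n → Bool) → ℕ := fun x => (gapsOf x).idxOf p
  let g : (Fin n → Bool) → List ℕ := fun x => (gapsOf x).take (i x) ++ (Bl ++ (gapsOf x).drop (i x + 1))
  have hi : ∀ x ∈ 𝒮, i x < (gapsOf x).length := fun x hx => List.idxOf_lt_length_of_mem (hS x hx)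
  have dec : ∀ x ∈ 𝒮, gapsOf x = (gapsOf x).take (i x) ++ p :: (gapsOf x).drop (i x + 1) := by
    intro x hx
    conv_lhs => rw [← List.take_append_drop (i x) (gapsOf x), List.drop_eq_getElem_cons (hi x hx)]
    congr 2
    exact List.getElem_idxOf (hi x hx)
  have hg : ∀ x ∈ 𝒮, gapsOf (toStr n (g x)) = g x := by
    intro x hx
    have h1 := sum_gapsOf x
    rw [dec x hx] at h1
    have h2 : (g x).sum + (g x).length = n + 1 := by
      simp only [g, List.sum_append, List.length_append, List.sum_cons, List.length_cons] at h1 ⊢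
      omega
    refine gapsOf_toStr ?_ h2
    rintro h
    rw [h] at h2; simp at h2
  have hlen : ∀ x ∈ 𝒮, ((gapsOf x).take (i x)).length = i x := fun x hx => by
    rw [List.length_take, min_eq_left (hi x hx).le]
  have := Finset.card_le_card_of_injOn (s := 𝒮) (t := Finset.range (n + 1) ×ˢ 𝒯)
    (fun x => (i x, toStr n (g x))) (by
      intro x hx
      simp only [Finset.coe_product, Set.mem_prod, Finset.mem_coe, Finset.mem_range]
      refine ⟨?_, hT x hx _ fun c => ?_⟩
      · have := hi x hx
        have := sum_gapsOf x
        omega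
      · rw [hg x hx]
        conv_rhs => rw [dec x hx]
        simp only [g, List.count_append, List.count_cons, beq_iff_eq]
        omega) (by
      intro x hx x' hx' h
      simp only [Prod.mk.injEq] at h
      obtain ⟨h1, h2⟩ := h
      have h3 := congrArg gapsOf h2
      rw [hg x hx, hg x' hx'] at h3
      obtain ⟨h4, h5⟩ := List.append_inj h3 (by rw [hlen x hx, hlen x' hx', h1])
      apply gapsOf_inj
      rw [dec x hx, dec x' hx', h4, List.append_cancel_left h5])
  simpa using this

/-- Strings with block counts `v` and at least `r` blocks of length six; the latter serve as a
reservoir out of which blocks of the other lengths are produced. -/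
def cell (n : ℕ) (v : Fin 4 → ℕ) (r : ℕ) : Finset (Fin n → Bool) :=
  (strSetV n v).filter fun x => r ≤ (gapsOf x).count 6

lemma mem_cell {n : ℕ} {v : Fin 4 → ℕ} {r : ℕ} {x : Fin n → Bool} : x ∈ cell n v r ↔
    (∀ i, (gapsOf x).count (blockLen i) = v i) ∧ r ≤ (gapsOf x).count 6 := by
  rw [cell, Finset.mem_filter, strSetV, Finset.mem_filter]
  have : ∀ i, 0 < blockLen i := by intro i; fin_cases i <;> simp [blockLen]
  simp [numBlocks_eq _ _ (this _)]

lemma blockLen_spec (i : Fin 4) : 0 < blockLen i ∧ blockLen i < 6 := by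
  fin_cases i <;> simp [blockLen]

lemma blockLen_inj {i j : Fin 4} : blockLen i = blockLen j ↔ i = j := by
  revert i j; decide

lemma count_replicate_zero (k : ℕ) {c : ℕ} (h : 0 < c) : (List.replicate k 0).count c = 0 := by
  rw [List.count_eq_zero]
  intro hc
  rw [List.eq_of_mem_replicate hc] at h
  omega

lemma cell_dec (n r : ℕ) (v w : Fin 4 → ℕ) (i : Fin 4) (hi : v i = w i + 1)
    (hj : ∀ j, j ≠ i → v j = w j) : (cell n v (r + 1)).card ≤ (n + 1) * (cell n w r).card := by
  refine card_le_move _ _ (blockLen i) (List.replicate (blockLen i + 1) 0) (by simp) ?_ ?_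
  · intro x hx
    have := (mem_cell.1 hx).1 i
    rw [← List.count_pos_iff]; omega
  · intro x hx x' h
    obtain ⟨h1, h2⟩ := mem_cell.1 hx
    rw [mem_cell]
    have hs := blockLen_spec i
    refine ⟨fun j => ?_, ?_⟩
    · have a := h (blockLen j)
      have hs' := blockLen_spec j
      rw [count_replicate_zero _ hs'.1, h1 j] at a
      by_cases e : j = i
      · subst e; simp at a; omega
      · rw [if_neg (fun h => e (blockLen_inj.1 h).symm), hj j e] at a; omega
    · have a := h 6
      rw [count_replicate_zero _ (by norm_num), if_neg (by omega)] at a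
      omega

lemma cell_inc (n r : ℕ) (v w : Fin 4 → ℕ) (i : Fin 4) (hi : w i = v i + 1)
    (hj : ∀ j, j ≠ i → v j = w j) : (cell n v (r + 1)).card ≤ (n + 1) * (cell n w r).card := by
  have hs := blockLen_spec i
  refine card_le_move _ _ 6 (blockLen i :: List.replicate (6 - blockLen i) 0) (by simp; omega) ?_ ?_
  · intro x hx
    have := (mem_cell.1 hx).2
    rw [← List.count_pos_iff]; omega
  · intro x hx x' h
    obtain ⟨h1, h2⟩ := mem_cell.1 hx
    rw [mem_cell]
    refine ⟨fun j => ?_, ?_⟩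
    · have a := h (blockLen j)
      have hs' := blockLen_spec j
      rw [List.count_cons, count_replicate_zero _ hs'.1, if_neg (by omega), h1 j] at a
      by_cases e : j = i
      · subst e; simp at a; omega
      · rw [if_neg (by simpa using fun h => e (blockLen_inj.1 h).symm), hj j e] at a; omega
    · have a := h 6
      rw [List.count_cons, count_replicate_zero _ (by norm_num), if_pos rfl,
        if_neg (by simp; omega)] at a
      omega

lemma cell_le (n D : ℕ) : ∀ (r : ℕ) (v w : Fin 4 → ℕ), ∑ i, ((v i - w i) + (w i - v i)) = D →
    (cell n v (D + r)).card ≤ (n + 1) ^ D * (cell n w r).card := by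
  induction D with
  | zero =>
    intro r v w h
    have : v = w := by
      funext i
      have := (Finset.sum_eq_zero_iff.1 h) i (Finset.mem_univ _)
      omega
    simp [this]
  | succ D ih =>
    intro r v w h
    obtain ⟨i, -, hi⟩ : ∃ i ∈ Finset.univ, (v i - w i) + (w i - v i) ≠ 0 := by
      by_contra hc
      push Not at hc
      rw [Finset.sum_eq_zero hc] at h; omega
    -- one step from `v` towards `w` in the coordinate `i`
    have step : ∀ v' : Fin 4 → ℕ, (∀ j, j ≠ i → v' j = v j) →
        (v' i - w i) + (w i - v' i) + 1 = (v i - w i) + (w i - v i) →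
        (cell n v (D + r + 1)).card ≤ (n + 1) * (cell n v' (D + r)).card →
        (cell n v (D + 1 + r)).card ≤ (n + 1) ^ (D + 1) * (cell n w r).card := by
      intro v' h1 h2 h3
      have hd : ∑ j, ((v' j - w j) + (w j - v' j)) = D := by
        rw [← Finset.add_sum_erase _ _ (Finset.mem_univ i)] at h ⊢
        rw [Finset.sum_congr rfl fun j hj => by rw [h1 j (Finset.ne_of_mem_erase hj)]]
        omega
      calc (cell n v (D + 1 + r)).card = (cell n v (D + r + 1)).card := by congr 2; ring
        _ ≤ (n + 1) * (cell n v' (D + r)).card := h3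
        _ ≤ (n + 1) * ((n + 1) ^ D * (cell n w r).card) := Nat.mul_le_mul_left _ (ih r v' w hd)
        _ = _ := by ring
    rcases Nat.lt_or_gt_of_ne (show v i ≠ w i by omega) with hlt | hgt
    · refine step (Function.update v i (v i + 1)) (fun j hj => by simp [hj]) (by simp; omega) ?_
      exact cell_inc n _ _ _ i (by simp) fun j hj => by simp [hj]
    · refine step (Function.update v i (v i - 1)) (fun j hj => by simp [hj]) (by simp; omega) ?_
      exact cell_dec n _ _ _ i (by simp; omega) fun j hj => by simp [hj]

lemma muVec_eq (n : ℕ) (i : Fin 4) : muVec n i = muL n (blockLen i) := by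
  simp only [muVec, expX, muL, numBlocks_eq _ _ (blockLen_spec i).1]

/-- The strings all of whose relevant block counts are within `7√n` of their means. -/
def typ (n : ℕ) : Finset (Fin n → Bool) := univ.filter fun x =>
  (∀ i, |((gapsOf x).count (blockLen i) : ℝ) - muL n (blockLen i)| ≤ 7 * √n) ∧
    |((gapsOf x).count 6 : ℝ) - muL n 6| ≤ 7 * √n

lemma card_typ (n : ℕ) (hn : 0 < n) : (2 : ℝ) ^ n ≤ 2 * (typ n).card := by
  let bad : ℕ → Finset (Fin n → Bool) := fun ℓ =>
    univ.filter fun x => 7 * √n < |((gapsOf x).count ℓ : ℝ) - muL n ℓ|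
  have hsub : (univ : Finset (Fin n → Bool)) ⊆
      typ n ∪ (bad 1 ∪ (bad 2 ∪ (bad 4 ∪ (bad 5 ∪ bad 6)))) := by
    intro x _
    simp only [Finset.mem_union, typ, bad, Finset.mem_filter, Finset.mem_univ, true_and,
      Fin.forall_fin_succ]
    by_contra hc
    push Not at hc
    obtain ⟨h0, h1, h2, h4, h5, h6⟩ := hc
    refine absurd h6 (not_le.2 (h0 ⟨?_, ?_, ?_, ?_, ?_⟩)) <;> simp [blockLen, *]
  have h := Finset.card_le_card hsub
  have hu : (univ : Finset (Fin n → Bool)).card = 2 ^ n := by simp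
  have h2 : (2 : ℝ) ^ n ≤ (typ n).card + ((bad 1).card + ((bad 2).card + ((bad 4).card +
      ((bad 5).card + (bad 6).card)))) := by
    have : 2 ^ n ≤ (typ n).card + ((bad 1).card + ((bad 2).card + ((bad 4).card +
        ((bad 5).card + (bad 6).card)))) := by
      rw [← hu]
      refine h.trans ((Finset.card_union_le _ _).trans ?_)
      gcongr
      refine (Finset.card_union_le _ _).trans ?_
      gcongr
      refine (Finset.card_union_le _ _).trans ?_
      gcongr
      refine (Finset.card_union_le _ _).trans ?_
      gcongr
      exact Finset.card_union_le _ _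
    exact_mod_cast this
  have hb : ∀ ℓ, ((bad ℓ).card : ℝ) ≤ 2 ^ n * (4 / 49) := fun ℓ => card_atypical n ℓ hn
  have := hb 1; have := hb 2; have := hb 4; have := hb 5; have := hb 6
  have : (0 : ℝ) < 2 ^ n := by positivity
  linarith

/-- Every block-count vector within `K√n` of the mean is attained by at least
`2 ^ n * exp (-O(√n log n))` strings. -/
lemma card_strSetV_lower (n : ℕ) (hn : 0 < n) (K : ℝ) (u : Fin 4 → ℕ) (D : ℕ)
    (hu : ∀ i, |(u i : ℝ) - muVec n i| ≤ K * √n) (hD : 4 * ((K + 7) * √n) ≤ D)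
    (h6 : (D : ℝ) + 7 * √n ≤ muL n 6) :
    (2 : ℝ) ^ n ≤ 2 * ((n + 2) ^ (4 + D) * (strSetV n u).card) := by
  let N : (Fin n → Bool) → (Fin 4 → ℕ) := fun x i => (gapsOf x).count (blockLen i)
  have key : (typ n).card ≤ ((n + 1) ^ D * (strSetV n u).card) *
      (Fintype.piFinset fun _ : Fin 4 => Finset.range (n + 2)).card := by
    refine Finset.card_le_mul_card_image_of_maps_to (f := N) ?_ _ ?_
    · intro x _
      rw [Fintype.mem_piFinset]
      intro i
      have h1 : (gapsOf x).count (blockLen i) ≤ (gapsOf x).length := List.count_le_length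
      have h2 := sum_gapsOf x
      simp only [N, Finset.mem_range]; omega
    · intro v _
      rcases ((typ n).filter fun x => N x = v).eq_empty_or_nonempty with he | ⟨x, hx⟩
      · rw [he]; simp
      have hx' := Finset.mem_filter.1 hx
      have ht := (Finset.mem_filter.1 hx'.1).2
      set d := ∑ i, ((v i - u i) + (u i - v i)) with hd
      have hdD : d ≤ D := by
        have : (d : ℝ) ≤ D := by
          refine le_trans ?_ hD
          rw [hd]
          push_cast
          calc ∑ i, (((v i - u i : ℕ) : ℝ) + ((u i - v i : ℕ) : ℝ)) ≤
              ∑ _i : Fin 4, ((K + 7) * √n) := by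
                refine Finset.sum_le_sum fun i _ => ?_
                have h1 := abs_le.1 (ht.1 i)
                have h2 := abs_le.1 (hu i)
                rw [muVec_eq] at h2
                have h3 : (gapsOf x).count (blockLen i) = v i := congrFun hx'.2 i
                rw [h3] at h1
                rcases le_total (u i) (v i) with hl | hl
                · rw [Nat.sub_eq_zero_of_le hl, Nat.cast_sub hl]; push_cast; linarith
                · rw [Nat.sub_eq_zero_of_le hl, Nat.cast_sub hl]; push_cast; linarith
            _ = 4 * ((K + 7) * √n) := by simp
        exact_mod_cast this
      calc ((typ n).filter fun x => N x = v).card ≤ (cell n v (d + 0)).card := by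
            refine Finset.card_le_card fun y hy => ?_
            have hy' := Finset.mem_filter.1 hy
            have hyt := (Finset.mem_filter.1 hy'.1).2
            rw [mem_cell]
            refine ⟨fun i => congrFun hy'.2 i, ?_⟩
            have h1 := abs_le.1 hyt.2
            have : ((d + 0 : ℕ) : ℝ) ≤ (gapsOf y).count 6 := by
              have : (d : ℝ) ≤ D := by exact_mod_cast hdD
              push_cast; linarith
            exact_mod_cast this
        _ ≤ (n + 1) ^ d * (cell n u 0).card := cell_le n d 0 v u hd.symm
        _ ≤ (n + 1) ^ D * (strSetV n u).card :=
            Nat.mul_le_mul (Nat.pow_le_pow_right (by omega) hdD)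
              (Finset.card_le_card (Finset.filter_subset _ _))
  have h2 : (typ n).card ≤ (n + 2) ^ (4 + D) * (strSetV n u).card := by
    refine key.trans ?_
    have : (Fintype.piFinset fun _ : Fin 4 => Finset.range (n + 2)).card = (n + 2) ^ 4 := by
      rw [Fintype.card_piFinset]; simp
    rw [this]
    calc ((n + 1) ^ D * (strSetV n u).card) * (n + 2) ^ 4 ≤
        ((n + 2) ^ D * (strSetV n u).card) * (n + 2) ^ 4 := by gcongr; omega
      _ = _ := by ring
  have h3 := card_typ n hn
  have h4 : ((typ n).card : ℝ) ≤ (n + 2) ^ (4 + D) * (strSetV n u).card := by exact_mod_cast h2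
  linarith

/-! ### Base points of the chains which reach the set `Iⁿ` -/

lemma abs_le_enorm4 (v : Fin 4 → ℝ) (i : Fin 4) : |v i| ≤ enorm4 v := by
  rw [enorm4]
  apply Real.abs_le_sqrt
  exact Finset.single_le_sum (f := fun i => v i ^ 2) (fun _ _ => sq_nonneg _) (Finset.mem_univ i)

lemma Iset_near {n : ℕ} {C : ℝ} (hC : 0 < C) {w : Fin 4 → ℝ} (hw : w ∈ Iset n C) (i : Fin 4) :
    |w i - muVec n i| ≤ 2 * C * √n := by
  obtain ⟨v, -, hv, k, hk, rfl⟩ := hw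
  have h1 := (abs_le_enorm4 v i).trans hv
  have h2 : |k * evec i| ≤ √n := by
    rw [abs_mul]
    have : |evec i| = 1 := by fin_cases i <;> simp [evec]
    rw [this, mul_one]; exact hk
  have e : (C • v + C • (k • evec) + muVec n) i - muVec n i = C * (v i + k * evec i) := by
    simp [smul_eq_mul]; ring
  rw [e, abs_mul, abs_of_pos hC]
  nlinarith [abs_add_le (v i) (k * evec i)]

lemma natVec_shiftV {m : Fin 4 → ℕ} {k : ℕ} (h0 : k ≤ m 0) (h3 : k ≤ m 3) :
    natVec (shiftV m k) = natVec m + (k : ℝ) • evec := by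
  funext i
  fin_cases i
  · simp [natVec, shiftV, evec, Nat.cast_sub h0]; ring
  · simp [natVec, shiftV, evec]
  · simp [natVec, shiftV, evec]
  · simp [natVec, shiftV, evec, Nat.cast_sub h3]; ring

/-- As long as the chain started at `m` passes through `Iⁿ` at time `k`, it keeps linearly many
blocks of lengths one and five up to that time, and a string with block counts `m` is unlikely
to have an atypical number of ones. -/
lemma Iset_facts (ε C : ℝ) (hε : 0 < ε) (hC : 0 < C) : ∃ n₀ : ℕ, ∀ n, n₀ ≤ n →
    ∀ (m : Fin 4 → ℕ) (k : ℕ), (strSetV n m).Nonempty → natVec m + (k : ℝ) • evec ∈ Iset n C →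
      (1 / 400 : ℝ) * n + k ≤ m 0 ∧ (1 / 400 : ℝ) * n + k ≤ m 3 ∧
      (((strSetV n m).filter fun x => ¬ balanced ε x).card : ℝ) ≤
        (strSetV n m).card * (4 * Real.exp (-(ε ^ 2 * n))) := by
  set a := 4 * (2 * C + 7) with ha
  set A := 1 + 8 * (5 + a) / ε ^ 2 + 300 * (a + 8) + 2400 * C with hA
  obtain ⟨n₀, hn₀⟩ := exists_nat_ge (A ^ 4 + 100)
  refine ⟨n₀, fun n hn m k hne hI => ?_⟩
  have hnA : A ^ 4 + 100 ≤ (n : ℝ) := hn₀.trans (by exact_mod_cast hn)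
  have ha0 : 0 < a := by positivity
  have hA1 : 1 ≤ A := by
    have : 0 ≤ 8 * (5 + a) / ε ^ 2 := by positivity
    rw [hA]; linarith
  have hn100 : 100 ≤ n := by
    have : (100 : ℝ) ≤ n := by
      have : 0 ≤ A ^ 4 := by positivity
      linarith
    exact_mod_cast this
  set s := √√(n : ℝ) with hs
  have hs0 : 0 ≤ s := Real.sqrt_nonneg _
  have hs2 : s ^ 2 = √n := Real.sq_sqrt (Real.sqrt_nonneg _)
  have hs4 : s ^ 4 = n := by
    rw [show s ^ 4 = (s ^ 2) ^ 2 by ring, hs2, Real.sq_sqrt (by positivity)]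
  have hsA : A ≤ s := by
    have : A ^ 4 ≤ s ^ 4 := by rw [hs4]; linarith
    exact le_of_pow_le_pow_left₀ (by norm_num) hs0 this
  have hs1 : 1 ≤ s := hA1.trans hsA
  have hb1 : 8 * (5 + a) ≤ ε ^ 2 * s := by
    have : 8 * (5 + a) / ε ^ 2 ≤ s := by rw [hA] at hsA; linarith
    rw [div_le_iff₀ (by positivity)] at this
    linarith
  have hb2 : 300 * (a + 8) ≤ s ^ 2 := by
    have h1 : 300 * (a + 8) ≤ s := by
      have : 0 ≤ 8 * (5 + a) / ε ^ 2 := by positivity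
      rw [hA] at hsA; linarith
    nlinarith
  have hb3 : 2400 * C ≤ s ^ 2 := by
    have h1 : 2400 * C ≤ s := by
      have : 0 ≤ 8 * (5 + a) / ε ^ 2 := by positivity
      rw [hA] at hsA; linarith
    nlinarith
  have hs2' : 1 ≤ s ^ 2 := one_le_pow₀ hs1
  have hcount : ∀ i, (1 / 400 : ℝ) * n ≤ (natVec m + (k : ℝ) • evec) i := by
    intro i
    have h1 := abs_le.1 (Iset_near hC hI i)
    have h2 := muL_lower (n := n) (blockLen_spec i).2.le hn100
    rw [← muVec_eq] at h2
    rw [← hs2] at h1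
    rw [← hs4] at h2 ⊢
    nlinarith
  have c0 : (1 / 400 : ℝ) * n + k ≤ m 0 := by
    have := hcount 0; simp [natVec, evec] at this; linarith
  have c3 : (1 / 400 : ℝ) * n + k ≤ m 3 := by
    have := hcount 3; simp [natVec, evec] at this; linarith
  refine ⟨c0, c3, ?_⟩
  have hn0 : (0 : ℝ) ≤ (1 / 400 : ℝ) * n := by positivity
  have k0 : k ≤ m 0 := by
    have : (k : ℝ) ≤ m 0 := by linarith
    exact_mod_cast this
  have k3 : k ≤ m 3 := by
    have : (k : ℝ) ≤ m 3 := by linarith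
    exact_mod_cast this
  set u := shiftV m k with hu
  have hue := natVec_shiftV k0 k3
  obtain ⟨hune, hratio⟩ := card_shift n m hne (fun o => ¬ |(o : ℝ) - n / 2| ≤ ε * n) k k0 k3
  set D := ⌈a * √(n : ℝ)⌉₊ with hD
  have hD1 : a * √(n : ℝ) ≤ D := Nat.le_ceil _
  have hD2 : (D : ℝ) ≤ a * √(n : ℝ) + 1 := (Nat.ceil_lt_add_one (by positivity)).le
  have hlow := card_strSetV_lower n (by omega) (2 * C) u D (fun i => by
      have := Iset_near hC hI i
      rw [← hue] at this
      exact this) (by rw [← mul_assoc, ← ha]; exact hD1) (by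
      refine le_trans ?_ (muL_lower (n := n) le_rfl hn100)
      rw [← hs2] at hD2 ⊢
      rw [← hs4]
      nlinarith)
  -- the polynomial-type loss is absorbed by half of the exponent
  have hpoly : ((n : ℝ) + 2) ^ (4 + D) ≤ Real.exp (ε ^ 2 * n) := by
    have hlog : Real.log ((n : ℝ) + 2) ≤ 8 * s := by
      have h100 : (100 : ℝ) ≤ n := by exact_mod_cast hn100
      have h1 : (n : ℝ) + 2 ≤ (2 * s) ^ 4 := by rw [mul_pow, hs4]; linarith
      calc Real.log ((n : ℝ) + 2) ≤ Real.log ((2 * s) ^ 4) := Real.log_le_log (by positivity) h1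
        _ = 4 * Real.log (2 * s) := by rw [Real.log_pow]; norm_num
        _ ≤ 4 * (2 * s) := by
            gcongr
            have := Real.log_le_sub_one_of_pos (show 0 < 2 * s by positivity)
            linarith
        _ = 8 * s := by ring
    rw [← Real.exp_log (show (0 : ℝ) < (n : ℝ) + 2 by positivity), ← Real.exp_nat_mul]
    apply Real.exp_le_exp.2
    push_cast
    calc (4 + (D : ℝ)) * Real.log ((n : ℝ) + 2) ≤ (4 + D) * (8 * s) := by gcongr
      _ ≤ ((5 + a) * s ^ 2) * (8 * s) := by
          gcongr
          rw [← hs2] at hD2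
          nlinarith
      _ = (8 * (5 + a)) * s ^ 3 := by ring
      _ ≤ (ε ^ 2 * s) * s ^ 3 := by gcongr
      _ = ε ^ 2 * n := by rw [← hs4]; ring
  have hU : (((strSetV n u).filter fun x => ¬ balanced ε x).card : ℝ) ≤
      (strSetV n u).card * (4 * Real.exp (-(ε ^ 2 * n))) := by
    calc (((strSetV n u).filter fun x => ¬ balanced ε x).card : ℝ) ≤
        ((univ.filter fun x : Fin n → Bool => ¬ balanced ε x).card : ℝ) := by
          exact_mod_cast Finset.card_le_card (Finset.filter_subset_filter _ (Finset.subset_univ _))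
      _ ≤ 2 ^ n * (2 * Real.exp (-(2 * ε ^ 2 * n))) := card_not_balanced n hε
      _ ≤ (2 * (Real.exp (ε ^ 2 * n) * (strSetV n u).card)) * (2 * Real.exp (-(2 * ε ^ 2 * n))) := by
          refine mul_le_mul_of_nonneg_right (hlow.trans ?_) (by positivity)
          gcongr
      _ = (strSetV n u).card * (4 * Real.exp (-(ε ^ 2 * n))) := by
          rw [show -(2 * ε ^ 2 * n) = -(ε ^ 2 * n) + -(ε ^ 2 * n) by ring, Real.exp_add]
          have : Real.exp (ε ^ 2 * n) * Real.exp (-(ε ^ 2 * n)) = 1 := by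
            rw [← Real.exp_add]; simp
          linear_combination (4 * Real.exp (-(ε ^ 2 * n)) * (strSetV n u).card) * this
  have hupos : (0 : ℝ) < (strSetV n u).card := by exact_mod_cast Finset.card_pos.2 hune
  have hratio' : (((strSetV n m).filter fun x => ¬ balanced ε x).card : ℝ) * (strSetV n u).card =
      ((strSetV n u).filter fun x => ¬ balanced ε x).card * (strSetV n m).card := by
    exact_mod_cast hratio
  refine le_of_mul_le_mul_right ?_ hupos
  rw [hratio']
  calc _ ≤ ((strSetV n u).card * (4 * Real.exp (-(ε ^ 2 * n)))) * (strSetV n m).card := by gcongr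
    _ = _ := by ring

/-! ### Sums over histories of the chain -/

/-- Sum of `F` over all histories of length `k`; the coordinates from `k` on, which `F` is meant
not to depend on, are set to a default value. -/
def hsum {α : Type*} [Fintype α] [Inhabited α] : ℕ → ((ℕ → α) → ℝ) → ℝ
  | 0, F => F fun _ => default
  | k + 1, F => hsum k fun xs => ∑ z, F (Function.update xs k z)

/-- The weight of a history of the chain with initial law `ν` and transition matrix `T`. -/
def wt {α : Type*} (ν : α → ℝ) (T : α → α → ℝ) (k : ℕ) (xs : ℕ → α) : ℝ :=
  ν (xs 0) * ∏ i ∈ Finset.range k, T (xs i) (xs (i + 1))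

lemma atom_eq {α Ω : Type*} [MeasurableSpace Ω] (P : Measure Ω) (Y : Ω → α) (X : ℕ → Ω → α)
    (ν : α → ℝ) (T : α → α → ℝ) (c : ℝ) (h0 : ∀ x y, P.real {ω | X 0 ω = x ∧ Y ω = y} = ν x * c)
    (hM : ∀ (k : ℕ) (y : α) (xs : ℕ → α) (z : α),
      P.real {ω | Y ω = y ∧ (∀ j ≤ k, X j ω = xs j) ∧ X (k + 1) ω = z} =
        P.real {ω | Y ω = y ∧ (∀ j ≤ k, X j ω = xs j)} * T (xs k) z) (k : ℕ) (y : α) (xs : ℕ → α) :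
    P.real {ω | Y ω = y ∧ ∀ j ≤ k, X j ω = xs j} = wt ν T k xs * c := by
  induction k with
  | zero =>
    rw [wt, Finset.prod_range_zero, mul_one, ← h0 (xs 0) y]
    congr 1
    ext1 ω
    simp [and_comm]
  | succ k ih =>
    have e : {ω | Y ω = y ∧ ∀ j ≤ k + 1, X j ω = xs j} =
        {ω | Y ω = y ∧ (∀ j ≤ k, X j ω = xs j) ∧ X (k + 1) ω = xs (k + 1)} := by
      ext1 ω
      simp only [Set.mem_ofPred_eq]
      refine and_congr_right fun _ => ⟨fun h => ⟨fun j hj => h j (by omega), h _ le_rfl⟩, ?_⟩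
      rintro ⟨h1, h2⟩ j hj
      rcases Nat.le_succ_iff.1 hj with h | rfl
      · exact h1 j h
      · exact h2
    rw [e, hM, ih, wt, wt, Finset.prod_range_succ]
    ring

section hsum

variable {α : Type*} [Fintype α] [Inhabited α]

lemma hsum_mono (k : ℕ) : ∀ {F G : (ℕ → α) → ℝ}, (∀ xs, F xs ≤ G xs) → hsum k F ≤ hsum k G := by
  induction k with
  | zero => intro F G h; exact h _
  | succ k ih => intro F G h; exact ih fun xs => Finset.sum_le_sum fun z _ => h _

lemma hsum_mul_right (k : ℕ) (c : ℝ) : ∀ F : (ℕ → α) → ℝ, hsum k (fun xs => F xs * c) = hsum k F * c := by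
  induction k with
  | zero => intro F; rfl
  | succ k ih => intro F; simp only [hsum, ← Finset.sum_mul, ih]

lemma hsum_sum {ι : Type*} (s : Finset ι) (k : ℕ) : ∀ F : ι → (ℕ → α) → ℝ,
    hsum k (fun xs => ∑ y ∈ s, F y xs) = ∑ y ∈ s, hsum k (F y) := by
  induction k with
  | zero => intro F; rfl
  | succ k ih =>
    intro F
    simp only [hsum]
    rw [← ih]
    congr 1
    funext xs
    exact Finset.sum_comm

/-- A product of kernels whose row sums are at most `r i`, summed over histories. -/
lemma hsum_chain (ν : α → ℝ) (hν : ∀ x, 0 ≤ ν x) (hν1 : ∑ x, ν x ≤ 1) (v : ℕ → α → α → ℝ)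
    (r : ℕ → ℝ) (hv : ∀ i x z, 0 ≤ v i x z) (hr0 : ∀ i, 0 ≤ r i) (hr : ∀ i x, ∑ z, v i x z ≤ r i)
    (k : ℕ) : hsum (k + 1) (fun xs => ν (xs 0) * ∏ i ∈ Finset.range k, v i (xs i) (xs (i + 1))) ≤
      ∏ i ∈ Finset.range k, r i := by
  induction k with
  | zero => simpa [hsum] using hν1
  | succ k ih =>
    rw [Finset.prod_range_succ, hsum]
    refine le_trans ?_ (mul_le_mul_of_nonneg_right ih (hr0 k))
    rw [← hsum_mul_right]
    refine hsum_mono _ fun xs => ?_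
    have e : ∀ z, ν (Function.update xs (k + 1) z 0) * ∏ i ∈ Finset.range (k + 1),
        v i (Function.update xs (k + 1) z i) (Function.update xs (k + 1) z (i + 1)) =
        (ν (xs 0) * ∏ i ∈ Finset.range k, v i (xs i) (xs (i + 1))) * v k (xs k) z := by
      intro z
      rw [Finset.prod_range_succ, ← mul_assoc]
      congr 1
      · rw [Function.update_of_ne (by omega)]
        congr 1
        refine Finset.prod_congr rfl fun i hi => ?_
        rw [Finset.mem_range] at hi
        rw [Function.update_of_ne (by omega), Function.update_of_ne (by omega)]
      · rw [Function.update_of_ne (by omega), Function.update_self]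
    rw [Finset.sum_congr rfl fun z _ => e z, ← Finset.mul_sum]
    refine mul_le_mul_of_nonneg_left (hr k _) ?_
    exact mul_nonneg (hν _) (Finset.prod_nonneg fun i _ => hv _ _ _)

variable {Ω : Type} [MeasurableSpace Ω] (P : Measure Ω) [IsProbabilityMeasure P]

/-- An event is covered by its intersections with the atoms given by the histories. Only
subadditivity is used, as the random variables are not assumed measurable. -/
lemma real_le_hsum (X : ℕ → Ω → α) (k : ℕ) (A : Set Ω) :
    P.real A ≤ hsum k fun xs => P.real {ω | ω ∈ A ∧ ∀ j < k, X j ω = xs j} := by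
  induction k with
  | zero => simp [hsum]
  | succ k ih =>
    refine ih.trans (hsum_mono k fun xs => ?_)
    refine le_trans ?_ (measureReal_biUnion_finset_le (μ := P) univ
      (fun z => {ω | ω ∈ A ∧ ∀ j < k + 1, X j ω = Function.update xs k z j}))
    refine measureReal_mono (fun ω hω => ?_) (measure_ne_top _ _)
    simp only [Set.mem_iUnion, Finset.mem_univ, exists_prop, true_and]
    refine ⟨X k ω, hω.1, fun j hj => ?_⟩
    rcases Nat.lt_succ_iff_lt_or_eq.1 hj with h | rfl
    · rw [Function.update_of_ne h.ne]; exact hω.2 j h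
    · rw [Function.update_self]

variable (Y : Ω → α) (X : ℕ → Ω → α) (ν : α → ℝ) (T : α → α → ℝ) (c : ℝ)

/-- Bound for the probability of an event whose indicator is dominated by a function `G` of the
string `Y` and the history of the chain up to time `k`. -/
lemma real_le_sum (hν : ∀ x, 0 ≤ ν x) (hT : ∀ x z, 0 ≤ T x z) (hc : 0 ≤ c)
    (h0 : ∀ x y, P.real {ω | X 0 ω = x ∧ Y ω = y} = ν x * c)
    (hM : ∀ (k : ℕ) (y : α) (xs : ℕ → α) (z : α),
      P.real {ω | Y ω = y ∧ (∀ j ≤ k, X j ω = xs j) ∧ X (k + 1) ω = z} =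
        P.real {ω | Y ω = y ∧ (∀ j ≤ k, X j ω = xs j)} * T (xs k) z)
    (A : Set Ω) (k : ℕ) (G : α → (ℕ → α) → ℝ) (hG0 : ∀ y xs, 0 ≤ G y xs)
    (hG : ∀ ω ∈ A, ∀ xs : ℕ → α, (∀ j ≤ k, X j ω = xs j) → 1 ≤ G (Y ω) xs) :
    P.real A ≤ ∑ y, hsum (k + 1) (fun xs => wt ν T k xs * c * G y xs) := by
  have h1 : P.real A ≤ ∑ y, P.real {ω | ω ∈ A ∧ Y ω = y} := by
    refine le_trans (measureReal_mono (fun ω hω => ?_) (measure_ne_top _ _))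
      (measureReal_biUnion_finset_le (μ := P) univ (fun y => {ω | ω ∈ A ∧ Y ω = y}))
    simp only [Set.mem_iUnion, Finset.mem_univ, exists_prop, true_and]
    exact ⟨Y ω, hω, rfl⟩
  refine h1.trans (Finset.sum_le_sum fun y _ => ?_)
  refine (real_le_hsum P X (k + 1) _).trans (hsum_mono _ fun xs => ?_)
  have hwt : 0 ≤ wt ν T k xs * c :=
    mul_nonneg (mul_nonneg (hν _) (Finset.prod_nonneg fun i _ => hT _ _)) hc
  rcases Set.eq_empty_or_nonempty {ω | ω ∈ {ω | ω ∈ A ∧ Y ω = y} ∧ ∀ j < k + 1, X j ω = xs j} with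
    he | ⟨ω, ⟨hA, hy⟩, hx⟩
  · rw [he]; simpa using mul_nonneg hwt (hG0 y xs)
  · have h2 := hG ω hA xs fun j hj => hx j (by omega)
    rw [hy] at h2
    rw [← atom_eq P Y X ν T c h0 hM k y xs] at hwt ⊢
    refine le_trans (measureReal_mono ?_) (le_mul_of_one_le_right hwt h2)
    rintro ω' ⟨⟨_, h3⟩, h4⟩
    exact ⟨h3, fun j hj => h4 j (by omega)⟩

end hsum

/-! ### The block-moving chain -/

lemma transProb_nonneg {n : ℕ} (x z : Fin n → Bool) : 0 ≤ transProb x z := by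
  rw [transProb]; split_ifs <;> positivity

lemma sum_transProb_one {n : ℕ} (x : Fin n → Bool) : ∑ z, transProb x z = 1 := by
  by_cases h : (starts x 5).Nonempty ∧ (starts x 1).Nonempty
  · have h5 : 0 < numBlocks x 5 := Finset.card_pos.2 h.1
    have h1 : 0 < numBlocks x 1 := Finset.card_pos.2 h.2
    have := sum_transProb x h5 h1 fun _ => 1
    simp only [mul_one, Finset.sum_const, card_idx, nsmul_eq_mul] at this
    rw [this, ← numBlocks_eq x 5 (by norm_num), ← numBlocks_eq x 1 (by norm_num)]
    field_simp
  · simp [transProb, h]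

/-- A transition of the chain adds `e` to the block counts and keeps the number of ones. -/
lemma transProb_support {n : ℕ} {u : Fin 4 → ℕ} {x z : Fin n → Bool} (hx : x ∈ strSetV n u)
    (h0 : 0 < u 0) (h3 : 0 < u 3) (h : transProb x z ≠ 0) :
    z ∈ strSetV n (shiftV u 1) ∧ onesOf z = onesOf x := by
  obtain ⟨c1, c2, c4, c5⟩ := mem_strSetV.1 hx
  have n5 : 0 < numBlocks x 5 := by rw [numBlocks_eq x 5 (by norm_num)]; omega
  have n1 : 0 < numBlocks x 1 := by rw [numBlocks_eq x 1 (by norm_num)]; omega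
  have hc : (starts x 5).Nonempty ∧ (starts x 1).Nonempty :=
    ⟨Finset.card_pos.1 n5, Finset.card_pos.1 n1⟩
  rw [transProb, if_pos hc] at h
  have hp : pairCount x z ≠ 0 := by
    intro h'
    rw [h'] at h; simp at h
  obtain ⟨⟨p, q⟩, hpq⟩ := Finset.card_pos.1 (Nat.pos_of_ne_zero hp)
  rw [Finset.mem_filter, Finset.mem_product, starts_eq x 5 (by norm_num),
    starts_eq x 1 (by norm_num), Finset.mem_image, Finset.mem_image] at hpq
  obtain ⟨⟨⟨i, hi, rfl⟩, k, hk, rfl⟩, rfl⟩ := hpq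
  have hg := gapsOf_modifyStr x i k hi hk
  rw [mem_idx] at hi hk
  have hne : i ≠ k := by rintro rfl; rw [hi] at hk; simp at hk
  have hk' : ((gapsOf x).set i 4)[k]? = some 1 := by rw [List.getElem?_set_ne hne]; exact hk
  refine ⟨?_, ?_⟩
  · rw [mem_strSetV]
    simp only [hg]
    refine ⟨?_, ?_, ?_, ?_⟩
    · have a1 := count_set hi 4 1; have a2 := count_set hk' 2 1
      simp [shiftV] at a1 a2 ⊢; omega
    · have a1 := count_set hi 4 2; have a2 := count_set hk' 2 2
      simp [shiftV] at a1 a2 ⊢; omega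
    · have a1 := count_set hi 4 4; have a2 := count_set hk' 2 4
      simp [shiftV] at a1 a2 ⊢; omega
    · have a1 := count_set hi 4 5; have a2 := count_set hk' 2 5
      simp [shiftV] at a1 a2 ⊢; omega
  · have a := length_gapsOf x
    have b := length_gapsOf (modifyStr x (pos (gapsOf x) i) (pos (gapsOf x) k))
    rw [hg] at b
    simp only [List.length_set] at b
    change onesOf (modifyStr x (pos (gapsOf x) i) (pos (gapsOf x) k)) = _
    omega

/-- The initial law of the chain: uniform on the strings with block counts `m`. -/
def nu (n : ℕ) (m : Fin 4 → ℕ) (x : Fin n → Bool) : ℝ :=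
  if x ∈ strSetV n m then (1 : ℝ) / ((strSetV n m).card : ℝ) else 0

lemma nu_nonneg (n : ℕ) (m : Fin 4 → ℕ) (x : Fin n → Bool) : 0 ≤ nu n m x := by
  rw [nu]; split_ifs <;> positivity

lemma sum_nu (n : ℕ) (m : Fin 4 → ℕ) (P : (Fin n → Bool) → Prop) :
    ∑ x, (if P x then nu n m x else 0) =
      ((strSetV n m).filter P).card / ((strSetV n m).card : ℝ) := by
  have e : ∀ x, (if P x then nu n m x else 0) =
      if x ∈ (strSetV n m).filter P then (1 : ℝ) / ((strSetV n m).card : ℝ) else 0 := by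
    intro x
    simp only [nu]
    by_cases h1 : P x <;> by_cases h2 : x ∈ strSetV n m <;> simp [h1, h2]
  rw [Finset.sum_congr rfl fun x _ => e x, Finset.sum_ite_mem, Finset.univ_inter, Finset.sum_const,
    nsmul_eq_mul]
  ring

lemma sum_nu_le (n : ℕ) (m : Fin 4 → ℕ) : ∑ x, nu n m x ≤ 1 := by
  have := sum_nu n m fun _ => True
  simp only [if_true, Finset.filter_true] at this
  rw [this]
  exact div_self_le_one _

lemma wt_support {n : ℕ} {m : Fin 4 → ℕ} (xs : ℕ → Fin n → Bool) (k : ℕ) (h0 : k ≤ m 0)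
    (h3 : k ≤ m 3) (h : wt (nu n m) transProb k xs ≠ 0) :
    xs k ∈ strSetV n (shiftV m k) ∧ onesOf (xs k) = onesOf (xs 0) := by
  induction k with
  | zero =>
    have e : shiftV m 0 = m := by funext i; fin_cases i <;> simp [shiftV]
    rw [e]
    refine ⟨?_, rfl⟩
    by_contra hc
    simp [wt, nu, hc] at h
  | succ k ih =>
    have e : wt (nu n m) transProb (k + 1) xs =
        wt (nu n m) transProb k xs * transProb (xs k) (xs (k + 1)) := by
      rw [wt, wt, Finset.prod_range_succ]; ring
    rw [e] at h
    obtain ⟨i1, i2⟩ := ih (by omega) (by omega) (left_ne_zero_of_mul h)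
    obtain ⟨j1, j2⟩ := transProb_support i1 (by simp [shiftV]; omega) (by simp [shiftV]; omega)
      (right_ne_zero_of_mul h)
    rw [shiftV_succ] at j1
    exact ⟨j1, j2.trans i2⟩

lemma hsum_wt_le (n : ℕ) (m : Fin 4 → ℕ) (k : ℕ) : hsum (k + 1) (wt (nu n m) transProb k) ≤ 1 := by
  have := hsum_chain (nu n m) (nu_nonneg n m) (sum_nu_le n m) (fun _ => transProb) (fun _ => 1)
    (fun _ => transProb_nonneg) (fun _ => zero_le_one) (fun _ x => (sum_transProb_one x).le) k
  change hsum (k + 1) (fun xs : ℕ → Fin n → Bool =>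
    nu n m (xs 0) * ∏ i ∈ Finset.range k, transProb (xs i) (xs (i + 1))) ≤ 1
  simpa using this

lemma wt_nonneg {n : ℕ} (m : Fin 4 → ℕ) (k : ℕ) (xs : ℕ → Fin n → Bool) :
    0 ≤ wt (nu n m) transProb k xs :=
  mul_nonneg (nu_nonneg _ _ _) (Finset.prod_nonneg fun _ _ => transProb_nonneg _ _)

lemma prod_exp_telescope (f : ℕ → ℝ) (j : ℕ) : ∀ k, j ≤ k →
    ∏ i ∈ Finset.range k, (if j ≤ i then Real.exp (-lam * (f (i + 1) - f i)) else 1) =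
      Real.exp (-lam * (f k - f j)) := by
  intro k hk
  induction k, hk using Nat.le_induction with
  | base =>
    rw [Finset.prod_congr rfl (g := fun _ => 1) fun i hi => if_neg (by simpa using hi)]
    simp
  | succ k hk ih =>
    rw [Finset.prod_range_succ, ih, if_pos hk, ← Real.exp_add]
    congr 1; ring

lemma prod_ratio (c : ℝ) (j k : ℕ) (h : j ≤ k) :
    ∏ i ∈ Finset.range k, (if j ≤ i then c else 1) = c ^ (k - j) := by
  induction k, h using Nat.le_induction with
  | base =>
    rw [Finset.prod_congr rfl (g := fun _ => 1) fun i hi => if_neg (by simpa using hi)]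
    simp
  | succ k hk ih =>
    rw [Finset.prod_range_succ, ih, if_pos hk, Nat.sub_add_comm hk, pow_succ]

/-- The tilt by the slope `0.02` costs less than the contraction of the exponential moment. -/
lemma contraction : 0.997 * Real.exp (lam * 0.02) ≤ 0.999 := by
  have h : Real.exp (lam * 0.02) ≤ 1.002 := by
    refine le_of_pow_le_pow_left₀ (n := 50) (by norm_num) (by norm_num) ?_
    rw [← Real.exp_nat_mul, show ((50 : ℕ) : ℝ) * (lam * 0.02) = lam by push_cast; ring, exp_lam]
    have := one_add_mul_le_pow (show (-2 : ℝ) ≤ 0.002 by norm_num) 50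
    norm_num at this ⊢
  linarith

/-- The probability that the slope condition fails between the times `j` and `k` of the chain
started at `m`. -/
lemma real_fail_le {Ω : Type} [MeasurableSpace Ω] (P : Measure Ω) [IsProbabilityMeasure P]
    {n : ℕ} (hn : 0 < n) (S ε δ : ℝ) (hε : 0 < ε) (m : Fin 4 → ℕ) (hne : (strSetV n m).Nonempty)
    (Y : Ω → Fin n → Bool) (X : ℕ → Ω → Fin n → Bool)
    (h0 : ∀ x y, P.real {ω | X 0 ω = x ∧ Y ω = y} = nu n m x * (1 / 2 ^ n))
    (hM : ∀ (k : ℕ) (y : Fin n → Bool) (xs : ℕ → Fin n → Bool) (z : Fin n → Bool),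
      P.real {ω | Y ω = y ∧ (∀ j ≤ k, X j ω = xs j) ∧ X (k + 1) ω = z} =
        P.real {ω | Y ω = y ∧ (∀ j ≤ k, X j ω = xs j)} * transProb (xs k) z)
    (j k : ℕ) (hjk : j ≤ k) (k0 : (1 / 400 : ℝ) * n + k ≤ m 0) (k3 : (1 / 400 : ℝ) * n + k ≤ m 3)
    (hδ : 0 ≤ δ) (hgood : ∀ x : Fin n → Bool, balanced ε x → (1 / 400 : ℝ) * n ≤ numBlocks x 1 →
      (1 / 400 : ℝ) * n ≤ numBlocks x 5 →
      ((univ.filter fun y : Fin n → Bool => balanced ε y ∧ ¬ goodPair S x y).card : ℝ) ≤ 2 ^ n * δ)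
    (hstart : (((strSetV n m).filter fun x => ¬ balanced ε x).card : ℝ) ≤
        (strSetV n m).card * (4 * Real.exp (-(ε ^ 2 * n)))) :
    P.real {ω | optScore S n (X k ω) (Y ω) - optScore S n (X j ω) (Y ω) < 0.02 * (k - j)} ≤
      2 * Real.exp (-(2 * ε ^ 2 * n)) + 4 * Real.exp (-(ε ^ 2 * n)) + k * δ + 0.999 ^ (k - j) := by
  have hn0 : (0 : ℝ) ≤ (1 / 400 : ℝ) * n := by positivity
  have kk0 : k ≤ m 0 := by
    have : (k : ℝ) ≤ m 0 := by linarith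
    exact_mod_cast this
  have kk3 : k ≤ m 3 := by
    have : (k : ℝ) ≤ m 3 := by linarith
    exact_mod_cast this
  have h2n : (0 : ℝ) < 2 ^ n := by positivity
  have cover := fun A k G => real_le_sum P Y X (nu n m) transProb (1 / 2 ^ n) (nu_nonneg n m)
    transProb_nonneg (by positivity) h0 hM A k G
  let L : ℕ → Ω → ℝ := fun i ω => optScore S n (X i ω) (Y ω)
  set A1 : Set Ω := {ω | ¬ balanced ε (Y ω)} with hA1
  set A2 : Set Ω := {ω | ¬ balanced ε (X 0 ω)} with hA2
  let A3 : ℕ → Set Ω := fun i =>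
    {ω | balanced ε (Y ω) ∧ balanced ε (X 0 ω) ∧ ¬ goodPair S (X i ω) (Y ω)}
  set A4 : Set Ω := {ω | L k ω - L j ω < 0.02 * (k - j) ∧
    ∀ i ∈ Finset.range k, goodPair S (X i ω) (Y ω)} with hA4
  have hsub : {ω | optScore S n (X k ω) (Y ω) - optScore S n (X j ω) (Y ω) < 0.02 * (k - j)} ⊆
      A1 ∪ A2 ∪ (⋃ i ∈ Finset.range k, A3 i) ∪ A4 := by
    intro ω hω
    by_cases h1 : balanced ε (Y ω)
    swap
    · exact Or.inl (Or.inl (Or.inl h1))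
    by_cases h2 : balanced ε (X 0 ω)
    swap
    · exact Or.inl (Or.inl (Or.inr h2))
    by_cases h3 : ∀ i ∈ Finset.range k, goodPair S (X i ω) (Y ω)
    · exact Or.inr ⟨hω, h3⟩
    · push Not at h3
      obtain ⟨i, hi, h3⟩ := h3
      refine Or.inl (Or.inr ?_)
      simp only [Set.mem_iUnion, exists_prop]
      exact ⟨i, hi, h1, h2, h3⟩
  have b1 : P.real A1 ≤ 2 * Real.exp (-(2 * ε ^ 2 * n)) := by
    refine (cover A1 0 (fun y _ => if ¬ balanced ε y then 1 else 0)
      (fun _ _ => by split_ifs <;> simp) (fun ω hω xs _ => by rw [if_pos (show ¬ balanced ε (Y ω) from hω)])).trans ?_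
    have e : ∀ y : Fin n → Bool, hsum (0 + 1) (fun xs => wt (nu n m) transProb 0 xs * (1 / 2 ^ n) *
        (if ¬ balanced ε y then (1 : ℝ) else 0)) ≤ (1 / 2 ^ n) * if ¬ balanced ε y then (1 : ℝ) else 0 := by
      intro y
      rw [hsum_mul_right, hsum_mul_right]
      refine mul_le_mul_of_nonneg_right ?_ (by split_ifs <;> simp)
      exact mul_le_of_le_one_left (by positivity) (hsum_wt_le n m 0)
    refine (Finset.sum_le_sum fun y _ => e y).trans ?_
    rw [← Finset.mul_sum, Finset.sum_boole, one_div, inv_mul_le_iff₀ h2n]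
    refine le_trans (le_of_eq ?_) (card_not_balanced n hε)
    congr!
  have b2 : P.real A2 ≤ 4 * Real.exp (-(ε ^ 2 * n)) := by
    refine (cover A2 0 (fun _ xs => if ¬ balanced ε (xs 0) then 1 else 0)
      (fun _ _ => by split_ifs <;> simp)
      (fun ω hω xs hxs => by rw [if_pos (by rw [← hxs 0 le_rfl]; exact hω)])).trans ?_
    have e : ∑ x, (if ¬ balanced ε x then nu n m x else 0) ≤ 4 * Real.exp (-(ε ^ 2 * n)) := by
      have hpos : (0 : ℝ) < (strSetV n m).card := by exact_mod_cast Finset.card_pos.2 hne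
      have := sum_nu n m fun x => ¬ balanced ε x
      refine le_trans (le_of_eq (Eq.trans ?_ this)) ?_
      · congr!
      rw [div_le_iff₀ hpos]
      refine (le_trans (le_of_eq ?_) hstart).trans (le_of_eq (mul_comm _ _))
      congr!
    have e2 : ∀ y : Fin n → Bool, hsum (0 + 1) (fun xs : ℕ → Fin n → Bool =>
        wt (nu n m) transProb 0 xs * (1 / 2 ^ n) * (if ¬ balanced ε (xs 0) then (1 : ℝ) else 0)) =
        (1 / 2 ^ n) * ∑ x, (if ¬ balanced ε x then nu n m x else 0) := by
      intro _
      simp only [hsum, wt, Finset.range_zero, Finset.prod_empty, Function.update_self]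
      rw [Finset.mul_sum]
      refine Finset.sum_congr rfl fun x _ => ?_
      split_ifs <;> ring
    rw [Finset.sum_congr rfl fun y _ => e2 y, Finset.sum_const, nsmul_eq_mul]
    simp only [Finset.card_univ, Fintype.card_fun, Fintype.card_bool, Fintype.card_fin]
    push_cast
    rw [← mul_assoc, mul_one_div_cancel h2n.ne', one_mul]
    exact e
  have b3 : ∀ i ∈ Finset.range k, P.real (A3 i) ≤ δ := by
    intro i hi
    rw [Finset.mem_range] at hi
    refine (cover (A3 i) i (fun y xs => if balanced ε y ∧ balanced ε (xs 0) ∧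
      ¬ goodPair S (xs i) y then 1 else 0) (fun _ _ => by split_ifs <;> simp)
      (fun ω hω xs hxs => by
        rw [if_pos (by rw [← hxs 0 (Nat.zero_le _), ← hxs i le_rfl]; exact hω)])).trans ?_
    rw [← hsum_sum]
    refine le_trans (hsum_mono _ (G := fun xs => wt (nu n m) transProb i xs * δ) fun xs => ?_) ?_
    · rw [← Finset.mul_sum, mul_assoc]
      by_cases hw : wt (nu n m) transProb i xs = 0
      · rw [hw]; simp
      refine mul_le_mul_of_nonneg_left ?_ (wt_nonneg m i xs)
      obtain ⟨s1, s2⟩ := wt_support xs i (by omega) (by omega) hw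
      rw [one_div, inv_mul_le_iff₀ h2n, Finset.sum_boole]
      by_cases hb : balanced ε (xs 0)
      · have hb' : balanced ε (xs i) := by rw [balanced, s2]; exact hb
        obtain ⟨c1, -, -, c5⟩ := mem_strSetV.1 s1
        have hik : (i : ℝ) ≤ k := by exact_mod_cast hi.le
        refine le_trans ?_ (hgood (xs i) hb' ?_ ?_)
        · rw [Nat.cast_le]
          refine Finset.card_le_card fun y hy => ?_
          rw [Finset.mem_filter] at hy ⊢
          exact ⟨hy.1, hy.2.1, hy.2.2.2⟩
        · rw [numBlocks_eq _ 1 (by norm_num), c1]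
          simp only [shiftV, Matrix.cons_val_zero]
          rw [Nat.cast_sub (by omega)]; linarith
        · rw [numBlocks_eq _ 5 (by norm_num), c5]
          simp only [shiftV, Matrix.cons_val]
          rw [Nat.cast_sub (by omega)]; linarith
      · rw [Finset.filter_false_of_mem fun y _ h => hb h.2.1]
        simp; positivity
    · rw [hsum_mul_right]
      exact mul_le_of_le_one_left hδ (hsum_wt_le n m i)
  have b4 : P.real A4 ≤ 0.999 ^ (k - j) := by
    -- exponential Markov inequality along the chain, given `Y = y`
    let w : (Fin n → Bool) → ℕ → (Fin n → Bool) → (Fin n → Bool) → ℝ := fun y i x z =>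
      if j ≤ i then (if goodPair S x y then
        Real.exp (-lam * (optScore S n z y - optScore S n x y)) else 0) else 1
    have hw : ∀ y i x z, 0 ≤ w y i x z := by
      intro y i x z; simp only [w]; split_ifs <;> positivity
    let t : ℝ := Real.exp (lam * 0.02) ^ (k - j)
    refine (cover A4 k (fun y xs => (∏ i ∈ Finset.range k, w y i (xs i) (xs (i + 1))) * t)
      (fun y xs => mul_nonneg (Finset.prod_nonneg fun _ _ => hw _ _ _ _) (by positivity)) ?_).trans ?_
    · rintro ω ⟨hf, hg⟩ xs hxs
      have e : ∏ i ∈ Finset.range k, w (Y ω) i (xs i) (xs (i + 1)) =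
          Real.exp (-lam * (L k ω - L j ω)) := by
        rw [← prod_exp_telescope (fun i => L i ω) j k hjk]
        refine Finset.prod_congr rfl fun i hi => ?_
        have hi' := Finset.mem_range.1 hi
        simp only [w, L]
        rw [← hxs i (by omega), ← hxs (i + 1) (by omega), if_pos (hg i hi)]
      simp only [t]
      rw [e, ← Real.exp_nat_mul, ← Real.exp_add]
      apply Real.one_le_exp
      rw [Nat.cast_sub hjk]
      nlinarith [lam_pos]
    · have e : ∀ y : Fin n → Bool, hsum (k + 1) (fun xs => wt (nu n m) transProb k xs * (1 / 2 ^ n) *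
          ((∏ i ∈ Finset.range k, w y i (xs i) (xs (i + 1))) * t)) ≤
          (1 / 2 ^ n) * 0.999 ^ (k - j) := by
        intro y
        have h := hsum_chain (nu n m) (nu_nonneg n m) (sum_nu_le n m)
          (fun i x z => transProb x z * w y i x z) (fun i => if j ≤ i then 0.997 else 1)
          (fun i x z => mul_nonneg (transProb_nonneg _ _) (hw _ _ _ _))
          (fun i => by positivity) (by
            intro i x
            by_cases hi : j ≤ i
            · simp only [w, if_pos hi]
              by_cases hg : goodPair S x y
              · simp only [if_pos hg]
                exact hg
              · simp only [if_neg hg, mul_zero, Finset.sum_const_zero]; norm_num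
            · simp only [w, if_neg hi, mul_one]
              exact (sum_transProb_one x).le) k
        rw [prod_ratio _ _ _ hjk] at h
        have e : ∀ xs : ℕ → Fin n → Bool, wt (nu n m) transProb k xs * (1 / 2 ^ n) *
            ((∏ i ∈ Finset.range k, w y i (xs i) (xs (i + 1))) * t) =
            (nu n m (xs 0) * ∏ i ∈ Finset.range k, (transProb (xs i) (xs (i + 1)) *
              w y i (xs i) (xs (i + 1)))) * ((1 / 2 ^ n) * t) := by
          intro xs; rw [wt, Finset.prod_mul_distrib]; ring
        simp only [e]
        rw [hsum_mul_right]
        calc _ ≤ (0.997 : ℝ) ^ (k - j) * ((1 / 2 ^ n) * t) := by gcongr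
          _ = (1 / 2 ^ n) * (0.997 * Real.exp (lam * 0.02)) ^ (k - j) := by rw [mul_pow]; ring
          _ ≤ _ := by gcongr; exact contraction
      refine (Finset.sum_le_sum fun y _ => e y).trans (le_of_eq ?_)
      rw [Finset.sum_const, nsmul_eq_mul]
      simp only [Finset.card_univ, Fintype.card_fun, Fintype.card_bool, Fintype.card_fin]
      push_cast
      rw [← mul_assoc, mul_one_div_cancel h2n.ne', one_mul]
  calc _ ≤ P.real (A1 ∪ A2 ∪ (⋃ i ∈ Finset.range k, A3 i) ∪ A4) :=
        measureReal_mono hsub (measure_ne_top _ _)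
    _ ≤ P.real A1 + P.real A2 + P.real (⋃ i ∈ Finset.range k, A3 i) + P.real A4 := by
        refine (measureReal_union_le _ _).trans ?_
        gcongr
        refine (measureReal_union_le _ _).trans ?_
        gcongr
        exact measureReal_union_le _ _
    _ ≤ _ := by
        have b3' : P.real (⋃ i ∈ Finset.range k, A3 i) ≤ k * δ := by
          refine (measureReal_biUnion_finset_le _ _).trans ((Finset.sum_le_sum b3).trans ?_)
          simp
        linarith

/-! ### Union bound and conclusion -/

lemma enorm4_evec (t : ℝ) (ht : 0 ≤ t) : enorm4 (t • evec) = 2 * t := by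
  have : ∑ i, (t • evec) i ^ 2 = (2 * t) ^ 2 := by
    simp [Fin.sum_univ_four, evec]; ring
  rw [enorm4, this, Real.sqrt_sq (by linarith)]

/-- Polynomial factors are negligible against `exp (-a * n ^ 0.1)`. -/
lemma poly_mul_exp_tendsto (a : ℝ) (ha : 0 < a) :
    Tendsto (fun n : ℕ => 15 * (((n : ℝ) + 1) ^ 8 * Real.exp (-a * (n : ℝ) ^ (0.1 : ℝ)))) atTop
      (nhds 0) := by
  have h1 : Tendsto (fun n : ℕ => (n : ℝ) ^ (0.1 : ℝ)) atTop atTop :=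
    (tendsto_rpow_atTop (by norm_num)).comp tendsto_natCast_atTop_atTop
  have h2 := (tendsto_rpow_mul_exp_neg_mul_atTop_nhds_zero 80 a ha).comp h1
  have h3 := h2.const_mul (15 * 2 ^ 8)
  rw [mul_zero] at h3
  refine squeeze_zero' (Eventually.of_forall fun n => by positivity) ?_ h3
  filter_upwards [eventually_ge_atTop 1] with n hn
  have hn' : (1 : ℝ) ≤ n := by exact_mod_cast hn
  have e : ((n : ℝ) ^ (0.1 : ℝ)) ^ (80 : ℝ) = (n : ℝ) ^ 8 := by
    rw [← Real.rpow_mul (by positivity), ← Real.rpow_natCast]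
    norm_num
  simp only [Function.comp]
  rw [e]
  have : ((n : ℝ) + 1) ^ 8 ≤ 2 ^ 8 * (n : ℝ) ^ 8 := by
    rw [← mul_pow]; gcongr; linarith
  calc _ ≤ 15 * (2 ^ 8 * (n : ℝ) ^ 8 * Real.exp (-a * (n : ℝ) ^ (0.1 : ℝ))) := by gcongr
    _ = _ := by ring

lemma numBlocks_le {n : ℕ} (x : Fin n → Bool) (ℓ : ℕ) : numBlocks x ℓ ≤ n := by
  simpa [numBlocks, starts] using Finset.card_filter_le (Finset.range n) (blockStart x ℓ)

/-- All the terms of the bound for a single pair of times are dominated by one stretched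
exponential. -/
lemma fail_bound_le {ε a : ℝ} {n j k : ℕ} (ha : a ≤ ε ^ 2) (ha0 : 0 ≤ a) (ha1 : a ≤ 0.00001)
    (hn : 1 ≤ n) (hk : k ≤ n) (hjk : j ≤ k) (h : (j : ℝ) + (n : ℝ) ^ (0.1 : ℝ) ≤ k) :
    2 * Real.exp (-(2 * ε ^ 2 * n)) + 4 * Real.exp (-(ε ^ 2 * n)) +
      k * (8 * (n + 1) * Real.exp (-(0.006 * (1 / 400) * n))) + 0.999 ^ (k - j) ≤
      15 * (((n : ℝ) + 1) ^ 2 * Real.exp (-a * (n : ℝ) ^ (0.1 : ℝ))) := by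
  have hn' : (1 : ℝ) ≤ n := by exact_mod_cast hn
  have hk' : (k : ℝ) ≤ n := by exact_mod_cast hk
  set t := (n : ℝ) ^ (0.1 : ℝ) with ht
  have ht0 : 0 ≤ t := by positivity
  have htn : t ≤ n := by
    have := Real.rpow_le_rpow_of_exponent_le hn' (show (0.1 : ℝ) ≤ 1 by norm_num)
    rwa [Real.rpow_one] at this
  have hat : a * t ≤ a * n := by gcongr
  have hεn : a * n ≤ ε ^ 2 * n := by gcongr
  have h1n : a * n ≤ 0.00001 * n := by gcongr
  have h1t : a * t ≤ 0.00001 * t := by gcongr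
  have e1 : Real.exp (-(2 * ε ^ 2 * n)) ≤ Real.exp (-a * t) := by
    apply Real.exp_le_exp.2
    nlinarith [sq_nonneg ε]
  have e2 : Real.exp (-(ε ^ 2 * n)) ≤ Real.exp (-a * t) := by
    apply Real.exp_le_exp.2; linarith
  have e3 : Real.exp (-(0.006 * (1 / 400) * (n : ℝ))) ≤ Real.exp (-a * t) := by
    apply Real.exp_le_exp.2; linarith
  have e4 : (0.999 : ℝ) ^ (k - j) ≤ Real.exp (-a * t) := by
    have h9 : (0.999 : ℝ) ≤ Real.exp (-0.001) := by
      have := Real.add_one_le_exp (-0.001 : ℝ); linarith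
    refine (pow_le_pow_left₀ (by norm_num) h9 _).trans ?_
    rw [← Real.exp_nat_mul, Nat.cast_sub hjk]
    apply Real.exp_le_exp.2
    linarith
  have hE := Real.exp_pos (-a * t)
  set E := Real.exp (-a * t)
  have e3' : (k : ℝ) * (8 * (n + 1) * Real.exp (-(0.006 * (1 / 400) * (n : ℝ)))) ≤
      ((n : ℝ) + 1) * (8 * (n + 1) * E) := by gcongr; linarith
  have : E ≤ ((n : ℝ) + 1) ^ 2 * E := le_mul_of_one_le_left hE.le (by nlinarith)
  nlinarith

/-- there exists `s > 0`, independent of `n`, such that if `S ≥ s`, then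
`P(Eⁿ_slope) → 1` as `n → ∞`.  Here, for each `n`, `Y` is a uniform random binary string of
length `n` and, for each base point `m⃗ ∈ H_a ∪ H_b`, `X(m⃗), X(m⃗ + e⃗), X(m⃗ + 2e⃗), …` is the
Markov chain started uniformly on `{N⃗ = m⃗}` (independently of `Y`) with the block-moving
transition kernel `transProb`; `L(m⃗ + k e⃗)` is the optimal alignment score of `X(m⃗ + k e⃗)`
with `Y`, and `Eⁿ_slope` is the event that `L(n⃗_b) - L(n⃗_a) ≥ 0.01 |n⃗_b - n⃗_a|` for all
`n⃗_a, n⃗_b ∈ Iⁿ` with `n⃗_b - n⃗_a = k e⃗`, `k ≥ n^{0.1}`. -/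
theorem slope_event_probability_tendsto_one (C : ℝ) (hC : 0 < C) :
    ∃ s > (0 : ℝ), ∀ S : ℝ, s ≤ S →
      ∀ (Ω : ℕ → Type) [∀ n, MeasureSpace (Ω n)]
        [∀ n, IsProbabilityMeasure (ℙ : Measure (Ω n))]
        (Y : ∀ n, Ω n → (Fin n → Bool))
        (Xc : ∀ n, (Fin 4 → ℕ) → ℕ → Ω n → (Fin n → Bool)),
        -- `Y` is uniform
        (∀ n (y : Fin n → Bool), (ℙ {ω | Y n ω = y}).toReal = 1 / 2 ^ n) →
        -- for each admissible base point `m⃗`, the chain starts uniformly on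
        -- `{x | N⃗(x) = m⃗}`, independently of `Y`
        (∀ n (m : Fin 4 → ℕ), natVec m ∈ Ha ∪ Hb → (strSetV n m).Nonempty →
          ∀ (x y : Fin n → Bool),
            (ℙ {ω | Xc n m 0 ω = x ∧ Y n ω = y}).toReal
              = (if x ∈ strSetV n m then (1 : ℝ) / ((strSetV n m).card : ℝ) else 0)
                * (1 / 2 ^ n)) →
        -- Markov property: given `Y` and the chain up to time `k`, the next state is obtained
        -- by the block-moving transition
        (∀ n (m : Fin 4 → ℕ), natVec m ∈ Ha ∪ Hb → (strSetV n m).Nonempty →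
          ∀ (k : ℕ) (y : Fin n → Bool) (xs : ℕ → Fin n → Bool) (z : Fin n → Bool),
            (ℙ {ω | Y n ω = y ∧ (∀ j ≤ k, Xc n m j ω = xs j) ∧ Xc n m (k + 1) ω = z}).toReal
              = (ℙ {ω | Y n ω = y ∧ (∀ j ≤ k, Xc n m j ω = xs j)}).toReal
                  * transProb (xs k) z) →
        Tendsto (fun n =>
          (ℙ {ω : Ω n | ∀ (m : Fin 4 → ℕ), natVec m ∈ Ha ∪ Hb → (strSetV n m).Nonempty →
            ∀ j k : ℕ,
              natVec m + (j : ℝ) • evec ∈ Iset n C →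
              natVec m + (k : ℝ) • evec ∈ Iset n C →
              (j : ℝ) + (n : ℝ) ^ ((0.1 : ℝ)) ≤ (k : ℝ) →
              0.01 * enorm4 (((k : ℝ) - (j : ℝ)) • evec)
                ≤ optScore S n (Xc n m k ω) (Y n ω)
                    - optScore S n (Xc n m j ω) (Y n ω)}).toReal)
          atTop (nhds 1) := by
  obtain ⟨ε, hε, hgood⟩ := card_not_goodPair (1 / 400) (by norm_num) (by norm_num)
  refine ⟨1 / ε, by positivity, ?_⟩
  intro S hS Ω _ _ Y X _ h0 hM
  obtain ⟨n₀, hn₀⟩ := Iset_facts ε C hε hC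
  set a : ℝ := min (ε ^ 2) 0.00001 with ha
  have ha0 : 0 < a := lt_min (by positivity) (by norm_num)
  have hlim := poly_mul_exp_tendsto a ha0
  have hlow := (tendsto_const_nhds (x := (1 : ℝ))).sub hlim
  rw [sub_zero] at hlow
  refine tendsto_of_tendsto_of_tendsto_of_le_of_le' hlow tendsto_const_nhds ?_ ?_
  swap
  · exact Eventually.of_forall fun n => measureReal_le_one
  filter_upwards [eventually_ge_atTop n₀, eventually_ge_atTop 1] with n hn hn1
  set G : Set (Ω n) := {ω : Ω n | ∀ (m : Fin 4 → ℕ), natVec m ∈ Ha ∪ Hb → (strSetV n m).Nonempty →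
            ∀ j k : ℕ,
              natVec m + (j : ℝ) • evec ∈ Iset n C →
              natVec m + (k : ℝ) • evec ∈ Iset n C →
              (j : ℝ) + (n : ℝ) ^ ((0.1 : ℝ)) ≤ (k : ℝ) →
              0.01 * enorm4 (((k : ℝ) - (j : ℝ)) • evec)
                ≤ optScore S n (X n m k ω) (Y n ω)
                    - optScore S n (X n m j ω) (Y n ω)} with hG
  change _ ≤ (ℙ : Measure (Ω n)).real G
  -- The coordinates of `m` are block counts, hence at most `n`, and `k ≤ m 0`: only polynomially
  -- many triples `(m, j, k)` are relevant.
  let box : Finset ((Fin 4 → ℕ) × ℕ × ℕ) :=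
    (Fintype.piFinset fun _ => Finset.range (n + 1)) ×ˢ Finset.range (n + 1) ×ˢ Finset.range (n + 1)
  let adm : (Fin 4 → ℕ) × ℕ × ℕ → Prop := fun p =>
    natVec p.1 ∈ Ha ∪ Hb ∧ (strSetV n p.1).Nonempty ∧
      natVec p.1 + (p.2.2 : ℝ) • evec ∈ Iset n C ∧ (p.2.1 : ℝ) + (n : ℝ) ^ (0.1 : ℝ) ≤ p.2.2
  let fail : (Fin 4 → ℕ) × ℕ × ℕ → Set (Ω n) := fun p =>
    {ω | optScore S n (X n p.1 p.2.2 ω) (Y n ω) - optScore S n (X n p.1 p.2.1 ω) (Y n ω) <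
      0.02 * (p.2.2 - p.2.1)}
  have le_of_adm : ∀ {j k : ℕ}, (j : ℝ) + (n : ℝ) ^ (0.1 : ℝ) ≤ k → j ≤ k := by
    intro j k h
    have : (0 : ℝ) ≤ (n : ℝ) ^ (0.1 : ℝ) := by positivity
    have : (j : ℝ) ≤ k := by linarith
    exact_mod_cast this
  have count_le : ∀ {m : Fin 4 → ℕ}, (strSetV n m).Nonempty → ∀ i, m i ≤ n := by
    rintro m ⟨x, hx⟩ i
    rw [strSetV, Finset.mem_filter] at hx
    rw [← hx.2 i]
    exact numBlocks_le x _
  have k_le : ∀ {m : Fin 4 → ℕ} {k : ℕ}, (strSetV n m).Nonempty →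
      natVec m + (k : ℝ) • evec ∈ Iset n C → k ≤ n := by
    intro m k hne hk
    have h1 := (hn₀ n hn m k hne hk).1
    have h2 : (k : ℝ) ≤ m 0 := by
      have : (0 : ℝ) ≤ (1 / 400) * n := by positivity
      linarith
    have h3 : k ≤ m 0 := by exact_mod_cast h2
    exact h3.trans (count_le hne 0)
  have hcover : (Set.univ : Set (Ω n)) ⊆ G ∪ ⋃ p ∈ box.filter adm, fail p := by
    intro ω _
    by_cases hω : ω ∈ G
    · exact Or.inl hω
    right
    simp only [hG, Set.mem_ofPred_eq, not_forall, not_le] at hω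
    obtain ⟨m, hm, hne, j, k, hj, hk, hjk, hlt⟩ := hω
    have hkn := k_le hne hk
    have hjk' := le_of_adm hjk
    simp only [Set.mem_iUnion, exists_prop]
    refine ⟨(m, j, k), Finset.mem_filter.2 ⟨?_, hm, hne, hk, hjk⟩, ?_⟩
    · simp only [box, Finset.mem_product, Fintype.mem_piFinset, Finset.mem_range]
      exact ⟨fun i => Nat.lt_succ_of_le (count_le hne i), by omega, by omega⟩
    · have hc : (j : ℝ) ≤ k := by exact_mod_cast hjk'
      rw [enorm4_evec _ (by linarith)] at hlt
      change _ < (_ : ℝ)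
      linarith
  have hfail : ∀ p ∈ box.filter adm, (ℙ : Measure (Ω n)).real (fail p) ≤
      15 * (((n : ℝ) + 1) ^ 2 * Real.exp (-a * (n : ℝ) ^ (0.1 : ℝ))) := by
    rintro ⟨m, j, k⟩ hp
    obtain ⟨-, hm, hne, hk, hjk⟩ := Finset.mem_filter.1 hp
    dsimp only at hm hne hk hjk
    obtain ⟨f0, f3, f4⟩ := hn₀ n hn m k hne hk
    refine (real_fail_le ℙ (by omega) S ε (8 * (n + 1) * Real.exp (-(0.006 * (1 / 400) * n))) hε m
      hne (Y n) (X n m) (h0 n m hm hne) (hM n m hm hne) j k (le_of_adm hjk) f0 f3 (by positivity)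
      (fun x hx h1 h5 => hgood S hS n x (by omega) hx h1 h5) f4).trans ?_
    exact fail_bound_le (min_le_left _ _) ha0.le (min_le_right _ _) hn1 (k_le hne hk)
      (le_of_adm hjk) hjk
  have hcard : ((box.filter adm).card : ℝ) ≤ ((n : ℝ) + 1) ^ 6 := by
    have h1 : box.card = (n + 1) ^ 6 := by
      simp only [box, Finset.card_product, Fintype.card_piFinset, Finset.card_range,
        Finset.prod_const, Finset.card_univ, Fintype.card_fin]
      ring
    have h2 := Finset.card_filter_le box adm
    rw [h1] at h2
    exact_mod_cast h2
  have htotal : (ℙ : Measure (Ω n)).real (⋃ p ∈ box.filter adm, fail p) ≤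
      15 * (((n : ℝ) + 1) ^ 8 * Real.exp (-a * (n : ℝ) ^ (0.1 : ℝ))) := by
    refine (measureReal_biUnion_finset_le _ _).trans ((Finset.sum_le_sum hfail).trans ?_)
    rw [Finset.sum_const, nsmul_eq_mul]
    calc _ ≤ ((n : ℝ) + 1) ^ 6 *
          (15 * (((n : ℝ) + 1) ^ 2 * Real.exp (-a * (n : ℝ) ^ (0.1 : ℝ)))) := by gcongr
      _ = _ := by ring
  have h1 : (1 : ℝ) ≤ (ℙ : Measure (Ω n)).real G +
      (ℙ : Measure (Ω n)).real (⋃ p ∈ box.filter adm, fail p) := by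
    rw [← probReal_univ (μ := (ℙ : Measure (Ω n)))]
    exact (measureReal_mono hcover (measure_ne_top _ _)).trans (measureReal_union_le _ _)
  linarith
end
end

section
/- Let ε > 0 and assume S > 16/ε. If the binary strings x, y of length n satisfy |Σ_{i=1}^n x_i − n/2| ≤ εn/16 and |Σ_{i=1}^n y_i − n/2| ≤ εn/16, then every optimal alignment of x and y aligns at least n/2 − εn/8 pairs of ones, i.e., contains at least n/2 − εn/8 indices i with x_{π(i)} = y_{ν(i)} = 1. -/
/-!
Aligning only ones with ones, in order, gives an alignment of score `m * S`, where `m` is the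
smaller of the two numbers of ones; by hypothesis `m ≥ n/2 - εn/16`. On the other hand an alignment
has at most `n` pairs, and a pair that is not a pair of ones scores at most `1`, so an alignment
with `M` pairs of ones scores at most `M * S + n` (`alignScore_le`). For an optimal alignment
therefore `m ≤ M + n / S`, and `n / S ≤ εn/16` since `S > 16/ε`.
-/

open scoped Classical
open Finset

noncomputable section

/-- The number of ones of a binary string. -/
def numOnes {n : ℕ} (x : Fin n → Bool) : ℕ :=
  (Finset.univ.filter fun i => x i = true).card

/-- `(π, ν)` is an optimal alignment of `x` and `y`. -/
def IsOptimal (S : ℝ) {n k : ℕ} (x y : Fin n → Bool) (π ν : Fin k → Fin n) : Prop :=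
  StrictMono π ∧ StrictMono ν ∧ alignScore S x y π ν = optScore S n x y

/-- Index `i` of the alignment `(π, ν)` aligns a pair of ones of `x` and `y`. -/
def matchedPair {n k : ℕ} (x y : Fin n → Bool) (π ν : Fin k → Fin n) (i : Fin k) : Prop :=
  x (π i) = true ∧ y (ν i) = true

/-- The number of pairs of ones aligned by `(π, ν)`. -/
def numMatched {n k : ℕ} (x y : Fin n → Bool) (π ν : Fin k → Fin n) : ℕ :=
  (Finset.univ.filter (matchedPair x y π ν)).card

theorem alignScore_le (S : ℝ) {n k : ℕ} (x y : Fin n → Bool) (π ν : Fin k → Fin n)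
    (hπ : StrictMono π) :
    alignScore S x y π ν ≤ numMatched x y π ν * S + n := by
  have hk : k ≤ n := by simpa using Fintype.card_le_of_injective π hπ.injective
  have hk' : (k : ℝ) ≤ n := by exact_mod_cast hk
  have h : alignScore S x y π ν ≤
      ∑ i : Fin k, ((if matchedPair x y π ν i then S else 0) + 1) := by
    refine Finset.sum_le_sum fun i _ => ?_
    unfold letterScore matchedPair
    split_ifs <;> linarith
  rw [Finset.sum_add_distrib, ← Finset.sum_filter, Finset.sum_const, Finset.sum_const] at h
  simp only [nsmul_eq_mul, Finset.card_univ, Fintype.card_fin, mul_one] at h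
  unfold numMatched
  linarith

/-- The set of scores is bounded above, so the `sSup` in `optScore` is a genuine supremum. -/
theorem alignScore_le_optScore (S : ℝ) (hS : 0 ≤ S) {n k : ℕ} (x y : Fin n → Bool)
    (π ν : Fin k → Fin n) (hπ : StrictMono π) (hν : StrictMono ν) :
    alignScore S x y π ν ≤ optScore S n x y := by
  refine le_csSup ⟨n * S + n, ?_⟩ ⟨k, π, ν, hπ, hν, rfl⟩
  rintro r ⟨k', π', ν', hπ', -, rfl⟩
  have hM : numMatched x y π' ν' ≤ n := by
    refine (Finset.card_le_univ _).trans ?_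
    simpa using Fintype.card_le_of_injective π' hπ'.injective
  have hM' : (numMatched x y π' ν' : ℝ) ≤ n := by exact_mod_cast hM
  have := alignScore_le S x y π' ν' hπ'
  nlinarith

/-- Aligning the first `m` ones of `x` with the first `m` ones of `y` scores `m * S`. -/
theorem mul_le_optScore (S : ℝ) (hS : 0 ≤ S) {n m : ℕ} (x y : Fin n → Bool)
    (hx : m ≤ numOnes x) (hy : m ≤ numOnes y) : m * S ≤ optScore S n x y := by
  have h := alignScore_le_optScore S hS x y (Finset.orderEmbOfCardLe _ hx)
    (Finset.orderEmbOfCardLe _ hy) (OrderEmbedding.strictMono _) (OrderEmbedding.strictMono _)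
  refine le_trans (le_of_eq ?_) h
  have hone : ∀ (z : Fin n → Bool) (hz : m ≤ numOnes z) (i : Fin m),
      z (Finset.orderEmbOfCardLe _ hz i) = true := fun z hz i =>
    (Finset.mem_filter.1 (Finset.orderEmbOfCardLe_mem _ hz i)).2
  simp [alignScore, letterScore, hone x hx, hone y hy]

/-- let `ε > 0` and `S > 16/ε`.  If `x` and `y` are binary strings of length `n`
with `|#ones(x) - n/2| ≤ εn/16` and `|#ones(y) - n/2| ≤ εn/16`, then every optimal alignment
of `x` and `y` aligns at least `n/2 - εn/8` pairs of ones. -/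
theorem optimal_alignment_matches_most_ones (ε S : ℝ) (hε : 0 < ε) (hS : 16 / ε < S)
    (n : ℕ) (x y : Fin n → Bool)
    (hx : |(numOnes x : ℝ) - (n : ℝ) / 2| ≤ ε * n / 16)
    (hy : |(numOnes y : ℝ) - (n : ℝ) / 2| ≤ ε * n / 16)
    (k : ℕ) (π ν : Fin k → Fin n) (hopt : IsOptimal S x y π ν) :
    (n : ℝ) / 2 - ε * n / 8 ≤ (numMatched x y π ν : ℝ) := by
  obtain ⟨hπ, -, heq⟩ := hopt
  have hS0 : 0 < S := lt_trans (by positivity) hS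
  have hSε : 16 < S * ε := (div_lt_iff₀ hε).1 hS
  have hlow := mul_le_optScore S hS0.le x y (min_le_left (numOnes x) (numOnes y))
    (min_le_right _ _)
  have hup := alignScore_le S x y π ν hπ
  have hm : (n : ℝ) / 2 - ε * n / 16 ≤ (min (numOnes x) (numOnes y) : ℕ) := by
    have h1 := (abs_le.1 hx).1
    have h2 := (abs_le.1 hy).1
    push_cast
    exact le_min (by linarith) (by linarith)
  have hn : (n : ℝ) ≤ ε * n / 16 * S := by
    have : (0 : ℝ) ≤ n := n.cast_nonneg
    nlinarith
  refine le_of_mul_le_mul_right ?_ hS0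
  have := mul_le_mul_of_nonneg_right hm hS0.le
  linarith
end
end
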